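/- arXiv:1103.5873 — 2 statements merged into one kernel-verified Lean document; each statement's English description precedes it below -/
import Mathlib

section
/- Let the setting be type B_N (N ≥ 2). Let (i_t,k_t), 1 ≤ t ≤ T, be a snake with all elements in X′ = {(i,k) ∈ X : i < N, 2i−k ≡ 2 (mod 4)}, and let D be the associated skew diagram, D = {(s,t) : 1 ≤ t ≤ T, t − k_t/4 − (i_t−1)/2 ≤ s ≤ t − k_t/4 + (i_t−1)/2}. Then there is a bijection between the set P̄_{(i_t,k_t)} of non-overlapping tuples of paths and the set of type B skew tableaux of shape D, under which a tuple (p_1,…,p_T) corresponds to a tableau 𝒯 satisfying ∏_{t=1}^T m(p_t) = M(𝒯) in the free abelian group M. -/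
namespace Paper

/-- The ambient setting: type `A N` (with `N ≥ 1`) or type `B N ε`
(with `N ≥ 2` and `0 < ε < 1/2`). -/
inductive Setting where
  | A (N : ℕ)
  | B (N : ℕ) (ε : ℝ)

namespace Setting

/-- The rank `N`. -/
def N : Setting → ℕ
  | A n => n
  | B n _ => n

/-- Validity of the parameters of the setting. -/
def valid : Setting → Prop
  | A n => 1 ≤ n
  | B n ε => 2 ≤ n ∧ 0 < ε ∧ ε < 1 / 2

end Setting

/-- The numbers `r_i` : in type A all equal `1`; in type B, `r_N = 1` and `r_i = 2` for `i < N`. -/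
def rr : Setting → ℕ → ℕ
  | .A _, _ => 1
  | .B n _, j => if j = n then 1 else 2

/-- The set `X` in type `A_N`. -/
def XA (n : ℕ) : Set (ℕ × ℤ) :=
  {ik | 1 ≤ ik.1 ∧ ik.1 ≤ n ∧ ((ik.1 : ℤ) - ik.2) % 2 = 1}

/-- The set `X` in type `B_N`. -/
def XB (n : ℕ) : Set (ℕ × ℤ) :=
  {ik | (ik.1 = n ∧ ik.2 % 2 = 1) ∨ (1 ≤ ik.1 ∧ ik.1 < n ∧ ik.2 % 2 = 0)}

/-- The set `X ⊆ I × ℤ`. -/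
def X : Setting → Set (ℕ × ℤ)
  | .A n => XA n
  | .B n _ => XB n

/-- The set `W = {(i,k) : (i, k - r_i) ∈ X}`. -/
def W (S : Setting) : Set (ℕ × ℤ) :=
  {ik | (ik.1, ik.2 - (rr S ik.1 : ℤ)) ∈ X S}

/-- The `r`-th point of a path (a finite list of points of the plane). -/
def pt (p : List (ℝ × ℝ)) (r : ℕ) : ℝ × ℝ := p.getD r (0, 0)

/-- The set of paths `𝒫_{i,k}` in type `A_N`. -/
def pathsA (n : ℕ) (i : ℕ) (k : ℤ) : Set (List (ℝ × ℝ)) :=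
  {p | p.length = n + 2 ∧
    (∀ r, r < n + 2 → (pt p r).1 = (r : ℝ)) ∧
    (pt p 0).2 = (i : ℝ) + (k : ℝ) ∧
    (pt p (n + 1)).2 = (n : ℝ) + 1 - (i : ℝ) + (k : ℝ) ∧
    (∀ r, r ≤ n → (pt p (r + 1)).2 - (pt p r).2 = 1 ∨ (pt p (r + 1)).2 - (pt p r).2 = -1)}

/-- The set of paths `𝒫_{N,ℓ}` in type `B_N`. -/
def pathsBspin (n : ℕ) (ε : ℝ) (l : ℤ) : Set (List (ℝ × ℝ)) :=
  {p | p.length = n + 1 ∧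
    (if l % 4 = 3 then ∀ r, r < n → (pt p r).1 = 2 * (r : ℝ)
     else ∀ r, r < n → (pt p r).1 = 4 * (n : ℝ) - 2 - 2 * (r : ℝ)) ∧
    (pt p n).1 = 2 * (n : ℝ) - 1 ∧
    (pt p 0).2 = (l : ℝ) + 2 * (n : ℝ) - 1 ∧
    (∀ r, r + 2 ≤ n → (pt p (r + 1)).2 - (pt p r).2 = 2 ∨ (pt p (r + 1)).2 - (pt p r).2 = -2) ∧
    ((pt p n).2 - (pt p (n - 1)).2 = 1 + ε ∨ (pt p n).2 - (pt p (n - 1)).2 = -(1 + ε))}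

/-- The set of paths `𝒫_{i,k}` in type `B_N`. -/
def pathsB (n : ℕ) (ε : ℝ) (i : ℕ) (k : ℤ) : Set (List (ℝ × ℝ)) :=
  if i = n then pathsBspin n ε k
  else {p | ∃ a b : List (ℝ × ℝ),
    a ∈ pathsBspin n ε (k - (2 * (n : ℤ) - 2 * (i : ℤ) - 1)) ∧
    b ∈ pathsBspin n ε (k + (2 * (n : ℤ) - 2 * (i : ℤ) - 1)) ∧
    p = a ++ b.reverse ∧
    (pt a n).1 = (pt b n).1 ∧ 0 < (pt a n).2 - (pt b n).2}

/-- The set of paths `𝒫_{i,k}`. -/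
def P : Setting → ℕ → ℤ → Set (List (ℝ × ℝ))
  | .A n => pathsA n
  | .B n ε => pathsB n ε

/-- The map `ι : X → ℤ × ℤ` of type `B_N`. -/
def iotaB (n : ℕ) (ik : ℕ × ℤ) : ℤ × ℤ :=
  if ik.1 = n then (2 * (n : ℤ) - 1, ik.2)
  else if (2 * (n : ℤ) + ik.2 - 2 * (ik.1 : ℤ)) % 4 = 2 then (2 * (ik.1 : ℤ), ik.2)
  else (4 * (n : ℤ) - 2 - 2 * (ik.1 : ℤ), ik.2)

/-- The corners of a path: `Cp S p true` is the set `C_{p,+}` of upper corners, and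
`Cp S p false` is the set `C_{p,-}` of lower corners. -/
def Cp (S : Setting) (p : List (ℝ × ℝ)) (up : Bool) : Set (ℕ × ℤ) :=
  match S with
  | .A n =>
    {jl | 1 ≤ jl.1 ∧ jl.1 ≤ n ∧
      pt p jl.1 = ((jl.1 : ℝ), (jl.2 : ℝ)) ∧
      (pt p (jl.1 - 1)).2 = (jl.2 : ℝ) + (if up then 1 else -1) ∧
      (pt p (jl.1 + 1)).2 = (jl.2 : ℝ) + (if up then 1 else -1)}
  | .B n ε =>
    {jl | jl ∈ XB n ∧
      ((∃ r : ℕ, 1 ≤ r ∧ r + 1 < p.length ∧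
          pt p r = (((iotaB n jl).1 : ℝ), ((iotaB n jl).2 : ℝ)) ∧
          (iotaB n jl).1 ≠ 0 ∧ (iotaB n jl).1 ≠ 2 * (n : ℤ) - 1 ∧
          (iotaB n jl).1 ≠ 4 * (n : ℤ) - 2 ∧
          (if up then (pt p r).2 < (pt p (r - 1)).2 ∧ (pt p r).2 < (pt p (r + 1)).2
           else (pt p (r - 1)).2 < (pt p r).2 ∧ (pt p (r + 1)).2 < (pt p r).2))
       ∨ (jl.1 = n ∧
          (if up then (2 * (n : ℝ) - 1, (jl.2 : ℝ) - ε) ∈ p ∧ (2 * (n : ℝ) - 1, (jl.2 : ℝ) + ε) ∉ p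
           else (2 * (n : ℝ) - 1, (jl.2 : ℝ) + ε) ∈ p ∧ (2 * (n : ℝ) - 1, (jl.2 : ℝ) - ε) ∉ p)))}

/-- `p'` is obtained from `p` by replacing the point `q` by the point `q'`. -/
def Replace1 (p p' : List (ℝ × ℝ)) (q q' : ℝ × ℝ) : Prop :=
  ∃ r : ℕ, r < p.length ∧ pt p r = q ∧ p'.length = p.length ∧ pt p' r = q' ∧
    ∀ s, s < p.length → s ≠ r → pt p' s = pt p s

/-- `p'` is obtained from `p` by replacing the point `q1` by `q1'` and the point `q2` by `q2'`. -/
def Replace2 (p p' : List (ℝ × ℝ)) (q1 q1' q2 q2' : ℝ × ℝ) : Prop :=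
  ∃ r s : ℕ, r < p.length ∧ s < p.length ∧ r ≠ s ∧ pt p r = q1 ∧ pt p s = q2 ∧
    p'.length = p.length ∧ pt p' r = q1' ∧ pt p' s = q2' ∧
    ∀ u, u < p.length → u ≠ r → u ≠ s → pt p' u = pt p u

/-- The path `p` can be lowered at `(j, l)`: `(j, l - r_j) ∈ C_{p,+}` and
`(j, l + r_j) ∉ C_{p,+}`. -/
def CanLower (S : Setting) (p : List (ℝ × ℝ)) (j : ℕ) (l : ℤ) : Prop :=
  (j, l - (rr S j : ℤ)) ∈ Cp S p true ∧ (j, l + (rr S j : ℤ)) ∉ Cp S p true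

/-- `p'` is the result of the lowering move at `(j,l)` applied to the path `p ∈ 𝒫_{i,k}`;
written `p' = p 𝒜_{j,l}⁻¹`. -/
def LoweredTo (S : Setting) (i : ℕ) (k : ℤ) (j : ℕ) (l : ℤ)
    (p p' : List (ℝ × ℝ)) : Prop :=
  p ∈ P S i k ∧ p' ∈ P S i k ∧ CanLower S p j l ∧
  (match S with
   | .A _ => Replace1 p p' ((j : ℝ), (l : ℝ) - 1) ((j : ℝ), (l : ℝ) + 1)
   | .B n ε =>
     if j = n then
       Replace1 p p' (2 * (n : ℝ) - 1, (l : ℝ) - 1 - ε) (2 * (n : ℝ) - 1, (l : ℝ) + 1 + ε)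
     else if j = n - 1 then
       Replace2 p p'
         (((iotaB n (j, l - 2)).1 : ℝ), (l : ℝ) - 2) (((iotaB n (j, l - 2)).1 : ℝ), (l : ℝ) + 2)
         (2 * (n : ℝ) - 1, (l : ℝ) - 1 + ε) (2 * (n : ℝ) - 1, (l : ℝ) + 1 - ε)
     else
       Replace1 p p'
         (((iotaB n (j, l - 2)).1 : ℝ), (l : ℝ) - 2) (((iotaB n (j, l - 2)).1 : ℝ), (l : ℝ) + 2))

/-- The path `p` can be raised at `(j,l)`: it is of the form `p' 𝒜_{j,l}⁻¹`. -/
def CanRaise (S : Setting) (i : ℕ) (k : ℤ) (p : List (ℝ × ℝ)) (j : ℕ) (l : ℤ) : Prop :=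
  ∃ p', LoweredTo S i k j l p' p

/-- The monomial group `ℳ`, realised as exponent functions: the free abelian group on the
symbols `Y_{i,k}`, `(i,k) ∈ X`, is identified with finitely supported functions `(ℕ × ℤ) → ℤ`,
written additively. -/
def Y (x : ℕ × ℤ) : (ℕ × ℤ) → ℤ := fun z => if z = x then 1 else 0

noncomputable def ind (s : Prop) : ℤ := @ite ℤ s (Classical.propDecidable s) 1 0

/-- The monomial `m(p)` of a path: `∏ Y_{j,l}` over upper corners times `∏ Y_{j,l}⁻¹`
over lower corners. -/
noncomputable def mon (S : Setting) (p : List (ℝ × ℝ)) : (ℕ × ℤ) → ℤ :=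
  fun x => ind (x ∈ Cp S p true) - ind (x ∈ Cp S p false)

/-- The monomials `A_{j,l}`, with the conventions `Y_{0,·} = Y_{N+1,·} = 1`. -/
def Amon (S : Setting) (j : ℕ) (l : ℤ) : (ℕ × ℤ) → ℤ :=
  match S with
  | .A n =>
      Y (j, l + 1) + Y (j, l - 1) - (if j = 1 then 0 else Y (j - 1, l))
        - (if j = n then 0 else Y (j + 1, l))
  | .B n _ =>
      if j = n then Y (n, l + 1) + Y (n, l - 1) - Y (n - 1, l)
      else if j = n - 1 then
        Y (n - 1, l + 2) + Y (n - 1, l - 2) - (if j = 1 then 0 else Y (n - 2, l))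
          - Y (n, l + 1) - Y (n, l - 1)
      else
        Y (j, l + 2) + Y (j, l - 2) - (if j = 1 then 0 else Y (j - 1, l)) - Y (j + 1, l)

/-- A monomial is dominant iff all its exponents are nonnegative. -/
def Dominant (m : (ℕ × ℤ) → ℤ) : Prop := ∀ x, 0 ≤ m x

/-- A monomial is anti-dominant iff all its exponents are nonpositive. -/
def AntiDominant (m : (ℕ × ℤ) → ℤ) : Prop := ∀ x, m x ≤ 0

/-- `(i',k')` is in snake position with respect to `(i,k)`. -/
def SnakePos : Setting → ℕ × ℤ → ℕ × ℤ → Prop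
  | .A _, ik, ik' => |(ik'.1 : ℤ) - (ik.1 : ℤ)| + 2 ≤ ik'.2 - ik.2
  | .B n _, ik, ik' =>
      if ik.1 = n ∧ ik'.1 = n then
        2 ≤ ik'.2 - ik.2 ∧ (ik'.2 - ik.2) % 4 = 2
      else if ik.1 = n ∨ ik'.1 = n then
        2 * |(ik'.1 : ℤ) - (ik.1 : ℤ)| + 3 ≤ ik'.2 - ik.2 ∧
          (ik'.2 - ik.2) % 4 = (2 * |(ik'.1 : ℤ) - (ik.1 : ℤ)| - 1) % 4
      else
        2 * |(ik'.1 : ℤ) - (ik.1 : ℤ)| + 4 ≤ ik'.2 - ik.2 ∧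
          (ik'.2 - ik.2) % 4 = (2 * |(ik'.1 : ℤ) - (ik.1 : ℤ)|) % 4

/-- A snake: a sequence of points of `X`, each in snake position w.r.t. the previous one. -/
def IsSnake (S : Setting) {T : ℕ} (w : Fin T → ℕ × ℤ) : Prop :=
  (∀ t, w t ∈ X S) ∧
  ∀ (t : Fin T) (h : (t : ℕ) + 1 < T), SnakePos S (w t) (w ⟨(t : ℕ) + 1, h⟩)

/-- `p` is strictly above `p'`. -/
def StrictlyAbove (p p' : List (ℝ × ℝ)) : Prop :=
  ∀ a ∈ p, ∀ b ∈ p', a.1 = b.1 → a.2 < b.2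

/-- A tuple of paths is non-overlapping. -/
def NonOverlapping {T : ℕ} (ps : Fin T → List (ℝ × ℝ)) : Prop :=
  ∀ s t : Fin T, s < t → StrictlyAbove (ps s) (ps t)

/-- The set `𝒫̄` of non-overlapping tuples of paths attached to a snake. -/
def PBar (S : Setting) {T : ℕ} (w : Fin T → ℕ × ℤ) : Set (Fin T → List (ℝ × ℝ)) :=
  {ps | (∀ t, ps t ∈ P S (w t).1 (w t).2) ∧ NonOverlapping ps}

/-- The product `∏_t m(p_t)` of the monomials of a tuple of paths. -/
noncomputable def tmon (S : Setting) {T : ℕ} (ps : Fin T → List (ℝ × ℝ)) : (ℕ × ℤ) → ℤ :=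
  ∑ t, mon S (ps t)

/-- Lowering move at `jl` on a tuple of paths: one component is lowered, the others
are unchanged. -/
def TLoweredTo (S : Setting) {T : ℕ} (w : Fin T → ℕ × ℤ) (jl : ℕ × ℤ)
    (ps ps' : Fin T → List (ℝ × ℝ)) : Prop :=
  ∃ t, LoweredTo S (w t).1 (w t).2 jl.1 jl.2 (ps t) (ps' t) ∧ ∀ s, s ≠ t → ps' s = ps s

/-- Sequences of raising/lowering moves on a single path; the list records, for each move,
whether it was a lowering move (`true`) or a raising move (`false`), and its site. -/
inductive MoveSeq (S : Setting) (i : ℕ) (k : ℤ) :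
    List (ℝ × ℝ) → List (ℝ × ℝ) → List (Bool × (ℕ × ℤ)) → Prop where
  | nil (p : List (ℝ × ℝ)) : MoveSeq S i k p p []
  | lower {p q r : List (ℝ × ℝ)} {jl : ℕ × ℤ} {ms : List (Bool × (ℕ × ℤ))} :
      jl ∈ W S → LoweredTo S i k jl.1 jl.2 p q → MoveSeq S i k q r ms →
      MoveSeq S i k p r ((true, jl) :: ms)
  | raise {p q r : List (ℝ × ℝ)} {jl : ℕ × ℤ} {ms : List (Bool × (ℕ × ℤ))} :
      jl ∈ W S → LoweredTo S i k jl.1 jl.2 q p → MoveSeq S i k q r ms →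
      MoveSeq S i k p r ((false, jl) :: ms)

/-- Sequences of raising/lowering moves on tuples of paths, all of whose intermediate
tuples are non-overlapping. -/
inductive TMoveSeq (S : Setting) {T : ℕ} (w : Fin T → ℕ × ℤ) :
    (Fin T → List (ℝ × ℝ)) → (Fin T → List (ℝ × ℝ)) → List (Bool × (ℕ × ℤ)) → Prop where
  | nil (ps : Fin T → List (ℝ × ℝ)) : TMoveSeq S w ps ps []
  | lower {ps qs rs : Fin T → List (ℝ × ℝ)} {jl : ℕ × ℤ} {ms : List (Bool × (ℕ × ℤ))} :
      jl ∈ W S → TLoweredTo S w jl ps qs → NonOverlapping qs →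
      TMoveSeq S w qs rs ms → TMoveSeq S w ps rs ((true, jl) :: ms)
  | raise {ps qs rs : Fin T → List (ℝ × ℝ)} {jl : ℕ × ℤ} {ms : List (Bool × (ℕ × ℤ))} :
      jl ∈ W S → TLoweredTo S w jl qs ps → NonOverlapping qs →
      TMoveSeq S w qs rs ms → TMoveSeq S w ps rs ((false, jl) :: ms)

/-- Sequences of lowering moves on tuples of paths, all of whose intermediate tuples
are non-overlapping; the list records the sites, in order. -/
inductive TLowerSeq (S : Setting) {T : ℕ} (w : Fin T → ℕ × ℤ) :
    (Fin T → List (ℝ × ℝ)) → (Fin T → List (ℝ × ℝ)) → List (ℕ × ℤ) → Prop where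
  | nil (ps : Fin T → List (ℝ × ℝ)) : TLowerSeq S w ps ps []
  | cons {ps qs rs : Fin T → List (ℝ × ℝ)} {jl : ℕ × ℤ} {ms : List (ℕ × ℤ)} :
      jl ∈ W S → TLoweredTo S w jl ps qs → NonOverlapping qs →
      TLowerSeq S w qs rs ms → TLowerSeq S w ps rs (jl :: ms)

/-- Weak order on paths with the same x-coordinates: `p` is weakly above `p'`. -/
def WeaklyAbove (p p' : List (ℝ × ℝ)) : Prop :=
  p.length = p'.length ∧ ∀ r, r < p.length → (pt p r).2 ≤ (pt p' r).2

/-- `p` is weakly below `p'`. -/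
def WeaklyBelow (p p' : List (ℝ × ℝ)) : Prop :=
  p.length = p'.length ∧ ∀ r, r < p.length → (pt p' r).2 ≤ (pt p r).2

/-- The path `top(p, p')`. -/
def topPath (p p' : List (ℝ × ℝ)) : List (ℝ × ℝ) :=
  List.zipWith (fun a b => (a.1, min a.2 b.2)) p p'

/-- The distinguished point contained in the highest path `p⁺_{i,k}`. -/
def highPoint : Setting → ℕ → ℤ → ℝ × ℝ
  | .A _, i, k => ((i : ℝ), (k : ℝ))
  | .B n ε, i, k =>
      if i = n then (2 * (n : ℝ) - 1, (k : ℝ) - ε)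
      else (((iotaB n (i, k)).1 : ℝ), ((iotaB n (i, k)).2 : ℝ))

/-- The distinguished point contained in the lowest path `p⁻_{i,k}`. -/
def lowPoint : Setting → ℕ → ℤ → ℝ × ℝ
  | .A n, i, k => ((n : ℝ) + 1 - (i : ℝ), (k : ℝ) + (n : ℝ) + 1)
  | .B n ε, i, k =>
      if i = n then (2 * (n : ℝ) - 1, (k : ℝ) + 4 * (n : ℝ) - 2 + ε)
      else (((iotaB n (i, k + 4 * (n : ℤ) - 2)).1 : ℝ),
            ((iotaB n (i, k + 4 * (n : ℤ) - 2)).2 : ℝ))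

/-- The highest path `p⁺_{i,k}` : the path of `𝒫_{i,k}` with no lower corners. -/
noncomputable def highestPath (S : Setting) (i : ℕ) (k : ℤ) : List (ℝ × ℝ) :=
  Classical.epsilon fun p => p ∈ P S i k ∧ Cp S p false = ∅

/-- The lowest path `p⁻_{i,k}` : the path of `𝒫_{i,k}` with no upper corners. -/
noncomputable def lowestPath (S : Setting) (i : ℕ) (k : ℤ) : List (ℝ × ℝ) :=
  Classical.epsilon fun p => p ∈ P S i k ∧ Cp S p true = ∅




/-- `r^∨`: `1` in type A, `2` in type B. -/
def rd : Setting → ℤ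
  | .A _ => 1
  | .B _ _ => 2

/-- The subset `X' ⊆ X`: all of `X` in type A; in type B, the points `(i,k)` with
`i < N` and `2i - k ≡ 2 (mod 4)`. -/
def Xp : Setting → Set (ℕ × ℤ)
  | .A n => XA n
  | .B n _ => {ik | ik ∈ XB n ∧ ik.1 < n ∧ (2 * (ik.1 : ℤ) - ik.2) % 4 = 2}

/-- A skew diagram: a finite subset of `ℤ × ℤ_{>0}` such that (1) if nonempty it has a box
in column 1, and (2) if `(i,j)` is not a box then either nothing weakly to its lower-right
is a box, or nothing weakly to its upper-left is a box. -/
def IsSkewDiagram (D : Set (ℤ × ℤ)) : Prop :=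
  D.Finite ∧ (∀ q ∈ D, 0 < q.2) ∧
  (D.Nonempty → ∃ i : ℤ, (i, 1) ∈ D) ∧
  (∀ i j : ℤ, 0 < j → (i, j) ∉ D →
    (∀ i' j' : ℤ, i ≤ i' → j ≤ j' → (i', j') ∉ D) ∨
    (∀ i' j' : ℤ, i' ≤ i → j' ≤ j → (i', j') ∉ D))

/-- The skew diagram attached to a snake `(i_t, k_t)`, `1 ≤ t ≤ T` (here indexed by `Fin T`):
the boxes `(s,t)` with `1 ≤ t ≤ T` and
`t - k_t/(2 r^∨) - (i_t - 1)/2 ≤ s ≤ t - k_t/(2 r^∨) + (i_t - 1)/2`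
(the inequalities are stated multiplied through by `2 r^∨ > 0`). -/
def diagOf (S : Setting) {T : ℕ} (w : Fin T → ℕ × ℤ) : Set (ℤ × ℤ) :=
  {q | ∃ t : Fin T, q.2 = (t : ℤ) + 1 ∧
    2 * rd S * ((t : ℤ) + 1) - (w t).2 - rd S * (((w t).1 : ℤ) - 1) ≤ 2 * rd S * q.1 ∧
    2 * rd S * q.1 ≤ 2 * rd S * ((t : ℤ) + 1) - (w t).2 + rd S * (((w t).1 : ℤ) - 1)}

/-- The maximal number of boxes allowed in a column: `N` in type A, `N - 1` in type B. -/
def colBound : Setting → ℕ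
  | .A n => n
  | .B n _ => n - 1

/-- Type A skew tableaux of shape `D` (encoded as functions `ℤ × ℤ → ℕ` vanishing off `D`):
entries in the alphabet `{1, …, N+1}`, weakly increasing along rows, strictly increasing
down columns. -/
def TabA (n : ℕ) (D : Set (ℤ × ℤ)) : Set (ℤ × ℤ → ℕ) :=
  {f | (∀ q ∈ D, 1 ≤ f q ∧ f q ≤ n + 1) ∧ (∀ q ∉ D, f q = 0) ∧
    (∀ i j : ℤ, (i, j) ∈ D → (i, j + 1) ∈ D → f (i, j) ≤ f (i, j + 1)) ∧
    (∀ i j : ℤ, (i, j) ∈ D → (i + 1, j) ∈ D → f (i, j) < f (i + 1, j))}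

/-- The type A box monomial `⟦a⟧_k = Y_{a-1, a+k}⁻¹ Y_{a, a-1+k}`, with the conventions
`Y_{0,·} = Y_{N+1,·} = 1`. -/
def boxA (n : ℕ) (a : ℕ) (k : ℤ) : (ℕ × ℤ) → ℤ :=
  (if a = n + 1 then 0 else Y (a, (a : ℤ) - 1 + k)) -
    (if a = 1 then 0 else Y (a - 1, (a : ℤ) + k))

/-- The monomial `M(𝒯)` of a type A skew tableau. -/
noncomputable def MtabA (n : ℕ) (D : Set (ℤ × ℤ)) (f : ℤ × ℤ → ℕ) : (ℕ × ℤ) → ℤ :=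
  ∑ᶠ q ∈ D, boxA n (f q) (2 * (q.2 - q.1))

/-- The type B alphabet `{1, …, N, 0, N̄, …, 1̄}`, encoded in `ℤ` with the barred letter
`ā` encoded as `-a`. -/
def alphabetB (n : ℕ) : Set ℤ :=
  {a | (1 ≤ a ∧ a ≤ (n : ℤ)) ∨ a = 0 ∨ (-(n : ℤ) ≤ a ∧ a ≤ -1)}

/-- The position of a type B letter in the alphabetical order
`1 < 2 < ⋯ < N < 0 < N̄ < ⋯ < 2̄ < 1̄`. -/
def ordB (n : ℕ) (a : ℤ) : ℤ :=
  if 1 ≤ a then a else if a = 0 then (n : ℤ) + 1 else 2 * (n : ℤ) + 2 + a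

/-- Type B skew tableaux of shape `D` (encoded as functions `ℤ × ℤ → ℤ` vanishing off `D`). -/
def TabB (n : ℕ) (D : Set (ℤ × ℤ)) : Set (ℤ × ℤ → ℤ) :=
  {f | (∀ q ∈ D, f q ∈ alphabetB n) ∧ (∀ q ∉ D, f q = 0) ∧
    (∀ i j : ℤ, (i, j) ∈ D → (i, j + 1) ∈ D →
      ordB n (f (i, j)) ≤ ordB n (f (i, j + 1)) ∧ ¬(f (i, j) = 0 ∧ f (i, j + 1) = 0)) ∧
    (∀ i j : ℤ, (i, j) ∈ D → (i + 1, j) ∈ D →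
      ordB n (f (i, j)) < ordB n (f (i + 1, j)) ∨ (f (i, j) = 0 ∧ f (i + 1, j) = 0))}

/-- The type B box monomials `⟦a⟧_k`, with the convention `Y_{0,·} = 1`. -/
def boxB (n : ℕ) (a : ℤ) (k : ℤ) : (ℕ × ℤ) → ℤ :=
  if a = 0 then Y (n, 2 * (n : ℤ) - 3 + k) - Y (n, 2 * (n : ℤ) + 1 + k)
  else if a = (n : ℤ) then
    Y (n, 2 * (n : ℤ) - 3 + k) + Y (n, 2 * (n : ℤ) - 1 + k) - Y (n - 1, 2 * (n : ℤ) + k)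
  else if a = -(n : ℤ) then
    Y (n - 1, 2 * (n : ℤ) - 2 + k) - Y (n, 2 * (n : ℤ) - 1 + k) - Y (n, 2 * (n : ℤ) + 1 + k)
  else if 1 ≤ a then
    Y (a.toNat, 2 * a - 2 + k) - (if a = 1 then 0 else Y (a.toNat - 1, 2 * a + k))
  else
    (if a = -1 then 0 else Y ((-a).toNat - 1, 4 * (n : ℤ) - 2 - 2 * (-a) + k)) -
      Y ((-a).toNat, 4 * (n : ℤ) - 2 * (-a) + k)

/-- The monomial `M(𝒯)` of a type B skew tableau. -/
noncomputable def MtabB (n : ℕ) (D : Set (ℤ × ℤ)) (f : ℤ × ℤ → ℤ) : (ℕ × ℤ) → ℤ :=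
  ∑ᶠ q ∈ D, boxB n (f q) (4 * (q.2 - q.1))

/-!
A path of `𝒫_{i,k}` consists of two halves with `n` steps each, and is determined by two subsets of
`{1, …, n}`: the steps at which the left-to-right and the right-to-left half leave their extreme
course. The halves meet in the right order iff these subsets have at most `i` elements in total. A
column of height `i` of a type B tableau is determined by the same data, the sets of its unbarred
and of its barred letters, all remaining boxes being filled with `0`. Under this identification a
path lies strictly above the next one iff the row conditions hold between the two columns: both say
that certain counting functions of the subsets are ordered. The monomials agree since the box
monomials of a column telescope: the letters of each half contribute, by summation by parts, the
corners of a half path and one boundary variable, and the zeros cancel the two boundary variables.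
-/

section

open Finset

section Count

/-- The number of elements of `S` that are at most `r`. -/
def countLE (S : Finset ℕ) (r : ℕ) : ℕ := Nat.count (· ∈ S) (r + 1)

variable {S : Finset ℕ} {n r j : ℕ}

lemma countLE_succ (S : Finset ℕ) (r : ℕ) :
    countLE S (r + 1) = countLE S r + if r + 1 ∈ S then 1 else 0 :=
  Nat.count_succ _ _

lemma countLE_of_mem (hr : r ∈ S) : countLE S r = Nat.count (· ∈ S) r + 1 := by
  rw [countLE, Nat.count_succ, if_pos hr]

lemma countLE_eq_card_filter (S : Finset ℕ) (r : ℕ) : countLE S r = #{x ∈ S | x ≤ r} := by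
  rw [countLE, Nat.count_eq_card_filter_range]
  congr 1
  ext x
  simp [and_comm]

lemma countLE_le_card (S : Finset ℕ) (r : ℕ) : countLE S r ≤ #S :=
  countLE_eq_card_filter S r ▸ card_filter_le S _

lemma countLE_zero (hS : S ⊆ Icc 1 n) : countLE S 0 = 0 := by
  have : 0 ∉ S := fun h => by simpa using hS h
  simp [countLE, Nat.count_succ, this]

lemma countLE_eq_card (hS : S ⊆ Icc 1 n) : countLE S n = #S := by
  rw [countLE_eq_card_filter, filter_true_of_mem]
  exact fun x hx => (mem_Icc.mp (hS hx)).2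

lemma countLE_mono (S : Finset ℕ) : Monotone (countLE S) :=
  fun _ _ h => Nat.count_monotone _ (Nat.succ_le_succ h)

lemma eq_of_countLE_eq {S' : Finset ℕ} (hS : S ⊆ Icc 1 n) (hS' : S' ⊆ Icc 1 n)
    (h : ∀ r, countLE S r = countLE S' r) : S = S' := by
  ext r
  cases r with
  | zero => exact iff_of_false (fun h => by simpa using hS h) (fun h => by simpa using hS' h)
  | succ r =>
    have hr := h (r + 1)
    rw [countLE_succ, countLE_succ, h r] at hr
    split_ifs at hr <;> simp_all

lemma card_toFinset_mem (hf : {x | x ∈ S}.Finite) : #hf.toFinset = #S := by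
  congr 1
  ext x
  simp

lemma nth_mem_finset (hj : j < #S) : Nat.nth (· ∈ S) j ∈ S :=
  Nat.nth_mem j fun hf => (card_toFinset_mem hf).symm ▸ hj

lemma count_nth_finset (hj : j < #S) : Nat.count (· ∈ S) (Nat.nth (· ∈ S) j) = j :=
  Nat.count_nth fun hf => (card_toFinset_mem hf).symm ▸ hj

lemma nth_le_iff_lt_countLE (hj : j < #S) : Nat.nth (· ∈ S) j ≤ r ↔ j < countLE S r := by
  have hcount : countLE S (Nat.nth (· ∈ S) j) = j + 1 := by
    rw [countLE_of_mem (nth_mem_finset hj), count_nth_finset hj]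
  refine ⟨fun h => hcount.ge.trans (countLE_mono S h), fun h => ?_⟩
  by_contra! hr
  have : countLE S r ≤ j :=
    (Nat.count_monotone _ (Nat.succ_le_of_lt hr)).trans_eq (count_nth_finset hj)
  omega

lemma sum_range_nth {M : Type*} [AddCommMonoid M] (S : Finset ℕ) (F : ℕ → ℕ → M) :
    ∑ j ∈ range #S, F (Nat.nth (· ∈ S) j) j = ∑ r ∈ S, F r (Nat.count (· ∈ S) r) := by
  refine sum_nbij' (Nat.nth (· ∈ S)) (Nat.count (· ∈ S)) ?_ ?_ ?_ ?_ ?_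
  · exact fun j hj => nth_mem_finset (mem_range.mp hj)
  · intro r hr
    have := countLE_le_card S r
    rw [countLE_of_mem hr] at this
    exact mem_range.mpr this
  · exact fun j hj => count_nth_finset (mem_range.mp hj)
  · exact fun r hr => Nat.nth_count hr
  · exact fun j hj => by rw [count_nth_finset (mem_range.mp hj)]

end Count

section SpinPath

/-- Whether the half path of sign `σ` runs on the left (`1`) or on the right (`-1`) of the line
`x = 2 n - 1`. -/
def side (n : ℕ) (σ : ℤˣ) : ℤˣ := σ * (-1) ^ n

/-- The abscissa of the `r`-th point of the half path of sign `σ`. -/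
def halfX (n : ℕ) (σ : ℤˣ) (r : ℕ) : ℤ :=
  if r < n then 2 * n - 1 - side n σ * (2 * n - 1 - 2 * r) else 2 * n - 1

/-- The ordinate of the `r`-th point of the half path of sign `σ` which starts at height `a` and
whose `r`-th step has sign `-σ` for `r ∈ S` and `σ` for `r ∉ S`. All steps have length `2` here;
the last one is shortened in `halfPoint`. -/
def halfHeight (σ : ℤˣ) (a : ℤ) (S : Finset ℕ) (r : ℕ) : ℤ :=
  a + σ * (2 * r - 4 * countLE S r)

/-- The sign opposite to that of the `r`-th step of the half path of sign `σ` encoded by `S`. -/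
def stepSign (σ : ℤˣ) (S : Finset ℕ) (r : ℕ) : ℤˣ := if r ∈ S then σ else -σ

/-- The `r`-th point of a half path; the last step has length `1 + ε` instead of `2`. -/
noncomputable def halfPoint (n : ℕ) (ε : ℝ) (σ : ℤˣ) (a : ℤ) (S : Finset ℕ) (r : ℕ) : ℝ × ℝ :=
  (halfX n σ r, halfHeight σ a S r + if r < n then 0 else (stepSign σ S r : ℤ) * (1 - ε))

/-- The half path of sign `σ` which starts at height `a` and whose steps are encoded by `S`. -/
noncomputable def halfPath (n : ℕ) (ε : ℝ) (σ : ℤˣ) (a : ℤ) (S : Finset ℕ) : List (ℝ × ℝ) :=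
  (List.range (n + 1)).map (halfPoint n ε σ a S)

variable {n r r' : ℕ} {ε : ℝ} {σ σ' : ℤˣ} {a : ℤ} {S S' : Finset ℕ} {p : List (ℝ × ℝ)}

lemma halfX_of_lt (hr : r < n) :
    halfX n σ r = if side n σ = 1 then 2 * (r : ℤ) else 4 * n - 2 - 2 * r := by
  rcases Int.units_eq_one_or (side n σ) with h | h <;> simp [halfX, h, hr]
  ring

lemma halfX_self : halfX n σ n = 2 * n - 1 := by
  simp [halfX]

lemma halfX_eq_halfX_iff (hr : r ≤ n) (hr' : r' ≤ n) :
    halfX n σ r = halfX n σ' r' ↔ r = r' ∧ (σ = σ' ∨ r = n) := by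
  have hside : side n σ = side n σ' ↔ σ = σ' := mul_left_inj _
  rw [← hside, halfX, halfX]
  rcases Int.units_eq_one_or (side n σ) with h | h <;>
    rcases Int.units_eq_one_or (side n σ') with h' | h' <;>
    simp only [h, h', Units.val_one, Units.val_neg, true_or, and_true, eq_self] <;>
    split_ifs <;> simp <;> omega

lemma halfHeight_zero (hS : S ⊆ Icc 1 n) : halfHeight σ a S 0 = a := by
  simp [halfHeight, countLE_zero hS]

lemma halfHeight_succ (σ : ℤˣ) (a : ℤ) (S : Finset ℕ) (r : ℕ) :
    halfHeight σ a S (r + 1) = halfHeight σ a S r - 2 * stepSign σ S (r + 1) := by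
  rw [halfHeight, halfHeight, countLE_succ, stepSign]
  split_ifs <;> push_cast <;> ring

lemma length_halfPath : (halfPath n ε σ a S).length = n + 1 := by
  simp [halfPath]

lemma pt_halfPath (hr : r ≤ n) : pt (halfPath n ε σ a S) r = halfPoint n ε σ a S r := by
  simp [pt, halfPath, List.getD_eq_getElem?_getD, Nat.lt_succ_of_le hr]

lemma eq_halfPath_iff : p = halfPath n ε σ a S ↔
    p.length = n + 1 ∧ ∀ r ≤ n, pt p r = halfPoint n ε σ a S r := by
  refine ⟨?_, fun ⟨hlen, hpt⟩ => List.ext_getElem (hlen.trans length_halfPath.symm) ?_⟩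
  · rintro rfl
    exact ⟨length_halfPath, fun r hr => pt_halfPath hr⟩
  · intro r hr _
    have := hpt r (by omega)
    rw [pt, List.getD_eq_getElem _ _ hr] at this
    simp [halfPath, this]

lemma halfPoint_snd_of_lt (hr : r < n) : (halfPoint n ε σ a S r).2 = halfHeight σ a S r := by
  simp [halfPoint, hr]

lemma halfPoint_snd_self :
    (halfPoint n ε σ a S n).2 = halfHeight σ a S n + (stepSign σ S n : ℤ) * (1 - ε) := by
  simp [halfPoint]

lemma halfPoint_snd_succ (hr : r < n) :
    (halfPoint n ε σ a S (r + 1)).2 = (halfPoint n ε σ a S r).2 -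
      (stepSign σ S (r + 1) : ℤ) * if r + 1 < n then 2 else 1 + ε := by
  simp only [halfPoint, halfHeight_succ, if_pos hr]
  split_ifs <;> push_cast <;> ring

lemma halfPath_mem_pathsBspin (hn : 1 ≤ n) {l : ℤ} (hl : l % 4 = 3 ↔ side n σ = 1)
    (hS : S ⊆ Icc 1 n) : halfPath n ε σ (l + 2 * n - 1) S ∈ pathsBspin n ε l := by
  have hstep : ∀ (τ : ℤˣ) (x : ℝ), (-((τ : ℤ) * x) : ℝ) = x ∨ (-((τ : ℤ) * x) : ℝ) = -x := by
    intro τ x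
    rcases Int.units_eq_one_or τ with rfl | rfl <;> simp
  have hlast := halfPoint_snd_succ (ε := ε) (σ := σ) (a := l + 2 * n - 1) (S := S)
    (show n - 1 < n by omega)
  rw [Nat.sub_add_cancel hn, if_neg (lt_irrefl n)] at hlast
  refine ⟨length_halfPath, ?_, ?_, ?_, ?_, ?_⟩
  · split_ifs with h <;> intro r hr <;>
      simp [pt_halfPath hr.le, halfPoint, halfX_of_lt hr, ← hl, h]
  · simp [pt_halfPath le_rfl, halfPoint, halfX_self]
  · simp [pt_halfPath (Nat.zero_le n), halfPoint, halfHeight_zero hS, Nat.lt_of_succ_le hn]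
  · intro r hr
    rw [pt_halfPath (by omega), pt_halfPath (by omega), halfPoint_snd_succ (by omega),
      if_pos (by omega), sub_sub_cancel_left]
    exact hstep _ _
  · rw [pt_halfPath le_rfl, pt_halfPath (by omega), hlast, sub_sub_cancel_left]
    exact hstep _ _

lemma exists_eq_halfPath_of_mem_pathsBspin (hn : 1 ≤ n) (hε : 0 < ε) {l : ℤ}
    (hl : l % 4 = 3 ↔ side n σ = 1) (hp : p ∈ pathsBspin n ε l) :
    ∃ S ⊆ Icc 1 n, p = halfPath n ε σ (l + 2 * n - 1) S := by
  classical
  obtain ⟨hlen, hx, hxn, hstart, hstep, hlast⟩ := hp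
  set y : ℕ → ℝ := fun r => (pt p r).2
  set S : Finset ℕ := {r ∈ Icc 1 n | ((σ : ℤ) : ℝ) * (y r - y (r - 1)) < 0}
  have hS : S ⊆ Icc 1 n := filter_subset _ _
  have hδ : ∀ r < n, ∀ s : ℝ, 0 < s → y (r + 1) - y r = s ∨ y (r + 1) - y r = -s →
      y (r + 1) = y r - (stepSign σ S (r + 1) : ℤ) * s := by
    intro r hr s hs h
    have hmem : r + 1 ∈ S ↔ ((σ : ℤ) : ℝ) * (y (r + 1) - y r) < 0 := by
      simp [S, Nat.succ_le_of_lt hr]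
    rw [stepSign]
    rcases Int.units_eq_one_or σ with rfl | rfl <;> rcases h with h | h <;>
      simp only [hmem, h] <;> simp [hs, not_lt_of_gt hs] <;> linarith
  have hy : ∀ r ≤ n, y r = (halfPoint n ε σ (l + 2 * n - 1) S r).2 := by
    intro r
    induction r with
    | zero =>
      intro _
      rw [halfPoint_snd_of_lt hn, halfHeight_zero hS]
      simpa [y] using hstart
    | succ r ih =>
      intro hr
      rw [halfPoint_snd_succ hr, ← ih (by omega)]
      split_ifs with h
      · exact hδ r hr 2 two_pos (hstep r h)
      · obtain rfl : n = r + 1 := by omega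
        exact hδ r hr (1 + ε) (by linarith) hlast
  refine ⟨S, hS, eq_halfPath_iff.mpr ⟨hlen, fun r hr => Prod.ext ?_ (hy r hr)⟩⟩
  rcases hr.lt_or_eq with hr | rfl
  · simp only [halfPoint, halfX_of_lt hr, ← hl]
    split_ifs at hx ⊢ <;> simp [hx r hr]
  · simp [hxn, halfPoint, halfX_self]

lemma mem_pathsBspin_iff (hn : 1 ≤ n) (hε : 0 < ε) {l : ℤ} (hl : l % 4 = 3 ↔ side n σ = 1) :
    p ∈ pathsBspin n ε l ↔ ∃ S ⊆ Icc 1 n, p = halfPath n ε σ (l + 2 * n - 1) S := by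
  refine ⟨exists_eq_halfPath_of_mem_pathsBspin hn hε hl, ?_⟩
  rintro ⟨S, hS, rfl⟩
  exact halfPath_mem_pathsBspin hn hl hS

lemma halfPoint_snd_succ_lt_iff (hε : 0 < ε) (hr : r < n) :
    (halfPoint n ε σ a S (r + 1)).2 < (halfPoint n ε σ a S r).2 ↔ stepSign σ S (r + 1) = 1 := by
  have hlen : 0 < if r + 1 < n then 2 else 1 + ε := by split_ifs <;> linarith
  rw [halfPoint_snd_succ hr, sub_lt_self_iff]
  generalize (if r + 1 < n then 2 else 1 + ε) = s at hlen ⊢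
  rcases Int.units_eq_one_or (stepSign σ S (r + 1)) with h | h <;> rw [h]
  · simp [hlen]
  · simpa using hlen.le

lemma halfPoint_snd_lt_succ_iff (hε : 0 < ε) (hr : r < n) :
    (halfPoint n ε σ a S r).2 < (halfPoint n ε σ a S (r + 1)).2 ↔ stepSign σ S (r + 1) = -1 := by
  have hlen : 0 < if r + 1 < n then 2 else 1 + ε := by split_ifs <;> linarith
  rw [halfPoint_snd_succ hr, lt_sub_iff_add_lt, add_lt_iff_neg_left]
  generalize (if r + 1 < n then 2 else 1 + ε) = s at hlen ⊢
  rcases Int.units_eq_one_or (stepSign σ S (r + 1)) with h | h <;> rw [h]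
  · simpa using hlen.le
  · simpa using hlen

lemma stepSign_eq_one_iff : stepSign σ S r = 1 ↔ (r ∈ S ↔ σ = 1) := by
  rw [stepSign]
  rcases Int.units_eq_one_or σ with rfl | rfl <;> split_ifs with h <;> simp [h]

lemma halfPath_injOn (hε : 0 < ε) :
    Set.InjOn (halfPath n ε σ a) {S | S ⊆ Icc 1 n} := by
  intro S hS S' hS' h
  ext r
  by_cases hr : r ∈ Icc 1 n
  · obtain ⟨r, rfl⟩ : ∃ s, r = s + 1 := ⟨r - 1, by have := mem_Icc.mp hr; omega⟩
    have hrn : r < n := (mem_Icc.mp hr).2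
    have hiff : stepSign σ S (r + 1) = 1 ↔ stepSign σ S' (r + 1) = 1 := by
      rw [← halfPoint_snd_succ_lt_iff hε hrn, ← halfPoint_snd_succ_lt_iff hε hrn,
        ← pt_halfPath hrn, ← pt_halfPath hrn.le, ← pt_halfPath hrn, ← pt_halfPath hrn.le, h]
    rw [stepSign_eq_one_iff, stepSign_eq_one_iff] at hiff
    tauto
  · exact iff_of_false (fun h => hr (hS h)) (fun h => hr (hS' h))

end SpinPath

section CodePath

/-- The codes, common to the paths of `𝒫_{i,k}` and to the columns of height `i` of the tableaux:
`c 1` is the set of unbarred letters of a column and `c (-1)` its set of barred letters. -/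
structure IsColumnCode (n i : ℕ) (c : ℤˣ → Finset ℕ) : Prop where
  subset_Icc : ∀ σ, c σ ⊆ Icc 1 n
  card_le : #(c 1) + #(c (-1)) ≤ i

/-- The height at which the half path of sign `σ` of a path of `𝒫_{i,k}` starts, `x = (i,k)`. -/
def halfStart (n : ℕ) (σ : ℤˣ) (x : ℕ × ℤ) : ℤ := x.2 + (2 * n - 1) - σ * (2 * n - 1 - 2 * x.1)

/-- The ordinate of the `r`-th point of the half of sign `σ` of the path with code `c`, before
the correction of the last step. -/
def codeHeight (n : ℕ) (x : ℕ × ℤ) (c : ℤˣ → Finset ℕ) (σ : ℤˣ) (r : ℕ) : ℤ :=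
  halfHeight σ (halfStart n σ x) (c σ) r

/-- The `r`-th point of the half of sign `σ` of the path with code `c`. -/
noncomputable def codePoint (n : ℕ) (ε : ℝ) (x : ℕ × ℤ) (c : ℤˣ → Finset ℕ) (σ : ℤˣ) (r : ℕ) :
    ℝ × ℝ :=
  halfPoint n ε σ (halfStart n σ x) (c σ) r

/-- The path of `𝒫_{i,k}` with code `c`, for `x = (i,k)`. -/
noncomputable def codePath (n : ℕ) (ε : ℝ) (x : ℕ × ℤ) (c : ℤˣ → Finset ℕ) : List (ℝ × ℝ) :=
  halfPath n ε 1 (halfStart n 1 x) (c 1) ++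
    (halfPath n ε (-1) (halfStart n (-1) x) (c (-1))).reverse

variable {n r r' : ℕ} {ε : ℝ} {σ σ' : ℤˣ} {x x' : ℕ × ℤ} {c c' : ℤˣ → Finset ℕ}
  {p : List (ℝ × ℝ)} {q : ℝ × ℝ}

lemma bounds_of_mem_Xp (hx : x ∈ Xp (.B n ε)) :
    1 ≤ x.1 ∧ x.1 < n ∧ (2 * (x.1 : ℤ) - x.2) % 4 = 2 := by
  obtain ⟨⟨h, -⟩ | ⟨h, -⟩, hlt, hmod⟩ := hx
  · omega
  · exact ⟨h, hlt, hmod⟩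

lemma codeHeight_emod_four (hx : x ∈ Xp (.B n ε)) (c : ℤˣ → Finset ℕ) (σ : ℤˣ) (r : ℕ) :
    codeHeight n x c σ r % 4 = (2 * r + 1 + σ) % 4 := by
  obtain ⟨-, -, hmod⟩ := bounds_of_mem_Xp hx
  rw [codeHeight, halfHeight, halfStart]
  rcases Int.units_eq_one_or σ with rfl | rfl <;> push_cast <;> omega

lemma halfStart_eq (n : ℕ) (σ : ℤˣ) (x : ℕ × ℤ) :
    halfStart n σ x = x.2 - σ * (2 * n - 2 * x.1 - 1) + 2 * n - 1 := by
  rw [halfStart]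
  ring

lemma spin_emod_four_iff (hx : x ∈ Xp (.B n ε)) (σ : ℤˣ) :
    (x.2 - σ * (2 * n - 2 * x.1 - 1)) % 4 = 3 ↔ side n σ = 1 := by
  obtain ⟨-, -, hmod⟩ := bounds_of_mem_Xp hx
  rcases Nat.even_or_odd' n with ⟨m, rfl | rfl⟩ <;>
    rcases Int.units_eq_one_or σ with rfl | rfl <;>
    simp [side, pow_succ] <;> omega

lemma codeHeight_lt_iff_card_le (hc : ∀ σ, c σ ⊆ Icc 1 n) :
    codeHeight n x c (-1) n < codeHeight n x c 1 n ↔ #(c 1) + #(c (-1)) ≤ x.1 := by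
  simp only [codeHeight, halfHeight, halfStart, countLE_eq_card (hc _), Units.val_neg,
    Units.val_one]
  omega

lemma IsColumnCode.codeHeight_lt (hc : IsColumnCode n x.1 c) :
    codeHeight n x c (-1) n < codeHeight n x c 1 n :=
  (codeHeight_lt_iff_card_le hc.subset_Icc).mpr hc.card_le

lemma codePoint_fst : (codePoint n ε x c σ r).1 = halfX n σ r := rfl

lemma codePoint_snd_of_lt (hr : r < n) : (codePoint n ε x c σ r).2 = codeHeight n x c σ r :=
  halfPoint_snd_of_lt hr

lemma codePoint_snd_self : (codePoint n ε x c σ n).2 =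
    codeHeight n x c σ n + (stepSign σ (c σ) n : ℤ) * (1 - ε) :=
  halfPoint_snd_self

lemma intCast_add_lt_intCast_add_iff {a b : ℤ} (hne : a ≠ b) (hdvd : 2 ∣ a - b) {d e : ℝ}
    (hd : |d| < 1) (he : |e| < 1) : a + d < b + e ↔ a < b := by
  rw [abs_lt] at hd he
  constructor <;> intro h
  · by_contra! hba
    have : ((b + 2 : ℤ) : ℝ) ≤ a := by exact_mod_cast (by omega)
    push_cast at this
    linarith
  · have : ((a + 2 : ℤ) : ℝ) ≤ b := by exact_mod_cast (by omega)
    push_cast at this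
    linarith

lemma codePoint_snd_self_lt_iff (hε : 0 < ε ∧ ε < 1 / 2) (hx : x ∈ Xp (.B n ε))
    (hx' : x' ∈ Xp (.B n ε)) (hne : codeHeight n x c σ n ≠ codeHeight n x' c' σ' n) :
    (codePoint n ε x c σ n).2 < (codePoint n ε x' c' σ' n).2 ↔
      codeHeight n x c σ n < codeHeight n x' c' σ' n := by
  have habs (τ : ℤˣ) : |((τ : ℤ) : ℝ) * (1 - ε)| < 1 := by
    rw [abs_lt]
    rcases Int.units_eq_one_or τ with rfl | rfl <;> push_cast <;> constructor <;> linarith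
  have heven : 2 ∣ codeHeight n x c σ n - codeHeight n x' c' σ' n := by
    have h := codeHeight_emod_four hx c σ n
    have h' := codeHeight_emod_four hx' c' σ' n
    rcases Int.units_eq_one_or σ with rfl | rfl <;>
      rcases Int.units_eq_one_or σ' with rfl | rfl <;> push_cast at h h' <;> omega
  rw [codePoint_snd_self, codePoint_snd_self]
  exact intCast_add_lt_intCast_add_iff hne heven (habs _) (habs _)

lemma codeHeight_ne_of_sign_ne (hx : x ∈ Xp (.B n ε)) (hx' : x' ∈ Xp (.B n ε)) (hσ : σ ≠ σ') :
    codeHeight n x c σ r ≠ codeHeight n x' c' σ' r := by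
  intro h
  have h₁ := codeHeight_emod_four hx c σ r
  have h₂ := codeHeight_emod_four hx' c' σ' r
  rcases Int.units_eq_one_or σ with rfl | rfl <;>
    rcases Int.units_eq_one_or σ' with rfl | rfl <;>
    first | exact hσ rfl | (push_cast at h₁ h₂; omega)

lemma mem_codePath_iff :
    q ∈ codePath n ε x c ↔ ∃ σ, ∃ r ≤ n, q = codePoint n ε x c σ r := by
  have hhalf : ∀ σ, q ∈ halfPath n ε σ (halfStart n σ x) (c σ) ↔
      ∃ r ≤ n, q = codePoint n ε x c σ r := by
    simp [halfPath, codePoint, eq_comm]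
  rw [codePath, List.mem_append, List.mem_reverse, hhalf, hhalf]
  refine ⟨fun h => h.elim (⟨1, ·⟩) (⟨-1, ·⟩), ?_⟩
  rintro ⟨σ, h⟩
  rcases Int.units_eq_one_or σ with rfl | rfl
  exacts [Or.inl h, Or.inr h]

lemma mem_P_iff (hε : 0 < ε ∧ ε < 1 / 2) (hx : x ∈ Xp (.B n ε)) :
    p ∈ P (.B n ε) x.1 x.2 ↔ ∃ c, IsColumnCode n x.1 c ∧ p = codePath n ε x c := by
  obtain ⟨hx₁, hxn, -⟩ := bounds_of_mem_Xp hx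
  have hspin (σ : ℤˣ) (a : List (ℝ × ℝ)) : a ∈ pathsBspin n ε (x.2 - σ * (2 * n - 2 * x.1 - 1)) ↔
      ∃ S ⊆ Icc 1 n, a = halfPath n ε σ (halfStart n σ x) S := by
    rw [mem_pathsBspin_iff (by omega) hε.1 (spin_emod_four_iff hx σ), halfStart_eq]
  have hleft := hspin 1
  have hright := hspin (-1)
  simp only [Units.val_one, one_mul, Units.val_neg, neg_mul, sub_neg_eq_add] at hleft hright
  have hend (c : ℤˣ → Finset ℕ) (hc : ∀ σ, c σ ⊆ Icc 1 n) :
      0 < (codePoint n ε x c 1 n).2 - (codePoint n ε x c (-1) n).2 ↔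
        #(c 1) + #(c (-1)) ≤ x.1 := by
    rw [sub_pos, codePoint_snd_self_lt_iff hε hx hx (codeHeight_ne_of_sign_ne hx hx (by decide)),
      codeHeight_lt_iff_card_le hc]
  change p ∈ pathsB n ε x.1 x.2 ↔ _
  rw [pathsB, if_neg hxn.ne, Set.mem_ofPred_eq]
  constructor
  · rintro ⟨a, b, ha, hb, rfl, -, hpos⟩
    obtain ⟨U, hU, rfl⟩ := (hleft a).mp ha
    obtain ⟨V, hV, rfl⟩ := (hright b).mp hb
    have hc : ∀ σ : ℤˣ, (if σ = 1 then U else V) ⊆ Icc 1 n := fun σ => by split_ifs <;> assumption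
    rw [pt_halfPath le_rfl, pt_halfPath le_rfl] at hpos
    exact ⟨fun σ => if σ = 1 then U else V, ⟨hc, (hend _ hc).mp hpos⟩, rfl⟩
  · rintro ⟨c, hc, rfl⟩
    refine ⟨_, _, (hleft _).mpr ⟨_, hc.subset_Icc 1, rfl⟩,
      (hright _).mpr ⟨_, hc.subset_Icc (-1), rfl⟩, rfl, ?_, ?_⟩ <;>
      rw [pt_halfPath le_rfl, pt_halfPath le_rfl]
    · simp only [halfPoint, halfX_self]
    · exact (hend c hc.subset_Icc).mpr hc.card_le

lemma codePath_injOn (hε : 0 < ε) (x : ℕ × ℤ) :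
    Set.InjOn (codePath n ε x) {c | IsColumnCode n x.1 c} := by
  intro c hc c' hc' h
  have hhalves := List.append_inj h (by rw [length_halfPath, length_halfPath])
  funext σ
  rcases Int.units_eq_one_or σ with rfl | rfl
  · exact halfPath_injOn hε (hc.subset_Icc _) (hc'.subset_Icc _) hhalves.1
  · exact halfPath_injOn hε (hc.subset_Icc _) (hc'.subset_Icc _) (List.reverse_injective hhalves.2)

/-- The relation between the codes `c` and `c'` which says that the path of `𝒫_{i,k}` with code
`c` is strictly above the path of `𝒫_{i',k'}` with code `c'`, where `x = (i,k)`, `x' = (i',k')`. On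
the line `x = 2 n - 1`, where both halves meet, all endpoints have to be compared. -/
def CodeAbove (n : ℕ) (x : ℕ × ℤ) (c : ℤˣ → Finset ℕ) (x' : ℕ × ℤ) (c' : ℤˣ → Finset ℕ) : Prop :=
  (∀ σ, ∀ r < n, codeHeight n x c σ r < codeHeight n x' c' σ r) ∧
    ∀ σ σ', codeHeight n x c σ n < codeHeight n x' c' σ' n

lemma CodeAbove.trans {x'' : ℕ × ℤ} {c'' : ℤˣ → Finset ℕ} (h : CodeAbove n x c x' c')
    (h' : CodeAbove n x' c' x'' c'') : CodeAbove n x c x'' c'' :=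
  ⟨fun σ r hr => (h.1 σ r hr).trans (h'.1 σ r hr), fun σ σ' => (h.2 σ σ').trans (h'.2 σ' σ')⟩

lemma codeAbove_iff (hc : IsColumnCode n x.1 c) (hc' : IsColumnCode n x'.1 c') :
    CodeAbove n x c x' c' ↔ (∀ σ, ∀ r < n, codeHeight n x c σ r < codeHeight n x' c' σ r) ∧
      codeHeight n x c 1 n < codeHeight n x' c' (-1) n := by
  refine and_congr_right fun _ => ⟨fun h => h 1 (-1), fun h σ σ' => ?_⟩
  have h₁ := hc.codeHeight_lt
  have h₂ := hc'.codeHeight_lt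
  rcases Int.units_eq_one_or σ with rfl | rfl <;>
    rcases Int.units_eq_one_or σ' with rfl | rfl <;> omega

lemma strictlyAbove_codePath_iff (hε : 0 < ε ∧ ε < 1 / 2) (hx : x ∈ Xp (.B n ε))
    (hx' : x' ∈ Xp (.B n ε)) (hc : IsColumnCode n x.1 c) (hc' : IsColumnCode n x'.1 c') :
    StrictlyAbove (codePath n ε x c) (codePath n ε x' c') ↔ CodeAbove n x c x' c' := by
  constructor
  · intro h
    have hpoint (σ σ' : ℤˣ) (r : ℕ) (hr : r ≤ n) (hσ : halfX n σ r = halfX n σ' r) :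
        (codePoint n ε x c σ r).2 < (codePoint n ε x' c' σ' r).2 :=
      h _ (mem_codePath_iff.mpr ⟨σ, r, hr, rfl⟩) _ (mem_codePath_iff.mpr ⟨σ', r, hr, rfl⟩)
        (congrArg Int.cast hσ)
    refine (codeAbove_iff hc hc').mpr ⟨fun σ r hr => ?_, ?_⟩
    · simpa only [codePoint_snd_of_lt hr, Int.cast_lt] using hpoint σ σ r hr.le rfl
    · exact (codePoint_snd_self_lt_iff hε hx hx' (codeHeight_ne_of_sign_ne hx hx' (by decide))).mp
        (hpoint 1 (-1) n le_rfl (halfX_self.trans halfX_self.symm))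
  · intro h q hq q' hq' hfst
    obtain ⟨σ, r, hr, rfl⟩ := mem_codePath_iff.mp hq
    obtain ⟨σ', r', hr', rfl⟩ := mem_codePath_iff.mp hq'
    rw [codePoint_fst, codePoint_fst, Int.cast_inj, halfX_eq_halfX_iff hr hr'] at hfst
    obtain ⟨rfl, hσ⟩ := hfst
    rcases hr.lt_or_eq with hr | rfl
    · obtain rfl := hσ.resolve_right hr.ne
      rw [codePoint_snd_of_lt hr, codePoint_snd_of_lt hr]
      exact_mod_cast h.1 σ r hr
    · exact (codePoint_snd_self_lt_iff hε hx hx' (h.2 σ σ').ne).mpr (h.2 σ σ')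

end CodePath

section CodeTuple

/-- The tuples of codes whose paths are non-overlapping; by transitivity it suffices to compare
consecutive ones. -/
def codeTuples (n : ℕ) {T : ℕ} (w : Fin T → ℕ × ℤ) : Set (Fin T → ℤˣ → Finset ℕ) :=
  {c | (∀ t, IsColumnCode n (w t).1 (c t)) ∧
    ∀ (t : Fin T) (h : (t : ℕ) + 1 < T), CodeAbove n (w t) (c t) (w ⟨t + 1, h⟩) (c ⟨t + 1, h⟩)}

/-- The tuple of paths with a given tuple of codes. -/
noncomputable def codePaths (n : ℕ) (ε : ℝ) {T : ℕ} (w : Fin T → ℕ × ℤ)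
    (c : Fin T → ℤˣ → Finset ℕ) : Fin T → List (ℝ × ℝ) :=
  fun t => codePath n ε (w t) (c t)

lemma rel_of_rel_succ {T : ℕ} {R : Fin T → Fin T → Prop} (htrans : ∀ r s t, R r s → R s t → R r t)
    (hsucc : ∀ (t : Fin T) (h : (t : ℕ) + 1 < T), R t ⟨t + 1, h⟩) {s t : Fin T} (hst : s < t) :
    R s t := by
  obtain ⟨t, ht⟩ := t
  replace hst : (s : ℕ) + 1 ≤ t := hst
  induction t, hst using Nat.le_induction with
  | base => exact hsucc s ht
  | succ t _ ih => exact htrans _ _ _ (ih (by omega)) (hsucc ⟨t, by omega⟩ ht)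

variable {n T : ℕ} {ε : ℝ} {w : Fin T → ℕ × ℤ}

lemma nonOverlapping_codePaths_iff (hε : 0 < ε ∧ ε < 1 / 2) (hw : ∀ t, w t ∈ Xp (.B n ε))
    {c : Fin T → ℤˣ → Finset ℕ} (hc : ∀ t, IsColumnCode n (w t).1 (c t)) :
    NonOverlapping (codePaths n ε w c) ↔ ∀ (t : Fin T) (h : (t : ℕ) + 1 < T),
      CodeAbove n (w t) (c t) (w ⟨t + 1, h⟩) (c ⟨t + 1, h⟩) := by
  have habove (s t : Fin T) : StrictlyAbove (codePaths n ε w c s) (codePaths n ε w c t) ↔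
      CodeAbove n (w s) (c s) (w t) (c t) :=
    strictlyAbove_codePath_iff hε (hw s) (hw t) (hc s) (hc t)
  simp only [NonOverlapping, habove]
  exact ⟨fun h t ht => h _ _ (Fin.mk_lt_mk.mpr (Nat.lt_succ_self t)),
    fun h s t hst => rel_of_rel_succ (R := fun s t => CodeAbove n (w s) (c s) (w t) (c t))
      (fun _ _ _ => CodeAbove.trans) h hst⟩

theorem bijOn_codePaths (hε : 0 < ε ∧ ε < 1 / 2) (hw : ∀ t, w t ∈ Xp (.B n ε)) :
    Set.BijOn (codePaths n ε w) (codeTuples n w) (PBar (.B n ε) w) := by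
  refine ⟨fun c hc => ⟨fun t => (mem_P_iff hε (hw t)).mpr ⟨c t, hc.1 t, rfl⟩,
    (nonOverlapping_codePaths_iff hε hw hc.1).mpr hc.2⟩, ?_, ?_⟩
  · exact fun c hc c' hc' h => funext fun t =>
      codePath_injOn hε.1 (w t) (hc.1 t) (hc'.1 t) (congrFun h t)
  · rintro p ⟨hp, hno⟩
    choose c hc hpc using fun t => (mem_P_iff hε (hw t)).mp (hp t)
    obtain rfl : p = codePaths n ε w c := funext hpc
    exact ⟨c, ⟨hc, (nonOverlapping_codePaths_iff hε hw hc).mp hno⟩, rfl⟩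

end CodeTuple

section Letters

variable {n : ℕ} {a b : ℤ}

/-- The condition on two letters which are adjacent in a row of a type B tableau. -/
def RowLE (n : ℕ) (a b : ℤ) : Prop := ordB n a ≤ ordB n b ∧ ¬(a = 0 ∧ b = 0)

/-- The condition on two letters which are adjacent in a column of a type B tableau. -/
def ColumnLT (n : ℕ) (a b : ℤ) : Prop := ordB n a < ordB n b ∨ a = 0 ∧ b = 0

lemma mem_alphabetB_iff : a ∈ alphabetB n ↔ -(n : ℤ) ≤ a ∧ a ≤ n := by
  simp only [alphabetB, Set.mem_ofPred_eq]
  omega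

lemma rowLE_iff (ha : a ∈ alphabetB n) (hb : b ∈ alphabetB n) :
    RowLE n a b ↔ (∀ r ≤ n, 1 ≤ b ∧ b ≤ r → 1 ≤ a ∧ a ≤ r) ∧
      (∀ r ≤ n, 1 ≤ -a ∧ -a ≤ r → 1 ≤ -b ∧ -b ≤ r) ∧ (1 ≤ a ∨ 1 ≤ -b) := by
  rw [mem_alphabetB_iff] at ha hb
  rw [RowLE, ordB, ordB]
  constructor
  · intro h
    refine ⟨fun r _ _ => ?_, fun r _ _ => ?_, ?_⟩ <;> split_ifs at h <;> omega
  · rintro ⟨hpos, hneg, hor⟩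
    have hpos := hpos b.toNat
    have hneg := hneg (-a).toNat
    split_ifs <;> omega

lemma columnLT_iff (ha : a ∈ alphabetB n) (hb : b ∈ alphabetB n) :
    ColumnLT n a b ↔ (∀ r : ℕ, 1 ≤ b ∧ b ≤ r + 1 → 1 ≤ a ∧ a ≤ r) ∧
      (∀ r : ℕ, 1 ≤ -a ∧ -a ≤ r + 1 → 1 ≤ -b ∧ -b ≤ r) := by
  rw [mem_alphabetB_iff] at ha hb
  rw [ColumnLT, ordB, ordB]
  constructor
  · intro h
    refine ⟨fun r _ => ?_, fun r _ => ?_⟩ <;> split_ifs at h <;> omega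
  · rintro ⟨hpos, hneg⟩
    have hpos := hpos (b - 1).toNat
    have hneg := hneg (-a - 1).toNat
    split_ifs <;> omega

lemma eq_of_threshold_iff
    (h : ∀ (σ : ℤˣ) (r : ℕ), (1 ≤ σ * a ∧ σ * a ≤ r) ↔ (1 ≤ σ * b ∧ σ * b ≤ r)) : a = b := by
  have hpos := h 1
  have hneg := h (-1)
  simp only [Units.val_one, one_mul, Units.val_neg, neg_mul] at hpos hneg
  have := hpos a.toNat
  have := hpos b.toNat
  have := hneg (-a).toNat
  have := hneg (-b).toNat
  omega

end Letters

section Column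

/-- The fillings of a column of height `i`, with rows counted from `0`. -/
def IsColumn (n i : ℕ) (f : ℤ → ℤ) : Prop :=
  (∀ j : ℤ, 0 ≤ j → j < i → f j ∈ alphabetB n) ∧
    ∀ j : ℤ, 0 ≤ j → j + 1 < i → ColumnLT n (f j) (f (j + 1))

/-- The entry in row `j` of the column with code `c`: the unbarred letters stand on top, the
barred ones at the bottom, and zeros fill the space between them. It is `0` outside the column. -/
noncomputable def columnLetter (i : ℕ) (c : ℤˣ → Finset ℕ) (j : ℤ) : ℤ :=
  if j < 0 ∨ i ≤ j then 0
  else if j < #(c 1) then Nat.nth (· ∈ c 1) j.toNat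
  else if j < i - #(c (-1)) then 0
  else -Nat.nth (· ∈ c (-1)) (i - 1 - j).toNat

/-- The row `j` of a column of height `i`, counted from the top for `σ = 1` and from the bottom for
`σ = -1`. -/
def columnPos (i : ℕ) (σ : ℤˣ) (j : ℤ) : ℤ := if σ = 1 then j else i - 1 - j

variable {n i r : ℕ} {σ : ℤˣ} {c c' : ℤˣ → Finset ℕ} {j : ℤ} {f : ℤ → ℤ}

lemma columnPos_one : columnPos i 1 j = j := rfl

lemma columnPos_neg_one : columnPos i (-1) j = i - 1 - j := rfl

lemma columnPos_columnPos : columnPos i σ (columnPos i σ j) = j := by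
  rcases Int.units_eq_one_or σ with rfl | rfl
  · rfl
  · rw [columnPos_neg_one, columnPos_neg_one]
    ring

lemma columnLetter_eq_zero (hj : j < 0 ∨ i ≤ j) : columnLetter i c j = 0 :=
  if_pos hj

lemma IsColumnCode.one_le_nth (hc : IsColumnCode n i c) {m : ℕ} (hm : m < #(c σ)) :
    1 ≤ Nat.nth (· ∈ c σ) m :=
  (mem_Icc.mp (hc.subset_Icc σ (nth_mem_finset hm))).1

lemma columnLetter_threshold (hc : IsColumnCode n i c) (hj : 0 ≤ j) (hji : j < i) (σ : ℤˣ) (r : ℕ) :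
    1 ≤ σ * columnLetter i c j ∧ σ * columnLetter i c j ≤ r ↔
      columnPos i σ j < countLE (c σ) r := by
  have hcard := hc.card_le
  have hle := countLE_le_card (c σ) r
  rw [columnLetter, if_neg (by omega)]
  split_ifs with hpos hzero
  · have h₁ := hc.one_le_nth (show j.toNat < #(c 1) by omega)
    have h₂ := nth_le_iff_lt_countLE (S := c 1) (j := j.toNat) (r := r) (by omega)
    rcases Int.units_eq_one_or σ with rfl | rfl <;>
      simp only [columnPos_one, columnPos_neg_one, Units.val_one, Units.val_neg] <;> omega
  · rcases Int.units_eq_one_or σ with rfl | rfl <;>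
      simp only [columnPos_one, columnPos_neg_one] <;> omega
  · have h₁ := hc.one_le_nth (show (i - 1 - j).toNat < #(c (-1)) by omega)
    have h₂ := nth_le_iff_lt_countLE (S := c (-1)) (j := (i - 1 - j).toNat) (r := r) (by omega)
    rcases Int.units_eq_one_or σ with rfl | rfl <;>
      simp only [columnPos_one, columnPos_neg_one, Units.val_one, Units.val_neg] <;> omega

lemma one_le_columnLetter_iff (hc : IsColumnCode n i c) (hj : 0 ≤ j) (hji : j < i) (σ : ℤˣ) :
    1 ≤ σ * columnLetter i c j ↔ columnPos i σ j < #(c σ) := by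
  rw [← countLE_eq_card (hc.subset_Icc σ)]
  refine ⟨fun h => ?_, fun h => ((columnLetter_threshold hc hj hji σ n).mpr h).1⟩
  have hlt := (columnLetter_threshold hc hj hji σ (σ * columnLetter i c j).toNat).mp
    ⟨h, Int.self_le_toNat _⟩
  have hle := countLE_le_card (c σ) (σ * columnLetter i c j).toNat
  rw [← countLE_eq_card (hc.subset_Icc σ)] at hle
  omega

lemma columnLetter_mem_alphabetB (hc : IsColumnCode n i c) (hj : 0 ≤ j) (hji : j < i) :
    columnLetter i c j ∈ alphabetB n := by
  have hbound : ∀ σ : ℤˣ, σ * columnLetter i c j ≤ n := by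
    intro σ
    by_contra! h
    have hlt := (one_le_columnLetter_iff hc hj hji σ).mp (by omega)
    rw [← countLE_eq_card (hc.subset_Icc σ), ← columnLetter_threshold hc hj hji] at hlt
    exact h.not_ge hlt.2
  have hpos := hbound 1
  have hneg := hbound (-1)
  rw [mem_alphabetB_iff]
  push_cast at hpos hneg
  omega

lemma isColumn_columnLetter (hc : IsColumnCode n i c) : IsColumn n i (columnLetter i c) := by
  refine ⟨fun j hj hji => columnLetter_mem_alphabetB hc hj hji, fun j hj hji => ?_⟩
  have hmem := columnLetter_mem_alphabetB hc hj (by omega)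
  have hmem' := columnLetter_mem_alphabetB hc (j := j + 1) (by omega) hji
  have hthr (σ : ℤˣ) (r : ℕ) := columnLetter_threshold hc hj (by omega) σ r
  have hthr' (σ : ℤˣ) (r : ℕ) := columnLetter_threshold hc (j := j + 1) (by omega) hji σ r
  have hsucc (σ : ℤˣ) (r : ℕ) : countLE (c σ) (r + 1) ≤ countLE (c σ) r + 1 := by
    rw [countLE_succ]
    split_ifs <;> omega
  refine (columnLT_iff hmem hmem').mpr ⟨fun r h => ?_, fun r h => ?_⟩
  · have h₁ := hthr 1 r
    have h₂ := hthr' 1 (r + 1)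
    have := hsucc 1 r
    simp only [columnPos_one] at h₁ h₂
    push_cast at h₁ h₂
    omega
  · have h₁ := hthr (-1) (r + 1)
    have h₂ := hthr' (-1) r
    have := hsucc (-1) r
    simp only [columnPos_neg_one] at h₁ h₂
    push_cast at h₁ h₂
    omega

lemma code_eq_of_columnLetter_eq (hc : IsColumnCode n i c) (hc' : IsColumnCode n i c')
    (h : columnLetter i c = columnLetter i c') : c = c' := by
  have hcount_le : ∀ {d : ℤˣ → Finset ℕ}, IsColumnCode n i d → ∀ σ r, countLE (d σ) r ≤ i := by
    intro d hd σ r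
    have hle := countLE_le_card (d σ) r
    have hcard := hd.card_le
    rcases Int.units_eq_one_or σ with rfl | rfl <;> omega
  funext σ
  refine eq_of_countLE_eq (hc.subset_Icc σ) (hc'.subset_Icc σ) fun r => ?_
  have hiff : ∀ j : ℕ, j < i → (j < countLE (c σ) r ↔ j < countLE (c' σ) r) := by
    intro j hji
    have hpos : 0 ≤ columnPos i σ j ∧ columnPos i σ j < i := by
      rcases Int.units_eq_one_or σ with rfl | rfl <;>
        simp only [columnPos_one, columnPos_neg_one] <;> omega
    have h₁ := columnLetter_threshold hc hpos.1 hpos.2 σ r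
    have h₂ := columnLetter_threshold hc' hpos.1 hpos.2 σ r
    rw [columnPos_columnPos] at h₁ h₂
    rw [← Int.ofNat_lt, ← Int.ofNat_lt, ← h₁, ← h₂, h]
  have hle := hcount_le hc σ r
  have hle' := hcount_le hc' σ r
  have := hiff (countLE (c σ) r)
  have := hiff (countLE (c' σ) r)
  omega

lemma mem_iff_lt_card_of_isLowerSet {F : Finset ℕ} (hF : IsLowerSet (F : Set ℕ)) {j : ℕ} :
    j ∈ F ↔ j < #F := by
  constructor
  · intro hj
    have hsub : range (j + 1) ⊆ F := fun k hk => hF (Nat.le_of_lt_succ (mem_range.mp hk)) hj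
    simpa using card_le_card hsub
  · intro hj
    by_contra hjF
    have hsub : F ⊆ range j := fun k hk => by
      rw [mem_range]
      by_contra! hjk
      exact hjF (hF hjk hk)
    have := card_le_card hsub
    rw [card_range] at this
    omega

lemma exists_countLE_of_strictMono {g : ℕ → ℤ} (hn : ∀ j < i, g j ≤ n)
    (hg : ∀ j, j + 1 < i → 1 ≤ g (j + 1) → 1 ≤ g j ∧ g j < g (j + 1)) :
    ∃ S ⊆ Icc 1 n, #S ≤ i ∧ ∀ j < i, ∀ r : ℕ, 1 ≤ g j ∧ g j ≤ r ↔ j < countLE S r := by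
  have hlt : ∀ j k, j < k → k < i → 1 ≤ g k → 1 ≤ g j ∧ g j < g k := by
    intro j k hjk
    induction k, hjk using Nat.le_induction with
    | base => exact hg j
    | succ k _ ih =>
      intro hk hgk
      obtain ⟨h₁, h₂⟩ := hg k hk hgk
      obtain ⟨h₃, h₄⟩ := ih (by omega) h₁
      exact ⟨h₃, h₄.trans h₂⟩
  set S : Finset ℕ := {j ∈ range i | 1 ≤ g j}.image fun j => (g j).toNat
  have hcount (r : ℕ) : countLE S r = #{j ∈ range i | 1 ≤ g j ∧ g j ≤ r} := by
    have hfilter : {x ∈ S | x ≤ r} =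
        {j ∈ range i | 1 ≤ g j ∧ g j ≤ r}.image fun j => (g j).toNat := by
      simp only [S, filter_image, filter_filter, Int.toNat_le]
    rw [countLE_eq_card_filter, hfilter, card_image_of_injOn]
    intro j hj k hk hjk
    simp only [coe_filter, mem_range, Set.mem_ofPred_eq] at hj hk hjk
    have h₁ := hlt j k
    have h₂ := hlt k j
    omega
  refine ⟨S, ?_, card_image_le.trans ((card_filter_le _ _).trans_eq (card_range i)), ?_⟩
  · intro x hx
    simp only [S, mem_image, mem_filter, mem_range] at hx
    obtain ⟨j, ⟨hji, hj⟩, rfl⟩ := hx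
    have := hn j hji
    exact mem_Icc.mpr (by omega)
  · intro j hji r
    rw [hcount, ← mem_iff_lt_card_of_isLowerSet, mem_filter, mem_range]
    · simp only [hji, true_and]
    · intro k m hmk hk
      simp only [coe_filter, mem_range, Set.mem_ofPred_eq] at hk ⊢
      rcases hmk.lt_or_eq with hmk | rfl
      · have := hlt m k hmk hk.1 hk.2.1
        omega
      · exact hk

lemma IsColumn.exists_half (hf : IsColumn n i f) (σ : ℤˣ) :
    ∃ S ⊆ Icc 1 n, #S ≤ i ∧ ∀ j < i, ∀ r : ℕ,
      1 ≤ σ * f (columnPos i σ j) ∧ σ * f (columnPos i σ j) ≤ r ↔ j < countLE S r := by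
  refine exists_countLE_of_strictMono (fun j hj => ?_) fun j hj h => ?_
  · have := mem_alphabetB_iff.mp (hf.1 j (by omega) (by omega))
    have := mem_alphabetB_iff.mp (hf.1 (i - 1 - j) (by omega) (by omega))
    rcases Int.units_eq_one_or σ with rfl | rfl <;>
      simp only [columnPos_one, columnPos_neg_one, Units.val_one, Units.val_neg] <;> omega
  · rcases Int.units_eq_one_or σ with rfl | rfl <;>
      simp only [columnPos_one, columnPos_neg_one, Units.val_one, Units.val_neg, one_mul,
        neg_mul, Nat.cast_add, Nat.cast_one] at h ⊢
    · have hlt := ((columnLT_iff (hf.1 j (by omega) (by omega))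
        (hf.1 (j + 1) (by omega) (by omega))).mp (hf.2 j (by omega) (by omega))).1
        (f (j + 1) - 1).toNat
      omega
    · have hj' : i - 1 - ((j : ℤ) + 1) + 1 = i - 1 - j := by ring
      have hlt := ((columnLT_iff (hf.1 (i - 1 - (j + 1)) (by omega) (by omega))
        (hf.1 (i - 1 - (j + 1) + 1) (by omega) (by omega))).mp
        (hf.2 (i - 1 - (j + 1)) (by omega) (by omega))).2 (-f (i - 1 - (j + 1)) - 1).toNat
      rw [hj'] at hlt
      omega

lemma IsColumn.exists_code (hf : IsColumn n i f) :
    ∃ c, IsColumnCode n i c ∧ ∀ j : ℤ, 0 ≤ j → j < i → f j = columnLetter i c j := by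
  choose c hcS hcard hthr using hf.exists_half
  have hthr' (j : ℤ) (hj : 0 ≤ j) (hji : j < i) (σ : ℤˣ) (r : ℕ) :
      1 ≤ σ * f j ∧ σ * f j ≤ r ↔ columnPos i σ j < countLE (c σ) r := by
    have hpos : ((columnPos i σ j).toNat : ℤ) = columnPos i σ j ∧ (columnPos i σ j).toNat < i := by
      rcases Int.units_eq_one_or σ with rfl | rfl <;>
        simp only [columnPos_one, columnPos_neg_one] <;> omega
    have := hthr σ _ hpos.2 r
    rw [hpos.1, columnPos_columnPos] at this
    rw [this, ← Int.ofNat_lt, hpos.1]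
  have hc : IsColumnCode n i c := by
    refine ⟨hcS, ?_⟩
    by_contra! hlt
    have h₁ := hcard 1
    have h₂ := hthr' (i - #(c (-1))) (by have := hcard (-1); omega) (by omega) 1 n
    have h₃ := hthr' (i - #(c (-1))) (by have := hcard (-1); omega) (by omega) (-1) n
    rw [countLE_eq_card (hcS _), columnPos_one] at h₂
    rw [countLE_eq_card (hcS _), columnPos_neg_one] at h₃
    push_cast at h₂ h₃
    omega
  refine ⟨c, hc, fun j hj hji => eq_of_threshold_iff fun σ r => ?_⟩
  rw [hthr' j hj hji, columnLetter_threshold hc hj hji]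

end Column

section RowComparison

variable {n i i' t r : ℕ} {a a' : ℤ} {ε : ℝ} {x x' : ℕ × ℤ} {c c' : ℤˣ → Finset ℕ}

lemma forall_lt_imp_lt_iff {l u a b : ℤ} (hb : l ≤ b) (ha : a ≤ u) :
    (∀ s, l ≤ s → s < u → s < a → s < b) ↔ a ≤ b := by
  refine ⟨fun h => ?_, fun h s _ _ hs => hs.trans_le h⟩
  by_contra! hba
  exact lt_irrefl b (h b hb (hba.trans_le ha) hba)

lemma rowLE_columnLetter_iff {j j' : ℤ} (hc : IsColumnCode n i c) (hc' : IsColumnCode n i' c')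
    (hj : 0 ≤ j) (hji : j < i) (hj' : 0 ≤ j') (hji' : j' < i') :
    RowLE n (columnLetter i c j) (columnLetter i' c' j') ↔
      (∀ r ≤ n, j' < countLE (c' 1) r → j < countLE (c 1) r) ∧
      (∀ r ≤ n, i - 1 - j < countLE (c (-1)) r → i' - 1 - j' < countLE (c' (-1)) r) ∧
      (j < #(c 1) ∨ i' - 1 - j' < #(c' (-1))) := by
  have hthr (r : ℕ) := columnLetter_threshold hc hj hji 1 r
  have hthr' (r : ℕ) := columnLetter_threshold hc' hj' hji' 1 r
  have hbar (r : ℕ) := columnLetter_threshold hc hj hji (-1) r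
  have hbar' (r : ℕ) := columnLetter_threshold hc' hj' hji' (-1) r
  have hpos := one_le_columnLetter_iff hc hj hji 1
  have hneg := one_le_columnLetter_iff hc' hj' hji' (-1)
  simp only [columnPos_one, columnPos_neg_one, Units.val_one, Units.val_neg, one_mul,
    neg_mul] at hthr hthr' hbar hbar' hpos hneg
  rw [rowLE_iff (columnLetter_mem_alphabetB hc hj hji)
    (columnLetter_mem_alphabetB hc' hj' hji')]
  refine and_congr (forall₂_congr fun r _ => ?_) (and_congr (forall₂_congr fun r _ => ?_) ?_)
  · rw [hthr, hthr']
  · rw [hbar, hbar']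
  · rw [hpos, hneg]

lemma forall_rowLE_columnLetter_iff (hc : IsColumnCode n i c) (hc' : IsColumnCode n i' c')
    (htop : a' ≤ a) (hbot : a' + i' ≤ a + i) :
    (∀ s, a ≤ s → s < a' + i' → RowLE n (columnLetter i c (s - a)) (columnLetter i' c' (s - a'))) ↔
      (∀ r ≤ n, a' + countLE (c' 1) r ≤ a + countLE (c 1) r) ∧
      (∀ r ≤ n, a' + i' - countLE (c' (-1)) r ≤ a + i - countLE (c (-1)) r) ∧
      a' + i' - #(c' (-1)) ≤ a + #(c 1) := by
  have hcard := hc.card_le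
  have hcard' := hc'.card_le
  have hle (r : ℕ) := countLE_le_card (c (-1)) r
  have hle' (r : ℕ) := countLE_le_card (c' 1) r
  have hrow (s : ℤ) (hs : a ≤ s) (hs' : s < a' + i') :
      RowLE n (columnLetter i c (s - a)) (columnLetter i' c' (s - a')) ↔
        (∀ r ≤ n, s < a' + countLE (c' 1) r → s < a + countLE (c 1) r) ∧
        (∀ r ≤ n, s < a' + i' - countLE (c' (-1)) r → s < a + i - countLE (c (-1)) r) ∧
        (s < a' + i' - #(c' (-1)) → s < a + #(c 1)) := by
    have hj : 0 ≤ s - a ∧ s - a < i := by omega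
    have hj' : 0 ≤ s - a' ∧ s - a' < i' := by omega
    rw [rowLE_columnLetter_iff hc hc' hj.1 hj.2 hj'.1 hj'.2]
    refine and_congr (forall₂_congr fun r _ => ?_)
      (and_congr (forall₂_congr fun r _ => ?_) ?_) <;> omega
  constructor
  · exact fun h => ⟨fun r hr => (forall_lt_imp_lt_iff (by omega) (by grind)).mp
      fun s hs hs' => ((hrow s hs hs').mp (h s hs hs')).1 r hr,
      fun r hr => (forall_lt_imp_lt_iff (by grind) (by omega)).mp
      fun s hs hs' => ((hrow s hs hs').mp (h s hs hs')).2.1 r hr,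
      (forall_lt_imp_lt_iff (by omega) (by omega)).mp
      fun s hs hs' => ((hrow s hs hs').mp (h s hs hs')).2.2⟩
  · exact fun h s hs hs' => (hrow s hs hs').mpr ⟨fun r hr hsr => hsr.trans_le (h.1 r hr),
      fun r hr hsr => hsr.trans_le (h.2.1 r hr), fun hsr => hsr.trans_le h.2.2⟩

/-- The row of the top box of the column of index `t` attached to `x = (i,k)`; columns of the
diagram are numbered from `1`, while `t` starts from `0`. -/
def columnTop (x : ℕ × ℤ) (t : ℕ) : ℤ := (4 * (t + 1) - x.2 - 2 * x.1 + 2) / 4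

lemma four_mul_columnTop (hx : x ∈ Xp (.B n ε)) (t : ℕ) :
    4 * columnTop x t = 4 * (t + 1) - x.2 - 2 * x.1 + 2 := by
  obtain ⟨-, -, hmod⟩ := bounds_of_mem_Xp hx
  rw [columnTop]
  omega

lemma codeHeight_one_eq (hx : x ∈ Xp (.B n ε)) (c : ℤˣ → Finset ℕ) (t r : ℕ) :
    codeHeight n x c 1 r = 4 * (t + 1) + 2 + 2 * r - 4 * (columnTop x t + countLE (c 1) r) := by
  have htop := four_mul_columnTop hx t
  rw [codeHeight, halfHeight, halfStart, Units.val_one]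
  omega

lemma codeHeight_neg_one_eq (hx : x ∈ Xp (.B n ε)) (c : ℤˣ → Finset ℕ) (t r : ℕ) :
    codeHeight n x c (-1) r =
      4 * (t + 1) + 4 * n - 2 * r - 4 * (columnTop x t + x.1 - countLE (c (-1)) r) := by
  have htop := four_mul_columnTop hx t
  rw [codeHeight, halfHeight, halfStart, Units.val_neg, Units.val_one]
  omega

lemma columnTop_le_of_snakePos (hx : x ∈ Xp (.B n ε)) (hx' : x' ∈ Xp (.B n ε))
    (h : SnakePos (.B n ε) x x') (t : ℕ) : columnTop x' (t + 1) ≤ columnTop x t ∧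
      columnTop x' (t + 1) + x'.1 ≤ columnTop x t + x.1 := by
  obtain ⟨-, hlt, -⟩ := bounds_of_mem_Xp hx
  obtain ⟨-, hlt', -⟩ := bounds_of_mem_Xp hx'
  rw [SnakePos, if_neg (by omega), if_neg (by omega)] at h
  have htop := four_mul_columnTop hx t
  have htop' := four_mul_columnTop hx' (t + 1)
  have habs := le_abs_self ((x'.1 : ℤ) - x.1)
  have habs' := neg_abs_le ((x'.1 : ℤ) - x.1)
  push_cast at htop'
  omega

lemma codeAbove_iff_forall_rowLE (hx : x ∈ Xp (.B n ε)) (hx' : x' ∈ Xp (.B n ε))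
    (hsnake : SnakePos (.B n ε) x x') (hc : IsColumnCode n x.1 c) (hc' : IsColumnCode n x'.1 c')
    (t : ℕ) :
    CodeAbove n x c x' c' ↔ ∀ s, columnTop x t ≤ s → s < columnTop x' (t + 1) + x'.1 →
      RowLE n (columnLetter x.1 c (s - columnTop x t))
        (columnLetter x'.1 c' (s - columnTop x' (t + 1))) := by
  obtain ⟨htop, hbot⟩ := columnTop_le_of_snakePos hx hx' hsnake t
  rw [forall_rowLE_columnLetter_iff hc hc' htop hbot, codeAbove_iff hc hc']
  have hY := codeHeight_one_eq hx c t
  have hY' := codeHeight_one_eq hx' c' (t + 1)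
  have hZ := codeHeight_neg_one_eq hx c t
  have hZ' := codeHeight_neg_one_eq hx' c' (t + 1)
  have hcard (σ : ℤˣ) := countLE_eq_card (hc.subset_Icc σ)
  have hcard' (σ : ℤˣ) := countLE_eq_card (hc'.subset_Icc σ)
  have hle := hc.card_le
  have hle' := hc'.card_le
  push_cast at hY' hZ'
  rw [← hcard, ← hcard] at hle
  rw [← hcard', ← hcard'] at hle'
  rw [← hcard, ← hcard', hY, hZ']
  constructor
  · rintro ⟨hlt, hlast⟩
    refine ⟨fun r hr => ?_, fun r hr => ?_, by omega⟩ <;> rcases hr.lt_or_eq with hr | rfl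
    · have := hlt 1 r hr
      rw [hY, hY'] at this
      omega
    · omega
    · have := hlt (-1) r hr
      rw [hZ, hZ'] at this
      omega
    · omega
  · rintro ⟨hone, hneg, hlast⟩
    refine ⟨fun σ r hr => ?_, by omega⟩
    have := hone r hr.le
    have := hneg r hr.le
    rcases Int.units_eq_one_or σ with rfl | rfl
    · rw [hY, hY']
      omega
    · rw [hZ, hZ']
      omega

end RowComparison

section CodeTableau

variable {n T : ℕ} {ε : ℝ} {w : Fin T → ℕ × ℤ} {f : ℤ × ℤ → ℤ}

/-- The tableau whose columns have the given codes; it vanishes outside the diagram. -/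
noncomputable def codeTableau (w : Fin T → ℕ × ℤ) (c : Fin T → ℤˣ → Finset ℕ) (q : ℤ × ℤ) : ℤ :=
  ∑ t : Fin T, if q.2 = t + 1 then columnLetter (w t).1 (c t) (q.1 - columnTop (w t) t) else 0

lemma codeTableau_apply (w : Fin T → ℕ × ℤ) (c : Fin T → ℤˣ → Finset ℕ) (s : ℤ) (t : Fin T) :
    codeTableau w c (s, t + 1) = columnLetter (w t).1 (c t) (s - columnTop (w t) t) := by
  rw [codeTableau, sum_eq_single t, if_pos rfl]
  · intro u _ hu
    exact if_neg fun h => hu (Fin.ext (by omega))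
  · exact fun h => absurd (mem_univ t) h

lemma mem_diagOf_iff (hw : ∀ t, w t ∈ Xp (.B n ε)) (s : ℤ) (t : Fin T) :
    (s, (t : ℤ) + 1) ∈ diagOf (.B n ε) w ↔
      columnTop (w t) t ≤ s ∧ s < columnTop (w t) t + (w t).1 := by
  have htop := four_mul_columnTop (hw t) t
  simp only [diagOf, rd, Set.mem_ofPred_eq]
  constructor
  · rintro ⟨u, hu, h⟩
    obtain rfl : t = u := Fin.ext (by omega)
    omega
  · exact fun h => ⟨t, rfl, by omega⟩

lemma mem_TabB_iff (hw : ∀ t, w t ∈ Xp (.B n ε)) (hsnake : IsSnake (.B n ε) w) :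
    f ∈ TabB n (diagOf (.B n ε) w) ↔ (∀ q ∉ diagOf (.B n ε) w, f q = 0) ∧
      (∀ t : Fin T, IsColumn n (w t).1 fun j => f (columnTop (w t) t + j, t + 1)) ∧
      ∀ (t : Fin T) (h : (t : ℕ) + 1 < T) (s : ℤ), columnTop (w t) t ≤ s →
        s < columnTop (w ⟨t + 1, h⟩) (t + 1) + (w ⟨t + 1, h⟩).1 →
        RowLE n (f (s, t + 1)) (f (s, ((t + 1 : ℕ) : ℤ) + 1)) := by
  have hmem := mem_diagOf_iff hw
  constructor
  · rintro ⟨halph, hzero, hrow, hcol⟩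
    refine ⟨hzero, fun t => ⟨fun j hj hji => halph _ ((hmem _ t).mpr (by omega)),
      fun j hj hji => ?_⟩, fun t h s hs hs' => ?_⟩
    · simp only [← add_assoc]
      exact hcol _ _ ((hmem _ t).mpr (by omega)) ((hmem _ t).mpr (by omega))
    · obtain ⟨htop, hbot⟩ := columnTop_le_of_snakePos (hw t) (hw _) (hsnake.2 t h) t
      have hright := (hmem s ⟨t + 1, h⟩).mpr ⟨htop.trans hs, hs'⟩
      rw [Nat.cast_succ] at hright ⊢
      exact hrow _ _ ((hmem s t).mpr ⟨hs, by omega⟩) hright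
  · rintro ⟨hzero, hcol, hrow⟩
    refine ⟨?_, hzero, ?_, ?_⟩
    · rintro ⟨s, _⟩ hq
      obtain ⟨t, rfl, -⟩ := id hq
      have hs := (hmem s t).mp hq
      simpa using (hcol t).1 (s - columnTop (w t) t) (by omega) (by omega)
    · rintro s _ hq hq'
      obtain ⟨t, rfl, -⟩ := id hq
      obtain ⟨u, hu, -⟩ := id hq'
      have h : (t : ℕ) + 1 < T := by omega
      rw [← Nat.cast_succ] at hq' ⊢
      exact hrow t h s ((hmem s t).mp hq).1 ((hmem s ⟨t + 1, h⟩).mp hq').2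
    · rintro s _ hq hq'
      obtain ⟨t, rfl, -⟩ := id hq
      have hs := (hmem s t).mp hq
      have hs' := (hmem (s + 1) t).mp hq'
      have := (hcol t).2 (s - columnTop (w t) t) (by omega) (by omega)
      simp only [add_sub_cancel, ← add_assoc] at this
      exact this

lemma codeTableau_eq_zero (hw : ∀ t, w t ∈ Xp (.B n ε)) (c : Fin T → ℤˣ → Finset ℕ)
    {q : ℤ × ℤ} (hq : q ∉ diagOf (.B n ε) w) : codeTableau w c q = 0 := by
  obtain ⟨s, u⟩ := q
  refine sum_eq_zero fun t _ => ?_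
  split_ifs with ht
  · obtain rfl : u = t + 1 := ht
    rw [mem_diagOf_iff hw] at hq
    exact columnLetter_eq_zero (by omega)
  · rfl

lemma codeTableau_column (w : Fin T → ℕ × ℤ) (c : Fin T → ℤˣ → Finset ℕ) (t : Fin T) :
    (fun j => codeTableau w c (columnTop (w t) t + j, t + 1)) = columnLetter (w t).1 (c t) := by
  funext j
  rw [codeTableau_apply, add_sub_cancel_left]

lemma codeTableau_mem_TabB_iff (hw : ∀ t, w t ∈ Xp (.B n ε)) (hsnake : IsSnake (.B n ε) w)
    {c : Fin T → ℤˣ → Finset ℕ} (hc : ∀ t, IsColumnCode n (w t).1 (c t)) :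
    codeTableau w c ∈ TabB n (diagOf (.B n ε) w) ↔ c ∈ codeTuples n w := by
  have hrow (t : Fin T) (h : (t : ℕ) + 1 < T) := codeAbove_iff_forall_rowLE (hw t) (hw ⟨t + 1, h⟩)
    (hsnake.2 t h) (hc t) (hc _) t
  rw [mem_TabB_iff hw hsnake, and_iff_right fun q => codeTableau_eq_zero hw c, and_iff_right,
    codeTuples, Set.mem_ofPred_eq, and_iff_right hc]
  · refine forall₂_congr fun t h => Iff.trans ?_ (hrow t h).symm
    refine forall₃_congr fun s hs hs' => ?_
    rw [codeTableau_apply, codeTableau_apply w c s ⟨t + 1, h⟩]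
  · intro t
    rw [codeTableau_column]
    exact isColumn_columnLetter (hc t)

theorem bijOn_codeTableau (hw : ∀ t, w t ∈ Xp (.B n ε)) (hsnake : IsSnake (.B n ε) w) :
    Set.BijOn (codeTableau w) (codeTuples n w) (TabB n (diagOf (.B n ε) w)) := by
  refine ⟨fun c hc => (codeTableau_mem_TabB_iff hw hsnake hc.1).mpr hc, ?_, ?_⟩
  · intro c hc c' hc' h
    funext t
    refine code_eq_of_columnLetter_eq (hc.1 t) (hc'.1 t) ?_
    rw [← codeTableau_column, ← codeTableau_column, h]
  · intro f hf
    obtain ⟨hzero, hcol, -⟩ := (mem_TabB_iff hw hsnake).mp hf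
    choose c hc hfc using fun t => (hcol t).exists_code
    obtain rfl : codeTableau w c = f := by
      funext ⟨s, u⟩
      by_cases hq : (s, u) ∈ diagOf (.B n ε) w
      · obtain ⟨t, rfl, -⟩ := id hq
        have hs := (mem_diagOf_iff hw s t).mp hq
        have := hfc t (s - columnTop (w t) t) (by omega) (by omega)
        rw [codeTableau_apply, ← this, add_sub_cancel]
      · rw [hzero _ hq, codeTableau_eq_zero hw c hq]
    exact ⟨c, (codeTableau_mem_TabB_iff hw hsnake hc).mp hf, rfl⟩

end CodeTableau

section PathMonomial

/-- The index in a path of `𝒫_{i,k}` of the `r`-th point of its half of sign `σ`. -/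
def codePos (n : ℕ) (σ : ℤˣ) (r : ℕ) : ℕ := if σ = 1 then r else 2 * n + 1 - r

/-- The exponent with which the upper (`true`) and lower (`false`) corners enter the monomial. -/
def cornerSign (up : Bool) : ℤˣ := if up then 1 else -1

/-- The contribution to `m(p)` of the half of sign `σ` of a path `p`. -/
def halfMonomial (n : ℕ) (σ : ℤˣ) (a : ℤ) (S : Finset ℕ) : (ℕ × ℤ) → ℤ :=
  (∑ r ∈ Ico 1 n, ((σ : ℤ) * ((if r ∈ S then 1 else 0) - if r + 1 ∈ S then 1 else 0)) •
    Y (r, halfHeight σ a S r)) +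
    (stepSign σ S n : ℤ) • Y (n, halfHeight σ a S n + stepSign σ S n)

variable {n r j : ℕ} {ε : ℝ} {σ σ' τ : ℤˣ} {a l : ℤ} {S : Finset ℕ} {x : ℕ × ℤ}
  {c : ℤˣ → Finset ℕ}

lemma length_codePath : (codePath n ε x c).length = 2 * n + 2 := by
  rw [codePath, List.length_append, List.length_reverse, length_halfPath, length_halfPath]
  ring

lemma pt_codePath (hr : r ≤ n) :
    pt (codePath n ε x c) (codePos n σ r) = codePoint n ε x c σ r := by
  rcases Int.units_eq_one_or σ with rfl | rfl
  · rw [codePos, if_pos rfl, pt, codePath,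
      List.getD_append _ _ _ _ (by rw [length_halfPath]; omega)]
    exact pt_halfPath hr
  · rw [codePos, if_neg (by decide), pt, codePath,
      List.getD_append_right _ _ _ _ (by rw [length_halfPath]; omega), length_halfPath,
      List.getD_reverse _ (by rw [length_halfPath]; omega), length_halfPath,
      show n + 1 - 1 - (2 * n + 1 - r - (n + 1)) = r by omega]
    exact pt_halfPath hr

lemma exists_codePos_eq {q : ℕ} (hq : q < 2 * n + 2) : ∃ σ, ∃ r ≤ n, codePos n σ r = q := by
  rcases Nat.lt_or_ge q (n + 1) with h | h
  · exact ⟨1, q, by omega, if_pos rfl⟩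
  · exact ⟨-1, 2 * n + 1 - q, by omega, (if_neg (by decide)).trans (by omega)⟩

lemma iotaB_eq_halfX (hr : r < n) (hl : l % 4 = (2 * r + 1 + σ) % 4) :
    iotaB n (r, l) = (halfX n σ r, l) := by
  have hside : (2 * (n : ℤ) + l - 2 * r) % 4 = 2 ↔ side n σ = 1 := by
    rcases Nat.even_or_odd' n with ⟨m, rfl | rfl⟩ <;>
      rcases Int.units_eq_one_or σ with rfl | rfl <;> simp [side, pow_succ] at hl ⊢ <;> omega
  simp only [iotaB, if_neg hr.ne, hside, halfX_of_lt hr]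
  split_ifs <;> rfl

lemma exists_sign_of_even (r : ℕ) (hl : l % 2 = 0) : ∃ σ : ℤˣ, l % 4 = (2 * r + 1 + σ) % 4 := by
  by_cases h : l % 4 = (2 * r + 2) % 4
  · exact ⟨1, by push_cast; omega⟩
  · exact ⟨-1, by push_cast; omega⟩

lemma corner_codePos_iff (hε : 0 < ε) (hr : 1 ≤ r) (hrn : r < n) (up : Bool) :
    (if up then (pt (codePath n ε x c) (codePos n σ r)).2 <
          (pt (codePath n ε x c) (codePos n σ r - 1)).2 ∧
        (pt (codePath n ε x c) (codePos n σ r)).2 <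
          (pt (codePath n ε x c) (codePos n σ r + 1)).2
      else (pt (codePath n ε x c) (codePos n σ r - 1)).2 <
          (pt (codePath n ε x c) (codePos n σ r)).2 ∧
        (pt (codePath n ε x c) (codePos n σ r + 1)).2 <
          (pt (codePath n ε x c) (codePos n σ r)).2) ↔
      stepSign σ (c σ) r = cornerSign up ∧ stepSign σ (c σ) (r + 1) = -cornerSign up := by
  obtain ⟨r, rfl⟩ : ∃ s, r = s + 1 := ⟨r - 1, by omega⟩
  have hr' : r < n := (Nat.lt_succ_self r).trans hrn
  have hpt (s : ℕ) (hs : s ≤ n) : pt (codePath n ε x c) (codePos n σ s) =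
      halfPoint n ε σ (halfStart n σ x) (c σ) s := pt_codePath hs
  rcases Int.units_eq_one_or σ with rfl | rfl
  · have hprev : codePos n 1 (r + 1) - 1 = codePos n 1 r := rfl
    have hnext : codePos n 1 (r + 1) + 1 = codePos n 1 (r + 1 + 1) := rfl
    rw [hprev, hnext, hpt r hr'.le, hpt (r + 1) hrn.le, hpt (r + 1 + 1) hrn]
    cases up <;> simp [cornerSign, halfPoint_snd_succ_lt_iff hε, halfPoint_snd_lt_succ_iff hε,
      hrn, hr']
  · have hcodePos (s : ℕ) : codePos n (-1) s = 2 * n + 1 - s := if_neg (by decide)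
    have hprev : codePos n (-1) (r + 1) - 1 = codePos n (-1) (r + 1 + 1) := by
      rw [hcodePos, hcodePos]; omega
    have hnext : codePos n (-1) (r + 1) + 1 = codePos n (-1) r := by
      rw [hcodePos, hcodePos]; omega
    rw [hprev, hnext, hpt r hr'.le, hpt (r + 1) hrn.le, hpt (r + 1 + 1) hrn]
    cases up <;> simp [cornerSign, halfPoint_snd_succ_lt_iff hε, halfPoint_snd_lt_succ_iff hε,
      hrn, hr', and_comm]

lemma mem_Cp_codePath_of_lt_iff (hε : 0 < ε) (hx : x ∈ Xp (.B n ε)) (hj : 1 ≤ j) (hjn : j < n)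
    (up : Bool) : (j, l) ∈ Cp (.B n ε) (codePath n ε x c) up ↔ ∃ σ, l = codeHeight n x c σ j ∧
      stepSign σ (c σ) j = cornerSign up ∧ stepSign σ (c σ) (j + 1) = -cornerSign up := by
  rw [Cp, Set.mem_ofPred_eq, or_iff_left (fun h => hjn.ne h.1), length_codePath]
  constructor
  · rintro ⟨hX, q, -, hq, hpt, -, -, -, hcorner⟩
    obtain ⟨σ, hσ⟩ := exists_sign_of_even j (l := l)
      (by rcases hX with h | h <;> simp at h <;> omega)
    obtain ⟨σ', r, hr, rfl⟩ := exists_codePos_eq (show q < 2 * n + 2 by omega)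
    rw [iotaB_eq_halfX hjn hσ, pt_codePath hr, Prod.ext_iff, codePoint_fst, Int.cast_inj,
      halfX_eq_halfX_iff hr hjn.le] at hpt
    obtain ⟨⟨rfl, hσσ'⟩, hy⟩ := hpt
    obtain rfl := hσσ'.resolve_right hjn.ne
    rw [codePoint_snd_of_lt hjn, Int.cast_inj] at hy
    exact ⟨_, hy.symm, (corner_codePos_iff hε hj hjn up).mp hcorner⟩
  · rintro ⟨σ, rfl, hcorner⟩
    have hmod := codeHeight_emod_four hx c σ j
    have hfst : halfX n σ j ≠ 0 ∧ halfX n σ j ≠ 2 * n - 1 ∧ halfX n σ j ≠ 4 * n - 2 := by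
      rw [halfX_of_lt hjn]
      split_ifs <;> omega
    refine ⟨Or.inr ⟨hj, hjn, ?_⟩, codePos n σ j, ?_, ?_, ?_, ?_⟩
    · rcases Int.units_eq_one_or σ with rfl | rfl <;> push_cast at hmod ⊢ <;> omega
    · rw [codePos]; split_ifs <;> omega
    · rw [codePos]; split_ifs <;> omega
    · rw [pt_codePath hjn.le, iotaB_eq_halfX hjn hmod]
      exact Prod.ext rfl (codePoint_snd_of_lt hjn)
    · rw [iotaB_eq_halfX hjn hmod]
      exact ⟨hfst.1, hfst.2.1, hfst.2.2, (corner_codePos_iff hε hj hjn up).mpr hcorner⟩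

lemma intCast_ne_two_mul (hε : 0 < ε ∧ ε < 1 / 2) (m : ℤ) : (m : ℝ) ≠ 2 * ε := by
  intro h
  have hpos : (0 : ℝ) < m := by linarith
  have hlt : (m : ℝ) < 1 := by linarith
  norm_cast at hpos hlt
  omega

lemma middle_mem_codePath_iff (hε : 0 < ε ∧ ε < 1 / 2) (τ : ℤˣ) :
    ((2 * n - 1, l - (τ : ℤ) * ε) : ℝ × ℝ) ∈ codePath n ε x c ↔
      ∃ σ, stepSign σ (c σ) n = τ ∧ l = codeHeight n x c σ n + τ := by
  have hX (σ : ℤˣ) : ((halfX n σ n : ℤ) : ℝ) = 2 * n - 1 := by rw [halfX_self]; push_cast; rfl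
  rw [mem_codePath_iff]
  refine exists_congr fun σ => ⟨?_, ?_⟩
  · rintro ⟨r, hr, hpt⟩
    obtain ⟨hfst, hsnd⟩ := Prod.ext_iff.mp hpt
    rw [codePoint_fst, ← hX σ, Int.cast_inj, halfX_eq_halfX_iff le_rfl hr] at hfst
    obtain ⟨rfl, -⟩ := hfst
    rw [codePoint_snd_self] at hsnd
    have hl := intCast_ne_two_mul hε (l - codeHeight n x c σ n + 1)
    have hl' := intCast_ne_two_mul hε (codeHeight n x c σ n + 1 - l)
    rw [← Int.cast_inj (α := ℝ)]
    generalize stepSign σ (c σ) n = δ at hsnd ⊢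
    rcases Int.units_eq_one_or δ with rfl | rfl <;> rcases Int.units_eq_one_or τ with rfl | rfl <;>
      push_cast at hsnd hl hl' ⊢
    · exact ⟨rfl, by linarith⟩
    · exact absurd (by linarith) hl'
    · exact absurd (by linarith) hl
    · exact ⟨rfl, by linarith⟩
  · rintro ⟨rfl, rfl⟩
    refine ⟨n, le_rfl, Prod.ext (hX σ).symm ?_⟩
    rw [codePoint_snd_self]
    push_cast
    ring

lemma mem_Cp_codePath_self_iff (hε : 0 < ε ∧ ε < 1 / 2) (hx : x ∈ Xp (.B n ε)) (up : Bool) :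
    (n, l) ∈ Cp (.B n ε) (codePath n ε x c) up ↔
      (∃ σ, stepSign σ (c σ) n = cornerSign up ∧ l = codeHeight n x c σ n + cornerSign up) ∧
      ¬ ∃ σ, stepSign σ (c σ) n = -cornerSign up ∧
        l = codeHeight n x c σ n + (-cornerSign up : ℤˣ) := by
  have hiota : (iotaB n (n, l)).1 = 2 * (n : ℤ) - 1 := by rw [iotaB, if_pos rfl]
  have hXB (h : ∃ σ, stepSign σ (c σ) n = cornerSign up ∧
      l = codeHeight n x c σ n + cornerSign up) : (n, l) ∈ XB n := by
    obtain ⟨σ, -, rfl⟩ := h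
    have hmod := codeHeight_emod_four hx c σ n
    left
    rcases Int.units_eq_one_or σ with rfl | rfl <;>
      rcases Int.units_eq_one_or (cornerSign up) with h | h <;> rw [h] <;> push_cast at hmod ⊢ <;>
      omega
  rw [Cp, Set.mem_ofPred_eq, or_iff_right (fun ⟨_, _, _, _, _, h, _⟩ => h hiota),
    and_iff_right_of_imp (fun h => hXB ?_)]
  · rw [← middle_mem_codePath_iff hε, ← middle_mem_codePath_iff hε]
    cases up <;> simp [cornerSign]
  · rw [← middle_mem_codePath_iff hε]
    cases up <;> simpa [cornerSign] using h.2.1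

lemma ind_eq_ite (s : Prop) [Decidable s] : ind s = if s then 1 else 0 := by
  rw [ind]
  congr

lemma ind_and_not_sub (s t : Prop) : ind (s ∧ ¬t) - ind (t ∧ ¬s) = ind s - ind t := by
  classical
  simp only [ind_eq_ite]
  by_cases s <;> by_cases t <;> simp [*]

lemma ind_exists {ι : Type*} [Fintype ι] {s : ι → Prop} (hs : ∀ i j, s i → s j → i = j) :
    ind (∃ i, s i) = ∑ i, ind (s i) := by
  classical
  simp only [ind_eq_ite]
  split_ifs with h
  · obtain ⟨i, hi⟩ := h
    rw [sum_eq_single i (fun j _ hj => if_neg fun h => hj (hs j i h hi)) (by simp), if_pos hi]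
  · exact (sum_eq_zero fun i _ => if_neg fun hi => h ⟨i, hi⟩).symm

lemma halfMonomial_apply_of_lt (hj : 1 ≤ j) (hjn : j < n) :
    halfMonomial n σ a S (j, l) = if l = halfHeight σ a S j then
      (σ : ℤ) * ((if j ∈ S then 1 else 0) - if j + 1 ∈ S then 1 else 0) else 0 := by
  simp only [halfMonomial, Pi.add_apply, Finset.sum_apply, Pi.smul_apply, Y, Prod.mk.injEq, hjn.ne,
    false_and, if_false, add_zero, smul_eq_mul, mul_ite, mul_one, mul_zero]
  rw [sum_eq_single j]
  · simp
  · intro r _ hr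
    simp [hr.symm]
  · intro h
    simp [hj, hjn] at h

lemma halfMonomial_apply_self : halfMonomial n σ a S (n, l) =
    if l = halfHeight σ a S n + stepSign σ S n then (stepSign σ S n : ℤ) else 0 := by
  simp only [halfMonomial, Pi.add_apply, Finset.sum_apply, Pi.smul_apply, Y, Prod.mk.injEq,
    true_and, smul_eq_mul, mul_ite, mul_one, mul_zero]
  rw [sum_eq_zero, zero_add]
  intro r hr
  rw [if_neg fun h => (mem_Ico.mp hr).2.ne h.1.symm]

lemma halfMonomial_apply_eq_zero (hn : 1 ≤ n) (hj : j = 0 ∨ n < j) :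
    halfMonomial n σ a S (j, l) = 0 := by
  simp only [halfMonomial, Pi.add_apply, Finset.sum_apply, Pi.smul_apply, Y, Prod.mk.injEq]
  rw [sum_eq_zero, zero_add, if_neg (by omega), smul_zero]
  intro r hr
  have := mem_Ico.mp hr
  rw [if_neg (c := j = r ∧ _) (by omega), smul_zero]

lemma mon_codePath_apply_of_lt (hε : 0 < ε) (hx : x ∈ Xp (.B n ε)) (hj : 1 ≤ j) (hjn : j < n) :
    mon (.B n ε) (codePath n ε x c) (j, l) =
      ∑ σ, halfMonomial n σ (halfStart n σ x) (c σ) (j, l) := by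
  have huniq (s : ℤˣ → Prop) (σ σ' : ℤˣ) (h : l = codeHeight n x c σ j ∧ s σ)
      (h' : l = codeHeight n x c σ' j ∧ s σ') : σ = σ' := by
    by_contra hne
    exact codeHeight_ne_of_sign_ne hx hx hne (h.1.symm.trans h'.1)
  simp only [mon, mem_Cp_codePath_of_lt_iff hε hx hj hjn]
  rw [ind_exists (huniq _), ind_exists (huniq _), ← sum_sub_distrib]
  refine sum_congr rfl fun σ _ => ?_
  rw [halfMonomial_apply_of_lt hj hjn, ind_eq_ite, ind_eq_ite, codeHeight]
  by_cases hl : l = halfHeight σ (halfStart n σ x) (c σ) j <;>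
    by_cases h : j ∈ c σ <;> by_cases h' : j + 1 ∈ c σ <;>
    rcases Int.units_eq_one_or σ with rfl | rfl <;> simp [cornerSign, stepSign, hl, h, h']

lemma mon_codePath_apply_self (hε : 0 < ε ∧ ε < 1 / 2) (hx : x ∈ Xp (.B n ε)) :
    mon (.B n ε) (codePath n ε x c) (n, l) =
      ∑ σ, halfMonomial n σ (halfStart n σ x) (c σ) (n, l) := by
  have huniq (τ σ σ' : ℤˣ) (h : stepSign σ (c σ) n = τ ∧ l = codeHeight n x c σ n + τ)
      (h' : stepSign σ' (c σ') n = τ ∧ l = codeHeight n x c σ' n + τ) : σ = σ' := by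
    by_contra hne
    exact codeHeight_ne_of_sign_ne hx hx hne (add_right_cancel (h.2.symm.trans h'.2))
  simp only [mon, mem_Cp_codePath_self_iff hε hx]
  have hneg : -cornerSign false = cornerSign true := rfl
  have hneg' : -cornerSign true = cornerSign false := rfl
  rw [hneg, hneg', ind_and_not_sub, ind_exists (huniq _), ind_exists (huniq _), ← sum_sub_distrib]
  refine sum_congr rfl fun σ _ => ?_
  rw [halfMonomial_apply_self, ind_eq_ite, ind_eq_ite, codeHeight]
  by_cases hl : l = halfHeight σ (halfStart n σ x) (c σ) n + stepSign σ (c σ) n <;>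
    rcases Int.units_eq_one_or (stepSign σ (c σ) n) with h | h <;> rw [h] at hl ⊢ <;>
    push_cast at hl <;>
    simp [cornerSign, hl]

theorem mon_codePath (hε : 0 < ε ∧ ε < 1 / 2) (hx : x ∈ Xp (.B n ε)) (c : ℤˣ → Finset ℕ) :
    mon (.B n ε) (codePath n ε x c) = ∑ σ, halfMonomial n σ (halfStart n σ x) (c σ) := by
  obtain ⟨hx₁, hxn, -⟩ := bounds_of_mem_Xp hx
  funext ⟨j, l⟩
  rw [Finset.sum_apply]
  by_cases hj : j = 0 ∨ n < j
  · have hCp (up : Bool) : (j, l) ∉ Cp (.B n ε) (codePath n ε x c) up := by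
      rintro ⟨⟨h, -⟩ | ⟨h, h', -⟩, -⟩ <;> simp only at * <;> omega
    rw [sum_eq_zero fun σ _ => halfMonomial_apply_eq_zero (by omega) hj, mon]
    simp [hCp]
  · rcases (show j ≤ n by omega).lt_or_eq with hjn | rfl
    · exact mon_codePath_apply_of_lt hε.1 hx (by omega) hjn
    · exact mon_codePath_apply_self hε hx

end PathMonomial

section TableauMonomial

/-- The products of variables whose successive quotients are the box monomials of the letters `r`
(for `σ = 1`) and `r̄` (for `σ = -1`). -/
def boxNode (n : ℕ) (σ : ℤˣ) (a : ℤ) (S : Finset ℕ) (r : ℕ) : (ℕ × ℤ) → ℤ :=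
  if r = 0 then 0
  else if r = n then Y (n, halfHeight σ a S n + σ) + Y (n, halfHeight σ a S n - σ)
  else Y (r, halfHeight σ a S r)

variable {n r T : ℕ} {ε : ℝ} {σ : ℤˣ} {a : ℤ} {S : Finset ℕ} {x : ℕ × ℤ}
  {c : ℤˣ → Finset ℕ}

lemma sum_sub_pred_eq {M : Type*} [AddCommGroup M] (hn : 1 ≤ n) (hS : S ⊆ Icc 1 n) {f : ℕ → M}
    (hf : f 0 = 0) : ∑ r ∈ S, (f r - f (r - 1)) =
      ∑ r ∈ Ico 1 n, ((if r ∈ S then 1 else 0) - if r + 1 ∈ S then 1 else 0 : ℤ) • f r +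
        (if n ∈ S then 1 else 0 : ℤ) • f n := by
  set χ : ℕ → ℤ := fun r => if r ∈ S then 1 else 0
  have hind : ∑ r ∈ S, (f r - f (r - 1)) = ∑ r ∈ Ico 1 (n + 1), χ r • (f r - f (r - 1)) := by
    simp only [χ, ite_smul, one_smul, zero_smul]
    rw [sum_ite_mem, Ico_add_one_right_eq_Icc, inter_eq_right.mpr hS]
  have habel : ∀ m, 1 ≤ m → ∑ r ∈ Ico 1 (m + 1), χ r • (f r - f (r - 1)) =
      ∑ r ∈ Ico 1 m, (χ r - χ (r + 1)) • f r + χ m • f m := by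
    intro m hm
    induction m, hm using Nat.le_induction with
    | base => simp [hf]
    | succ m hm ih =>
      rw [sum_Ico_succ_top (by omega), ih, sum_Ico_succ_top hm, Nat.add_sub_cancel]
      module
  rw [hind, habel n hn]

lemma boxB_letter_of_lt (hr : 1 ≤ r) (hrn : r < n) (σ : ℤˣ) (k : ℤ) :
    boxB n (σ * r) k = (σ : ℤ) • (Y (r, 2 * n - 1 - σ * (2 * n - 2 * r) - σ + k) -
      if r = 1 then 0 else Y (r - 1, 2 * n - 1 - σ * (2 * n - 2 * r) + σ + k)) := by
  rw [boxB]
  rcases Int.units_eq_one_or σ with rfl | rfl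
  · simp only [Units.val_one, one_mul, one_smul]
    rw [if_neg (by omega), if_neg (by omega), if_neg (by omega), if_pos (by omega),
      Int.toNat_natCast]
    simp only [Nat.cast_eq_one]
    ring_nf
  · simp only [Units.val_neg, Units.val_one, neg_mul, one_mul, neg_smul, one_smul, neg_sub]
    rw [if_neg (by omega), if_neg (by omega), if_neg (by omega), if_neg (by omega), neg_neg,
      Int.toNat_natCast]
    simp only [neg_inj, Nat.cast_eq_one]
    ring_nf

lemma boxB_letter_self (hn : 1 ≤ n) (σ : ℤˣ) (k : ℤ) :
    boxB n (σ * n) k = (σ : ℤ) • (Y (n, 2 * n - 1 - σ - σ + k) + Y (n, 2 * n - 1 + k) -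
      Y (n - 1, 2 * n - 1 + σ + k)) := by
  rw [boxB]
  rcases Int.units_eq_one_or σ with rfl | rfl
  · simp only [Units.val_one, one_mul, one_smul]
    rw [if_neg (by omega), if_pos trivial]
    ring_nf
  · simp only [Units.val_neg, Units.val_one, neg_mul, one_mul, neg_smul, one_smul, neg_sub]
    rw [if_neg (by omega), if_neg (by omega), if_pos trivial]
    ring_nf

lemma boxB_eq_boxNode_sub (hn : 2 ≤ n) (hS : S ⊆ Icc 1 n) (hr : r ∈ S) :
    boxB n (σ * r) (x.2 + σ * (2 * x.1 - 2 - 4 * Nat.count (· ∈ S) r)) =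
      (σ : ℤ) • (boxNode n σ (halfStart n σ x) S r -
        boxNode n σ (halfStart n σ x) S (r - 1)) := by
  obtain ⟨hr₁, hrn⟩ := mem_Icc.mp (hS hr)
  set k : ℤ := x.2 + σ * (2 * x.1 - 2 - 4 * Nat.count (· ∈ S) r) with hk
  have hheight : halfHeight σ (halfStart n σ x) S r =
      2 * n - 1 - σ * (2 * n - 2 * r) - σ + k := by
    rw [halfHeight, halfStart, countLE_of_mem hr, hk]
    push_cast
    ring
  have hheight' : halfHeight σ (halfStart n σ x) S (r - 1) =
      2 * n - 1 - σ * (2 * n - 2 * r) + σ + k := by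
    rw [halfHeight, halfStart, countLE, Nat.sub_add_cancel hr₁, hk]
    push_cast [hr₁]
    ring
  rw [boxNode, boxNode, if_neg (show r ≠ 0 by omega), if_neg (show r - 1 ≠ n by omega), hheight']
  rcases hrn.lt_or_eq with hrn | rfl
  · rw [boxB_letter_of_lt hr₁ hrn, if_neg hrn.ne, hheight]
    congr 2
    exact if_congr (by omega) rfl rfl
  · rw [boxB_letter_self hr₁, if_pos rfl, if_neg (by omega), hheight]
    ring_nf

lemma sum_boxB_eq (hn : 2 ≤ n) (hS : S ⊆ Icc 1 n) (σ : ℤˣ) (x : ℕ × ℤ) :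
    ∑ r ∈ S, boxB n (σ * r) (x.2 + σ * (2 * x.1 - 2 - 4 * Nat.count (· ∈ S) r)) =
      halfMonomial n σ (halfStart n σ x) S +
        (σ : ℤ) • Y (n, halfHeight σ (halfStart n σ x) S n - σ) := by
  have hnode : ∀ r ∈ Ico 1 n, boxNode n σ (halfStart n σ x) S r =
      Y (r, halfHeight σ (halfStart n σ x) S r) := by
    intro r hr
    have := mem_Ico.mp hr
    rw [boxNode, if_neg (by omega), if_neg (by omega)]
  have hzero : boxNode n σ (halfStart n σ x) S 0 = 0 := if_pos rfl
  rw [sum_congr rfl fun r hr => boxB_eq_boxNode_sub hn hS hr, ← smul_sum,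
    sum_sub_pred_eq (by omega) hS hzero, halfMonomial, smul_add, smul_sum,
    sum_congr rfl fun r hr => by rw [hnode r hr, smul_smul], add_assoc, add_right_inj,
    boxNode, if_neg (show n ≠ 0 by omega), if_pos rfl, stepSign]
  split_ifs
  · module
  · rw [Units.val_neg, ← sub_eq_add_neg]
    module

lemma sum_range_boxB_zero (n z : ℕ) (b : ℤ) :
    ∑ j ∈ range z, boxB n 0 (b - 4 * j) =
      Y (n, 2 * n + 1 + b - 4 * z) - Y (n, 2 * n + 1 + b) := by
  have hbox : ∀ j : ℕ, boxB n 0 (b - 4 * j) =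
      Y (n, 2 * n + 1 + b - 4 * (j + 1 : ℕ)) - Y (n, 2 * n + 1 + b - 4 * j) := by
    intro j
    rw [boxB, if_pos rfl]
    push_cast
    ring_nf
  rw [sum_congr rfl fun j _ => hbox j, sum_range_sub fun j : ℕ => Y (n, 2 * n + 1 + b - 4 * j)]
  simp

lemma sum_boxB_unbarred (hn : 2 ≤ n) (hc : IsColumnCode n x.1 c) :
    ∑ j ∈ range #(c 1), boxB n (columnLetter x.1 c j) (x.2 + 2 * x.1 - 2 - 4 * j) =
      halfMonomial n 1 (halfStart n 1 x) (c 1) +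
        Y (n, halfHeight 1 (halfStart n 1 x) (c 1) n - 1) := by
  have hhalf := sum_boxB_eq hn (hc.subset_Icc 1) 1 x
  rw [← sum_range_nth (c 1) fun r m =>
    boxB n ((1 : ℤˣ) * r) (x.2 + (1 : ℤˣ) * (2 * x.1 - 2 - 4 * m))] at hhalf
  simp only [Units.val_one, one_mul, one_smul] at hhalf
  rw [← hhalf]
  refine sum_congr rfl fun j hj => ?_
  have hj := mem_range.mp hj
  have hcard := hc.card_le
  rw [columnLetter, if_neg (by omega), if_pos (by omega), Int.toNat_natCast]
  ring_nf

lemma sum_boxB_barred (hn : 2 ≤ n) (hc : IsColumnCode n x.1 c) :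
    ∑ j ∈ range #(c (-1)), boxB n (columnLetter x.1 c (x.1 - 1 - j))
        (x.2 + 2 * x.1 - 2 - 4 * (x.1 - 1 - j)) =
      halfMonomial n (-1) (halfStart n (-1) x) (c (-1)) -
        Y (n, halfHeight (-1) (halfStart n (-1) x) (c (-1)) n + 1) := by
  have hhalf := sum_boxB_eq hn (hc.subset_Icc (-1)) (-1) x
  rw [← sum_range_nth (c (-1)) fun r m =>
    boxB n ((-1 : ℤˣ) * r) (x.2 + (-1 : ℤˣ) * (2 * x.1 - 2 - 4 * m))] at hhalf
  simp only [Units.val_neg, Units.val_one, neg_mul, one_mul, neg_smul, one_smul, sub_neg_eq_add,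
    ← sub_eq_add_neg] at hhalf
  rw [← hhalf]
  refine sum_congr rfl fun j hj => ?_
  have hj := mem_range.mp hj
  have hcard := hc.card_le
  rw [columnLetter, if_neg (by omega), if_neg (by omega), if_neg (by omega), sub_sub_cancel,
    Int.toNat_natCast]
  ring_nf

lemma sum_boxB_zeros {z : ℕ} (hS : ∀ σ, c σ ⊆ Icc 1 n) (hz : x.1 = #(c 1) + z + #(c (-1))) :
    ∑ j ∈ range z, boxB n (columnLetter x.1 c (#(c 1) + j))
        (x.2 + 2 * x.1 - 2 - 4 * (#(c 1) + j)) =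
      Y (n, halfHeight (-1) (halfStart n (-1) x) (c (-1)) n + 1) -
        Y (n, halfHeight 1 (halfStart n 1 x) (c 1) n - 1) := by
  have htelescope := sum_range_boxB_zero n z (x.2 + 2 * x.1 - 2 - 4 * #(c 1))
  have htop : halfHeight 1 (halfStart n 1 x) (c 1) n - 1 =
      2 * n + 1 + (x.2 + 2 * x.1 - 2 - 4 * #(c 1)) := by
    rw [halfHeight, halfStart, countLE_eq_card (hS 1)]
    push_cast
    ring
  have hbot : halfHeight (-1) (halfStart n (-1) x) (c (-1)) n + 1 =
      2 * n + 1 + (x.2 + 2 * x.1 - 2 - 4 * #(c 1)) - 4 * z := by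
    rw [halfHeight, halfStart, countLE_eq_card (hS (-1)), hz]
    push_cast
    ring
  rw [htop, hbot, ← htelescope]
  refine sum_congr rfl fun j hj => ?_
  have hj := mem_range.mp hj
  rw [columnLetter, if_neg (by omega), if_neg (by omega), if_pos (by omega)]
  ring_nf

lemma sum_boxB_columnLetter (hn : 2 ≤ n) (hc : IsColumnCode n x.1 c) :
    ∑ j ∈ range x.1, boxB n (columnLetter x.1 c j) (x.2 + 2 * x.1 - 2 - 4 * j) =
      ∑ σ, halfMonomial n σ (halfStart n σ x) (c σ) := by
  obtain ⟨z, hz⟩ : ∃ z, x.1 = #(c 1) + z + #(c (-1)) :=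
    ⟨x.1 - #(c 1) - #(c (-1)), by have := hc.card_le; omega⟩
  set box : ℕ → (ℕ × ℤ) → ℤ := fun j =>
    boxB n (columnLetter x.1 c j) (x.2 + 2 * x.1 - 2 - 4 * j)
  have hunbarred : ∑ j ∈ range #(c 1), box j =
      halfMonomial n 1 (halfStart n 1 x) (c 1) +
        Y (n, halfHeight 1 (halfStart n 1 x) (c 1) n - 1) := sum_boxB_unbarred hn hc
  have hzeros : ∑ j ∈ range z, box (#(c 1) + j) =
      Y (n, halfHeight (-1) (halfStart n (-1) x) (c (-1)) n + 1) -
        Y (n, halfHeight 1 (halfStart n 1 x) (c 1) n - 1) := by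
    simpa only [box, Nat.cast_add] using sum_boxB_zeros hc.subset_Icc hz
  have hbarred : ∑ j ∈ range #(c (-1)), box (#(c 1) + z + j) =
      halfMonomial n (-1) (halfStart n (-1) x) (c (-1)) -
        Y (n, halfHeight (-1) (halfStart n (-1) x) (c (-1)) n + 1) := by
    rw [← sum_range_reflect, ← sum_boxB_barred hn hc]
    refine sum_congr rfl fun j hj => ?_
    have hj := mem_range.mp hj
    have hrow : ((#(c 1) + z + (#(c (-1)) - 1 - j) : ℕ) : ℤ) = x.1 - 1 - j := by omega
    simp only [box, hrow]
  have huniv : (univ : Finset ℤˣ) = {1, -1} := rfl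
  calc ∑ j ∈ range x.1, box j = ∑ j ∈ range (#(c 1) + z + #(c (-1))), box j := by rw [← hz]
    _ = halfMonomial n 1 (halfStart n 1 x) (c 1) +
        halfMonomial n (-1) (halfStart n (-1) x) (c (-1)) := by
      rw [sum_range_add, sum_range_add, hunbarred, hzeros, hbarred]
      abel
    _ = ∑ σ, halfMonomial n σ (halfStart n σ x) (c σ) := by
      rw [huniv, sum_pair (by decide)]

theorem MtabB_codeTableau {w : Fin T → ℕ × ℤ} (hw : ∀ t, w t ∈ Xp (.B n ε))
    {c : Fin T → ℤˣ → Finset ℕ} (hc : ∀ t, IsColumnCode n (w t).1 (c t)) :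
    MtabB n (diagOf (.B n ε) w) (codeTableau w c) =
      ∑ t, ∑ σ, halfMonomial n σ (halfStart n σ (w t)) (c t σ) := by
  set box : (Σ _ : Fin T, ℕ) → ℤ × ℤ := fun q => (columnTop (w q.1) q.1 + q.2, (q.1 : ℤ) + 1)
  have hbox : Function.Injective box := by
    rintro ⟨t, j⟩ ⟨t', j'⟩ h
    obtain ⟨hrow, hcol⟩ := Prod.mk.inj h
    obtain rfl : t = t' := Fin.ext (by simpa using hcol)
    simpa using hrow
  have hdiag : diagOf (.B n ε) w =
      ((univ.sigma fun t => range (w t).1).image box : Finset (ℤ × ℤ)) := by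
    ext ⟨s, u⟩
    simp only [coe_image, Set.mem_image, mem_coe, mem_sigma, mem_univ, true_and, mem_range, box,
      Prod.mk.injEq]
    constructor
    · intro hmem
      obtain ⟨t, rfl, -⟩ := id hmem
      have := (mem_diagOf_iff hw s t).mp hmem
      exact ⟨⟨t, (s - columnTop (w t) t).toNat⟩, by dsimp only; omega, by dsimp only; omega, rfl⟩
    · rintro ⟨⟨t, j⟩, hj, rfl, rfl⟩
      exact (mem_diagOf_iff hw _ t).mpr (by dsimp only at hj ⊢; omega)
  rw [MtabB, hdiag, finsum_mem_coe_finset, sum_image hbox.injOn, sum_sigma]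
  refine sum_congr rfl fun t _ => ?_
  obtain ⟨hi, hin, -⟩ := bounds_of_mem_Xp (hw t)
  rw [← sum_boxB_columnLetter (by omega) (hc t)]
  refine sum_congr rfl fun j _ => ?_
  have htop := four_mul_columnTop (hw t) t
  rw [codeTableau_apply, add_sub_cancel_left]
  congr 1
  linarith

end TableauMonomial

end

/-- type B: for a snake in type `B_N` with all elements in `X'` and associated
skew diagram `D`, there is a bijection between the set `𝒫̄` of non-overlapping tuples of
paths and the set of type B skew tableaux of shape `D`, under which a tuple `(p_t)`
corresponds to a tableau `𝒯` with `∏_t m(p_t) = M(𝒯)`. -/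
theorem stmt16 (n : ℕ) (hn : 2 ≤ n) (ε : ℝ) (hε : 0 < ε ∧ ε < 1 / 2) {T : ℕ} (hT : 1 ≤ T)
    (w : Fin T → ℕ × ℤ) (hw : IsSnake (Setting.B n ε) w)
    (hw' : ∀ t, w t ∈ Xp (Setting.B n ε)) :
    ∃ Φ : (Fin T → List (ℝ × ℝ)) → (ℤ × ℤ → ℤ),
      Set.BijOn Φ (PBar (Setting.B n ε) w) (TabB n (diagOf (Setting.B n ε) w)) ∧
      ∀ ps ∈ PBar (Setting.B n ε) w,
        tmon (Setting.B n ε) ps = MtabB n (diagOf (Setting.B n ε) w) (Φ ps) := by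
  have hpaths := bijOn_codePaths hε hw'
  have hinv := hpaths.invOn_invFunOn
  have hcodes := hpaths.symm hinv.symm
  refine ⟨codeTableau w ∘ Function.invFunOn (codePaths n ε w) (codeTuples n w),
    (bijOn_codeTableau hw' hw).comp hcodes, fun ps hps => ?_⟩
  set c := Function.invFunOn (codePaths n ε w) (codeTuples n w) ps
  have hps_eq : codePaths n ε w c = ps := hinv.2 hps
  calc tmon (.B n ε) ps = ∑ t, mon (.B n ε) (codePath n ε (w t) (c t)) := by rw [← hps_eq]; rfl
    _ = ∑ t, ∑ σ, halfMonomial n σ (halfStart n σ (w t)) (c t σ) :=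
      Finset.sum_congr rfl fun t _ => mon_codePath hε (hw' t) (c t)
    _ = MtabB n (diagOf (.B n ε) w) (codeTableau w c) :=
      (MtabB_codeTableau hw' (hcodes.mapsTo hps).1).symm

end Paper
end

section
/- Let the setting be type A_N or type B_N, let (i,k) ∈ X and p ∈ P_{i,k}, and let (j,ℓ) ∈ W. Then p can be raised at (j,ℓ), i.e. there exists p′ ∈ P_{i,k} with p = p′𝒜_{j,ℓ}⁻¹, if and only if (j,ℓ+r_j) ∈ C_{p,−} and (j,ℓ−r_j) ∉ C_{p,−}; moreover such p′, when it exists, is unique. -/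
namespace Paper

/-!
Every move reflects a block of consecutive points of the path in the horizontal line at height `l`;
the block consists of one point, or of two when `j = N - 1` in type B. Since the slopes of a path
are prescribed up to sign, the reflected sequence is again a path iff the points next to the block
lie on that line, and this is what the corner conditions express. So the condition for a move to be
allowed on `p` is equivalent to the existence of a path obtained from `p` by that move, for raising
as well as for lowering. As a reflection is an involution that exchanges the two kinds of moves, a
path `p'` with `p = p'𝒜_{j,l}⁻¹` is the same as a path obtained from `p` by a raising move. It is
unique because the points of a path are distinct, so that the block is determined by its position.

In type B a path in `𝒫_{i,k}` with `i < N` consists of two paths of spin type whose heights in a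
common column other than the middle one differ by `2 (mod 4)`. Hence the strand to which a corner
belongs can be read off from its height. The reflection must also preserve the order of the two end
points in the middle column, and this is the purpose of the condition that excludes a second corner.
-/

section Lists

variable {p p' p'' : List (ℝ × ℝ)} {q q₁ q₂ : ℝ × ℝ} {c c₁ c₂ l a a₁ a₂ : ℝ} {r : ℕ}

theorem pt_eq_getElem (hr : r < p.length) : pt p r = p[r] :=
  List.getD_eq_getElem _ _ hr

theorem mem_iff_exists_pt_eq : q ∈ p ↔ ∃ r < p.length, pt p r = q := by
  rw [List.mem_iff_getElem]
  exact ⟨fun ⟨r, hr, h⟩ ↦ ⟨r, hr, (pt_eq_getElem hr).trans h⟩,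
    fun ⟨r, hr, h⟩ ↦ ⟨r, hr, (pt_eq_getElem hr).symm.trans h⟩⟩

theorem ext_pt (hlen : p.length = p'.length) (h : ∀ r < p.length, pt p r = pt p' r) : p = p' :=
  List.ext_getElem hlen fun r hr hr' ↦ by
    rw [← pt_eq_getElem hr, ← pt_eq_getElem hr', h r hr]

/-- The reflection of a point of the plane in the horizontal line at height `l`. -/
def reflectPt (l : ℝ) (q : ℝ × ℝ) : ℝ × ℝ := (q.1, 2 * l - q.2)

/-- The path obtained from `p` by reflecting the points with index in `T` in the horizontal line
at height `l`. All lowering and raising moves are of this form. -/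
def reflectAt (T : Finset ℕ) (l : ℝ) (p : List (ℝ × ℝ)) : List (ℝ × ℝ) :=
  p.mapIdx fun r q ↦ if r ∈ T then reflectPt l q else q

@[simp]
theorem length_reflectAt (T : Finset ℕ) (l : ℝ) (p : List (ℝ × ℝ)) :
    (reflectAt T l p).length = p.length :=
  List.length_mapIdx

theorem pt_reflectAt (T : Finset ℕ) (hr : r < p.length) :
    pt (reflectAt T l p) r = if r ∈ T then reflectPt l (pt p r) else pt p r := by
  rw [pt_eq_getElem (by simpa using hr), pt_eq_getElem hr]
  exact List.getElem_mapIdx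

theorem reflectPt_sub : reflectPt l (c, l - a) = (c, l + a) :=
  Prod.ext rfl (by simp only [reflectPt]; ring)

theorem abs_reflect_sub_reflect {q q' : ℝ × ℝ} {A B : Prop} [Decidable A] [Decidable B]
    (hA : A → ¬B → q'.2 = l) (hB : B → ¬A → q.2 = l) :
    |(if B then reflectPt l q' else q').2 - (if A then reflectPt l q else q).2| =
      |q'.2 - q.2| := by
  rw [abs_eq_abs]
  split_ifs with hb ha ha <;> simp only [reflectPt]
  · right; ring
  · right; linarith [hB hb ha]
  · right; linarith [hA ha hb]
  · left; trivial

theorem eq_of_abs_reflect_sub_eq {x y : ℝ} (hy : y ≠ l) (h : |2 * l - y - x| = |y - x|) :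
    x = l := by
  rcases abs_eq_abs.1 h with h | h
  · exact absurd (by linarith) hy
  · linarith

theorem replace1_iff_exists_reflectAt :
    Replace1 p p' (c, l - a) (c, l + a) ↔
      ∃ r < p.length, pt p r = (c, l - a) ∧ p' = reflectAt {r} l p := by
  constructor
  · rintro ⟨r, hr, hq, hlen, hq', hother⟩
    refine ⟨r, hr, hq, ext_pt (by simpa using hlen) fun t ht ↦ ?_⟩
    rw [hlen] at ht
    rw [pt_reflectAt _ ht]
    split_ifs with h
    · rw [Finset.mem_singleton.1 h, hq', hq, reflectPt_sub]
    · exact hother t ht (by simpa using h)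
  · rintro ⟨r, hr, hq, rfl⟩
    refine ⟨r, hr, hq, length_reflectAt .., ?_, fun t ht hne ↦ ?_⟩
    · rw [pt_reflectAt _ hr, if_pos (Finset.mem_singleton_self r), hq, reflectPt_sub]
    · rw [pt_reflectAt _ ht, if_neg (by simpa using hne)]

theorem replace2_iff_exists_reflectAt :
    Replace2 p p' (c₁, l - a₁) (c₁, l + a₁) (c₂, l - a₂) (c₂, l + a₂) ↔
      ∃ r s, r < p.length ∧ s < p.length ∧ r ≠ s ∧ pt p r = (c₁, l - a₁) ∧
        pt p s = (c₂, l - a₂) ∧ p' = reflectAt {r, s} l p := by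
  constructor
  · rintro ⟨r, s, hr, hs, hrs, hq₁, hq₂, hlen, hq₁', hq₂', hother⟩
    refine ⟨r, s, hr, hs, hrs, hq₁, hq₂, ext_pt (by simpa using hlen) fun t ht ↦ ?_⟩
    rw [hlen] at ht
    rw [pt_reflectAt _ ht]
    split_ifs with h
    · rcases Finset.mem_insert.1 h with rfl | h
      · rw [hq₁', hq₁, reflectPt_sub]
      · rw [Finset.mem_singleton.1 h, hq₂', hq₂, reflectPt_sub]
    · rw [Finset.mem_insert, Finset.mem_singleton, not_or] at h
      exact hother t ht h.1 h.2
  · rintro ⟨r, s, hr, hs, hrs, hq₁, hq₂, rfl⟩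
    refine ⟨r, s, hr, hs, hrs, hq₁, hq₂, length_reflectAt .., ?_, ?_, fun t ht htr hts ↦ ?_⟩
    · rw [pt_reflectAt _ hr, if_pos (by simp), hq₁, reflectPt_sub]
    · rw [pt_reflectAt _ hs, if_pos (by simp), hq₂, reflectPt_sub]
    · rw [pt_reflectAt _ ht, if_neg (by simp [htr, hts])]

theorem Replace1.symm (h : Replace1 p p' q₁ q₂) : Replace1 p' p q₂ q₁ := by
  obtain ⟨r, hr, hq, hlen, hq', hother⟩ := h
  exact ⟨r, hlen ▸ hr, hq', hlen.symm, hq, fun t ht hne ↦ (hother t (hlen ▸ ht) hne).symm⟩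

theorem Replace2.symm {q₁ q₁' q₂ q₂' : ℝ × ℝ} (h : Replace2 p p' q₁ q₁' q₂ q₂') :
    Replace2 p' p q₁' q₁ q₂' q₂ := by
  obtain ⟨r, s, hr, hs, hrs, hq₁, hq₂, hlen, hq₁', hq₂', hother⟩ := h
  exact ⟨r, s, hlen ▸ hr, hlen ▸ hs, hrs, hq₁', hq₂', hlen.symm, hq₁, hq₂,
    fun t ht htr hts ↦ (hother t (hlen ▸ ht) htr hts).symm⟩

theorem Replace1.right_unique (hinj : Set.InjOn (pt p) (Set.Iio p.length))
    (h' : Replace1 p p' (c, l - a) (c, l + a)) (h'' : Replace1 p p'' (c, l - a) (c, l + a)) :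
    p' = p'' := by
  obtain ⟨r, hr, hq, rfl⟩ := replace1_iff_exists_reflectAt.1 h'
  obtain ⟨s, hs, hq', rfl⟩ := replace1_iff_exists_reflectAt.1 h''
  rw [hinj hr hs (hq.trans hq'.symm)]

theorem Replace2.right_unique (hinj : Set.InjOn (pt p) (Set.Iio p.length))
    (h' : Replace2 p p' (c₁, l - a₁) (c₁, l + a₁) (c₂, l - a₂) (c₂, l + a₂))
    (h'' : Replace2 p p'' (c₁, l - a₁) (c₁, l + a₁) (c₂, l - a₂) (c₂, l + a₂)) : p' = p'' := by
  obtain ⟨r, s, hr, hs, -, hq₁, hq₂, rfl⟩ := replace2_iff_exists_reflectAt.1 h'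
  obtain ⟨r', s', hr', hs', -, hq₁', hq₂', rfl⟩ := replace2_iff_exists_reflectAt.1 h''
  rw [hinj hr hr' (hq₁.trans hq₁'.symm), hinj hs hs' (hq₂.trans hq₂'.symm)]

end Lists

section Moves

variable {S : Setting} {i j : ℕ} {k l : ℤ} {up : Bool} {p p' p'' : List (ℝ × ℝ)}

/-- The sign of a vertical direction: `1` for upper corners and lowering moves, `-1` for lower
corners and raising moves (the `y`-axis points downwards). -/
def sgn (up : Bool) : ℤ := if up then 1 else -1

theorem sgn_eq_one_or (up : Bool) : sgn up = 1 ∨ sgn up = -1 := by cases up <;> simp [sgn]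

theorem sgn_real_eq_one_or (up : Bool) : (sgn up : ℝ) = 1 ∨ (sgn up : ℝ) = -1 := by
  cases up <;> simp [sgn]

theorem abs_sgn_mul (up : Bool) (x : ℝ) : |(sgn up : ℝ) * x| = |x| := by
  cases up <;> simp [sgn]

/-- The corner condition for moving `p` at `(j, l)`: lowering it for `up = true`, raising it for
`up = false`. -/
def CanMove (S : Setting) (up : Bool) (p : List (ℝ × ℝ)) (j : ℕ) (l : ℤ) : Prop :=
  (j, l - sgn up * rr S j) ∈ Cp S p up ∧ (j, l + sgn up * rr S j) ∉ Cp S p up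

/-- `p'` is obtained from `p` by the replacement of points that constitutes the move at `(j, l)`:
a lowering move for `up = true`, a raising move for `up = false`. In contrast to `LoweredTo`,
neither membership in `P S i k` nor a corner condition is required. -/
def Moves (S : Setting) (up : Bool) (j : ℕ) (l : ℤ) (p p' : List (ℝ × ℝ)) : Prop :=
  match S with
  | .A _ => Replace1 p p' ((j : ℝ), (l : ℝ) - sgn up) ((j : ℝ), (l : ℝ) + sgn up)
  | .B n ε =>
    if j = n then
      Replace1 p p' (2 * (n : ℝ) - 1, (l : ℝ) - sgn up * (1 + ε))
        (2 * (n : ℝ) - 1, (l : ℝ) + sgn up * (1 + ε))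
    else if j = n - 1 then
      Replace2 p p'
        (((iotaB n (j, l - 2)).1 : ℝ), (l : ℝ) - sgn up * 2)
        (((iotaB n (j, l - 2)).1 : ℝ), (l : ℝ) + sgn up * 2)
        (2 * (n : ℝ) - 1, (l : ℝ) - sgn up * (1 - ε))
        (2 * (n : ℝ) - 1, (l : ℝ) + sgn up * (1 - ε))
    else
      Replace1 p p' (((iotaB n (j, l - 2)).1 : ℝ), (l : ℝ) - sgn up * 2)
        (((iotaB n (j, l - 2)).1 : ℝ), (l : ℝ) + sgn up * 2)

theorem canMove_true_iff : CanMove S true p j l ↔ CanLower S p j l := by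
  simp [CanMove, CanLower, sgn]

theorem canMove_false_iff : CanMove S false p j l ↔
    (j, l + (rr S j : ℤ)) ∈ Cp S p false ∧ (j, l - (rr S j : ℤ)) ∉ Cp S p false := by
  simp [CanMove, sgn, ← sub_eq_add_neg]

theorem loweredTo_iff_moves : LoweredTo S i k j l p p' ↔
    p ∈ P S i k ∧ p' ∈ P S i k ∧ CanLower S p j l ∧ Moves S true j l p p' := by
  cases S with
  | A n => simp [LoweredTo, Moves, sgn]
  | B n ε => simp [LoweredTo, Moves, sgn, sub_sub, add_assoc, ← sub_add, ← add_sub_assoc]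

theorem Moves.symm (h : Moves S up j l p p') : Moves S (!up) j l p' p := by
  have hsgn : (sgn (!up) : ℝ) = -sgn up := by cases up <;> simp [sgn]
  cases S with
  | A n => simpa [Moves, hsgn, ← sub_eq_add_neg] using Replace1.symm h
  | B n ε =>
    simp only [Moves, hsgn, neg_mul, sub_neg_eq_add, ← sub_eq_add_neg] at h ⊢
    split_ifs at h ⊢
    exacts [h.symm, h.symm, h.symm]

theorem Moves.right_unique (hinj : Set.InjOn (pt p) (Set.Iio p.length))
    (h' : Moves S up j l p p') (h'' : Moves S up j l p p'') : p' = p'' := by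
  cases S with
  | A n => exact Replace1.right_unique hinj h' h''
  | B n ε =>
    simp only [Moves] at h' h''
    split_ifs at h' h''
    exacts [h'.right_unique hinj h'', h'.right_unique hinj h'', h'.right_unique hinj h'']

end Moves

section TypeA

variable {n i j : ℕ} {k l m : ℤ} {up : Bool} {p : List (ℝ × ℝ)}

theorem pt_injOn_of_mem_pathsA (hp : p ∈ pathsA n i k) :
    Set.InjOn (pt p) (Set.Iio p.length) := by
  obtain ⟨hlen, hfst, -⟩ := hp
  intro r hr s hs h
  rw [Set.mem_Iio, hlen] at hr hs
  have := congrArg Prod.fst h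
  rw [hfst r hr, hfst s hs] at this
  exact_mod_cast this

theorem mem_Cp_A_iff : (j, m) ∈ Cp (.A n) p up ↔ 1 ≤ j ∧ j ≤ n ∧ pt p j = ((j : ℝ), (m : ℝ)) ∧
    (pt p (j - 1)).2 = m + sgn up ∧ (pt p (j + 1)).2 = m + sgn up := by
  simp [Cp, sgn]

theorem reflectAt_mem_pathsA_iff (hp : p ∈ pathsA n i k) (hj : 1 ≤ j) (hjn : j ≤ n) {l : ℝ}
    (hne : (pt p j).2 ≠ l) :
    reflectAt {j} l p ∈ pathsA n i k ↔ (pt p (j - 1)).2 = l ∧ (pt p (j + 1)).2 = l := by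
  obtain ⟨hlen, hfst, hzero, hlast, hstep⟩ := hp
  obtain ⟨j, rfl⟩ := Nat.exists_eq_add_of_le' hj
  have hpt (r : ℕ) (hr : r < n + 2) :
      pt (reflectAt {j + 1} l p) r = if r = j + 1 then reflectPt l (pt p r) else pt p r := by
    simp [pt_reflectAt {j + 1} (hlen ▸ hr)]
  have hsteps (r : ℕ) (hr : r ≤ n) : |(pt p (r + 1)).2 - (pt p r).2| = 1 :=
    (abs_eq zero_le_one).2 (hstep r hr)
  constructor
  · rintro ⟨-, -, -, -, hstep'⟩
    have hsteps' (r : ℕ) (hr : r ≤ n) := (abs_eq zero_le_one).2 (hstep' r hr)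
    constructor
    · have h := hsteps' j (by omega)
      rw [hpt _ (by omega), hpt _ (by omega), if_pos rfl, if_neg (by omega)] at h
      exact eq_of_abs_reflect_sub_eq hne (h.trans (hsteps j (by omega)).symm)
    · have h := hsteps' (j + 1) hjn
      rw [hpt _ (by omega), hpt _ (by omega), if_neg (by omega), if_pos rfl, abs_sub_comm] at h
      exact eq_of_abs_reflect_sub_eq hne (h.trans ((abs_sub_comm _ _).trans (hsteps _ hjn)).symm)
  · rintro ⟨hleft, hright⟩
    refine ⟨by simpa using hlen, fun r hr ↦ ?_, ?_, ?_, fun r hr ↦ (abs_eq zero_le_one).1 ?_⟩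
    · rw [hpt r hr, ← hfst r hr]
      split_ifs <;> rfl
    · rw [hpt 0 (by omega), if_neg (by omega), hzero]
    · rw [hpt _ (by omega), if_neg (by omega), hlast]
    · rw [hpt _ (by omega), hpt _ (by omega), abs_reflect_sub_reflect, hsteps r hr]
      · rintro rfl -
        exact hright
      · rintro h -
        rwa [show r = j by omega]

theorem canMove_A_iff_exists_moves (hp : p ∈ pathsA n i k) (hj : 1 ≤ j) (hjn : j ≤ n) :
    CanMove (.A n) up p j l ↔ ∃ p' ∈ pathsA n i k, Moves (.A n) up j l p p' := by
  have hsgn : (sgn up : ℝ) ≠ 0 := by cases up <;> simp [sgn]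
  have hmem (hpt : pt p j = ((j : ℝ), (l : ℝ) - sgn up)) :
      reflectAt {j} (l : ℝ) p ∈ pathsA n i k ↔
        (pt p (j - 1)).2 = (l : ℝ) ∧ (pt p (j + 1)).2 = (l : ℝ) :=
    reflectAt_mem_pathsA_iff hp hj hjn (by simpa [hpt] using hsgn)
  constructor
  · rintro ⟨h, -⟩
    simp only [mem_Cp_A_iff, rr, Nat.cast_one, mul_one, Int.cast_sub, sub_add_cancel] at h
    obtain ⟨-, -, hpt, hnbr⟩ := h
    exact ⟨_, (hmem hpt).2 hnbr,
      replace1_iff_exists_reflectAt.2 ⟨j, by rw [hp.1]; omega, hpt, rfl⟩⟩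
  · rintro ⟨p', hp', h⟩
    obtain ⟨r, hr, hpt, rfl⟩ := replace1_iff_exists_reflectAt.1 h
    obtain rfl : r = j := by
      have := hp.2.1 r (hp.1 ▸ hr)
      rw [hpt] at this
      exact Nat.cast_injective this.symm
    have hnbr := (hmem hpt).1 hp'
    constructor
    · simp only [mem_Cp_A_iff, rr, Nat.cast_one, mul_one, Int.cast_sub, sub_add_cancel]
      exact ⟨hj, hjn, hpt, hnbr⟩
    · simp only [mem_Cp_A_iff, rr, Nat.cast_one, mul_one, Int.cast_add, hpt, Prod.mk.injEq]
      rintro ⟨-, -, ⟨-, h⟩, -⟩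
      exact hsgn (by linarith)

end TypeA

section SpinPaths

variable {n r : ℕ} {ε : ℝ} {l : ℤ} {x x' : ℕ → ℝ × ℝ} {p : List (ℝ × ℝ)}

/-- The column of the `r`-th point of a path in `𝒫_{N,l}`, type `B_N`; the paths start from the
left for `l ≡ 3 (mod 4)` and from the right for `l ≡ 1 (mod 4)`. -/
def spinColumn (n : ℕ) (l : ℤ) (r : ℕ) : ℤ :=
  if r = n then 2 * n - 1 else if l % 4 = 3 then 2 * r else 4 * n - 2 - 2 * r

/-- The points `x 0, …, x n` form a path in `𝒫_{N,l}`, type `B_N`. Sequences rather than lists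
make this notion available for both halves of a path in `𝒫_{i,k}`, `i < N`, the second of which
is traversed backwards. -/
structure IsSpinPath (n : ℕ) (ε : ℝ) (l : ℤ) (x : ℕ → ℝ × ℝ) : Prop where
  fst : ∀ r ≤ n, (x r).1 = spinColumn n l r
  snd_zero : (x 0).2 = l + 2 * n - 1
  step : ∀ r < n, |(x (r + 1)).2 - (x r).2| = if r + 1 = n then 1 + ε else 2

theorem IsSpinPath.congr (h : IsSpinPath n ε l x) (hx : ∀ r ≤ n, x r = x' r) :
    IsSpinPath n ε l x' where
  fst r hr := hx r hr ▸ h.fst r hr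
  snd_zero := hx 0 n.zero_le ▸ h.snd_zero
  step r hr := hx r hr.le ▸ hx (r + 1) hr ▸ h.step r hr

theorem mem_pathsBspin_iff_s17 (hn : 1 ≤ n) (hε : 0 ≤ 1 + ε) :
    p ∈ pathsBspin n ε l ↔ p.length = n + 1 ∧ IsSpinPath n ε l (pt p) := by
  constructor
  · rintro ⟨hlen, hfst, hmid, hzero, hstep, hlast⟩
    refine ⟨hlen, fun r hr ↦ ?_, hzero, fun r hr ↦ ?_⟩
    · rcases hr.eq_or_lt with rfl | hr
      · simp [spinColumn, hmid]
      · split_ifs at hfst with hl <;> simp [spinColumn, hr.ne, hl, hfst r hr]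
    · split_ifs with hrn
      · subst hrn
        exact (abs_eq hε).2 hlast
      · exact (abs_eq zero_le_two).2 (hstep r (by omega))
  · rintro ⟨hlen, hfst, hzero, hstep⟩
    refine ⟨hlen, ?_, ?_, hzero, fun r hr ↦ ?_, ?_⟩
    · split_ifs with hl <;> intro r hr <;> simp [hfst r hr.le, spinColumn, hr.ne, hl]
    · simp [hfst n le_rfl, spinColumn]
    · have h := hstep r (by omega)
      rw [if_neg (by omega)] at h
      exact (abs_eq zero_le_two).1 h
    · have h := hstep (n - 1) (by omega)
      rw [Nat.sub_add_cancel hn, if_pos rfl] at h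
      exact (abs_eq hε).1 h

theorem IsSpinPath.exists_snd_eq_intCast (h : IsSpinPath n ε l x) (hr : r < n) :
    ∃ m : ℤ, (x r).2 = m ∧ m % 4 = (l + 2 * n - 1 + 2 * r) % 4 := by
  induction r with
  | zero => exact ⟨l + 2 * n - 1, by simpa using h.snd_zero, by simp⟩
  | succ r ih =>
    obtain ⟨m, hm, hmod⟩ := ih (by omega)
    have hstep := h.step r (by omega)
    rw [if_neg hr.ne, hm] at hstep
    rcases (abs_eq zero_le_two).1 hstep with hstep | hstep
    · exact ⟨m + 2, by push_cast; linarith, by push_cast; omega⟩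
    · exact ⟨m - 2, by push_cast; linarith, by push_cast; omega⟩

end SpinPaths

section TypeBPaths

variable {n i r s t : ℕ} {k : ℤ} {ε : ℝ} {b b' : Bool} {p : List (ℝ × ℝ)}

/-- The strands of the paths in `𝒫_{i,k}`, type `B_N`: the halves `(a_0, …, a_N)`, for
`b = true`, and `(ā_0, …, ā_N)`, for `b = false`; only the former is present when `i = N`. -/
def HasStrand (n i : ℕ) (b : Bool) : Prop := b = true ∨ i ≠ n

/-- The index, in the list of points of a path, of the `r`-th point of the strand `b`. -/
def node (n : ℕ) (b : Bool) (r : ℕ) : ℕ := if b then r else 2 * n + 1 - r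

/-- The second index of the set `𝒫_{N,·}` to which the strand `b` of a path in `𝒫_{i,k}`
belongs. -/
def strandBase (n i : ℕ) (k : ℤ) (b : Bool) : ℤ :=
  if i = n then k else if b then k - (2 * n - 2 * i - 1) else k + (2 * n - 2 * i - 1)

/-- The points of the strand `b` of a path. -/
def strand (n : ℕ) (p : List (ℝ × ℝ)) (b : Bool) (r : ℕ) : ℝ × ℝ := pt p (node n b r)

/-- Paths in `𝒫_{i,k}`, type `B_N`, described by their strands. -/
structure IsPathB (n : ℕ) (ε : ℝ) (i : ℕ) (k : ℤ) (p : List (ℝ × ℝ)) : Prop where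
  length_eq : p.length = if i = n then n + 1 else 2 * n + 2
  isSpinPath : ∀ b, HasStrand n i b → IsSpinPath n ε (strandBase n i k b) (strand n p b)
  end_lt : i ≠ n → (strand n p false n).2 < (strand n p true n).2

theorem strand_append_reverse_true {a a' : List (ℝ × ℝ)} (ha : a.length = n + 1) (hr : r ≤ n) :
    strand n (a ++ a'.reverse) true r = pt a r := by
  rw [strand, node, if_pos rfl, pt, pt, List.getD_append _ _ _ _ (by omega)]

theorem strand_append_reverse_false {a a' : List (ℝ × ℝ)} (ha : a.length = n + 1)
    (ha' : a'.length = n + 1) (hr : r ≤ n) :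
    strand n (a ++ a'.reverse) false r = pt a' r := by
  rw [strand, node, if_neg Bool.false_ne_true, pt, List.getD_append_right _ _ _ _ (by omega), ha,
    List.getD_reverse _ (by omega), ha', pt]
  congr 1
  omega

theorem isPathB_self_iff :
    IsPathB n ε n k p ↔ p.length = n + 1 ∧ IsSpinPath n ε k (pt p) := by
  constructor
  · rintro ⟨hlen, h, -⟩
    have h := h true (.inl rfl)
    rw [strandBase, if_pos rfl] at h
    exact ⟨by rw [hlen, if_pos rfl], h⟩
  · rintro ⟨hlen, h⟩
    refine ⟨by rw [hlen, if_pos rfl], fun b hb ↦ ?_, absurd rfl⟩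
    rw [hb.resolve_right (not_not.2 rfl), strandBase, if_pos rfl]
    exact h

theorem isPathB_append_reverse_iff {a a' : List (ℝ × ℝ)} (hi : i ≠ n) (ha : a.length = n + 1)
    (ha' : a'.length = n + 1) :
    IsPathB n ε i k (a ++ a'.reverse) ↔
      IsSpinPath n ε (k - (2 * n - 2 * i - 1)) (pt a) ∧
        IsSpinPath n ε (k + (2 * n - 2 * i - 1)) (pt a') ∧ (pt a' n).2 < (pt a n).2 := by
  have htrue (r : ℕ) (hr : r ≤ n) := strand_append_reverse_true (a' := a') ha hr
  have hfalse (r : ℕ) (hr : r ≤ n) := strand_append_reverse_false ha ha' hr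
  have hbase : strandBase n i k true = k - (2 * n - 2 * i - 1) ∧
      strandBase n i k false = k + (2 * n - 2 * i - 1) := by simp [strandBase, hi]
  rw [← hbase.1, ← hbase.2, ← htrue n le_rfl, ← hfalse n le_rfl]
  constructor
  · rintro ⟨-, h, hlt⟩
    exact ⟨(h true (.inl rfl)).congr htrue, (h false (.inr hi)).congr hfalse, hlt hi⟩
  · rintro ⟨h, h', hlt⟩
    refine ⟨?_, Bool.rec (fun _ ↦ h'.congr fun r hr ↦ (hfalse r hr).symm)
      (fun _ ↦ h.congr fun r hr ↦ (htrue r hr).symm), fun _ ↦ hlt⟩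
    rw [List.length_append, List.length_reverse, ha, ha', if_neg hi]
    ring

theorem exists_eq_append_reverse (hlen : p.length = 2 * n + 2) :
    ∃ a a' : List (ℝ × ℝ), a.length = n + 1 ∧ a'.length = n + 1 ∧ p = a ++ a'.reverse :=
  ⟨p.take (n + 1), (p.drop (n + 1)).reverse, by rw [List.length_take]; omega,
    by rw [List.length_reverse, List.length_drop]; omega,
    by rw [List.reverse_reverse, List.take_append_drop]⟩

theorem mem_pathsB_iff (hn : 1 ≤ n) (hε : 0 ≤ 1 + ε) :
    p ∈ pathsB n ε i k ↔ IsPathB n ε i k p := by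
  by_cases hi : i = n
  · rw [pathsB, if_pos hi, mem_pathsBspin_iff_s17 hn hε, hi, isPathB_self_iff]
  simp only [pathsB, if_neg hi, Set.mem_ofPred_eq, mem_pathsBspin_iff_s17 hn hε]
  constructor
  · rintro ⟨a, a', ⟨ha, hpa⟩, ⟨ha', hpa'⟩, rfl, -, hlt⟩
    exact (isPathB_append_reverse_iff hi ha ha').2 ⟨hpa, hpa', sub_pos.1 hlt⟩
  · intro hp
    obtain ⟨a, a', ha, ha', rfl⟩ := exists_eq_append_reverse (hp.length_eq.trans (if_neg hi))
    obtain ⟨hpa, hpa', hlt⟩ := (isPathB_append_reverse_iff hi ha ha').1 hp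
    refine ⟨a, a', ⟨ha, hpa⟩, ⟨ha', hpa'⟩, rfl, ?_, sub_pos.2 hlt⟩
    rw [hpa.fst n le_rfl, hpa'.fst n le_rfl, spinColumn, spinColumn, if_pos rfl, if_pos rfl]

theorem spinColumn_eq_spinColumn_iff {l l' : ℤ} (hr : r ≤ n) (hs : s ≤ n) :
    spinColumn n l r = spinColumn n l' s ↔ r = s ∧ (r = n ∨ (l % 4 = 3 ↔ l' % 4 = 3)) := by
  unfold spinColumn
  split_ifs <;> omega

theorem spinColumn_eq_fst_iotaB {l m : ℤ} (hm : m % 4 = (l + 2 * n - 1 + 2 * r) % 4) :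
    spinColumn n l r = (iotaB n (r, m)).1 := by
  simp only [spinColumn, iotaB]
  split_ifs <;> simp only <;> omega

theorem fst_iotaB_sub_two_mul_sgn (n j : ℕ) (l : ℤ) (up : Bool) :
    (iotaB n (j, l - 2 * sgn up)).1 = (iotaB n (j, l - 2)).1 := by
  rcases sgn_eq_one_or up with h | h <;> simp only [iotaB, h] <;> split_ifs <;>
    simp only <;> omega

theorem strandBase_emod_two (hik : (i, k) ∈ XB n) : strandBase n i k b % 2 = 1 := by
  simp only [XB, Set.mem_ofPred_eq] at hik
  unfold strandBase
  split_ifs <;> omega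

theorem strandBase_emod_four (hb : HasStrand n i b) (hb' : HasStrand n i b') (hne : b' ≠ b) :
    strandBase n i k b' % 4 = (strandBase n i k b + 2) % 4 := by
  have hi : i ≠ n := by
    rintro rfl
    exact hne ((hb'.resolve_right (not_not.2 rfl)).trans (hb.resolve_right (not_not.2 rfl)).symm)
  cases b <;> cases b' <;> simp only [strandBase] <;> grind

theorem node_eq_node_iff (hr : r ≤ n) (hs : s ≤ n) :
    node n b r = node n b' s ↔ b = b' ∧ r = s := by
  cases b <;> cases b' <;> simp only [node] <;> grind

namespace IsPathB

theorem node_lt_length (hp : IsPathB n ε i k p) (hb : HasStrand n i b) (hr : r ≤ n) :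
    node n b r < p.length := by
  rw [hp.length_eq]
  rcases hb with rfl | hi
  · rw [node, if_pos rfl]
    split_ifs <;> omega
  · rw [node, if_neg hi]
    split_ifs <;> omega

theorem exists_eq_node (hp : IsPathB n ε i k p) (ht : t < p.length) :
    ∃ b, HasStrand n i b ∧ ∃ r ≤ n, t = node n b r := by
  rw [hp.length_eq] at ht
  by_cases htn : t ≤ n
  · exact ⟨true, .inl rfl, t, htn, rfl⟩
  · split_ifs at ht with hi
    · omega
    · exact ⟨false, .inr hi, 2 * n + 1 - t, by omega, by
        rw [node, if_neg Bool.false_ne_true]; omega⟩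

theorem fst_strand_eq_iff (hp : IsPathB n ε i k p) (hb : HasStrand n i b) (hr : r ≤ n) {l : ℤ}
    (hs : s ≤ n) : (strand n p b r).1 = spinColumn n l s ↔
      r = s ∧ (r = n ∨ (strandBase n i k b % 4 = 3 ↔ l % 4 = 3)) := by
  rw [(hp.isSpinPath b hb).fst r hr, Int.cast_inj, spinColumn_eq_spinColumn_iff hr hs]

theorem eq_of_snd_eq (hp : IsPathB n ε i k p) (hb : HasStrand n i b) (hb' : HasStrand n i b')
    (h : (strand n p b n).2 = (strand n p b' n).2) : b = b' := by
  by_contra hne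
  have hlt := hp.end_lt (by grind [HasStrand])
  cases b <;> cases b' <;> simp_all

theorem injOn_pt (hp : IsPathB n ε i k p) (hik : (i, k) ∈ XB n) :
    Set.InjOn (pt p) (Set.Iio p.length) := by
  intro t ht t' ht' h
  obtain ⟨b, hb, r, hr, rfl⟩ := hp.exists_eq_node ht
  obtain ⟨b', hb', r', hr', rfl⟩ := hp.exists_eq_node ht'
  have hfst : (strand n p b r).1 = spinColumn n (strandBase n i k b') r' :=
    (congrArg Prod.fst h).trans ((hp.isSpinPath b' hb').fst r' hr')
  obtain ⟨rfl, hend⟩ := (hp.fst_strand_eq_iff hb hr hr').1 hfst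
  suffices b = b' by rw [this]
  rcases hend with rfl | hmod
  · exact hp.eq_of_snd_eq hb hb' (congrArg Prod.snd h)
  · by_contra hne
    have hbase := strandBase_emod_four (k := k) hb' hb hne
    have hodd := strandBase_emod_two (b := b') hik
    omega

theorem pt_eq_iotaB_iff (hp : IsPathB n ε i k p) {m : ℤ} (hrn : r < n) :
    t < p.length ∧ pt p t = (((iotaB n (r, m)).1 : ℝ), (m : ℝ)) ↔
      ∃ b, HasStrand n i b ∧ t = node n b r ∧ (strand n p b r).2 = m := by
  have hiota : (iotaB n (r, m)).1 = spinColumn n (m - (2 * n - 1 + 2 * r)) r :=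
    (spinColumn_eq_fst_iotaB (by congr 1; ring)).symm
  constructor
  · rintro ⟨ht, h⟩
    obtain ⟨b, hb, s, hs, rfl⟩ := hp.exists_eq_node ht
    have hfst := congrArg Prod.fst h
    simp only [hiota] at hfst
    obtain ⟨rfl, -⟩ := (hp.fst_strand_eq_iff hb hs hrn.le).1 hfst
    exact ⟨b, hb, rfl, congrArg Prod.snd h⟩
  · rintro ⟨b, hb, rfl, h⟩
    obtain ⟨m', hm', hmod⟩ := (hp.isSpinPath b hb).exists_snd_eq_intCast hrn
    obtain rfl : m' = m := by exact_mod_cast hm'.symm.trans h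
    refine ⟨hp.node_lt_length hb hrn.le, Prod.ext ?_ h⟩
    rw [← spinColumn_eq_fst_iotaB hmod]
    exact (hp.isSpinPath b hb).fst r hrn.le

theorem pt_eq_middle_iff (hp : IsPathB n ε i k p) {y : ℝ} :
    t < p.length ∧ pt p t = (2 * (n : ℝ) - 1, y) ↔
      ∃ b, HasStrand n i b ∧ t = node n b n ∧ (strand n p b n).2 = y := by
  have hmid (l : ℤ) : (spinColumn n l n : ℝ) = 2 * n - 1 := by simp [spinColumn]
  constructor
  · rintro ⟨ht, h⟩
    obtain ⟨b, hb, s, hs, rfl⟩ := hp.exists_eq_node ht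
    obtain ⟨rfl, -⟩ := (hp.fst_strand_eq_iff hb hs le_rfl).1
      ((congrArg Prod.fst h).trans (hmid 0).symm)
    exact ⟨b, hb, rfl, congrArg Prod.snd h⟩
  · rintro ⟨b, hb, rfl, h⟩
    exact ⟨hp.node_lt_length hb le_rfl,
      Prod.ext (((hp.isSpinPath b hb).fst n le_rfl).trans (hmid _)) h⟩

theorem exists_snd_eq_add (hp : IsPathB n ε i k p) (hb : HasStrand n i b)
    (hb' : HasStrand n i b') (hne : b' ≠ b) (hrn : r < n) :
    ∃ c : ℤ, (strand n p b' r).2 = (strand n p b r).2 + (2 + 4 * c) := by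
  obtain ⟨m, hm, hmod⟩ := (hp.isSpinPath b hb).exists_snd_eq_intCast hrn
  obtain ⟨m', hm', hmod'⟩ := (hp.isSpinPath b' hb').exists_snd_eq_intCast hrn
  have hbase := strandBase_emod_four (k := k) hb hb' hne
  refine ⟨(m' - m - 2) / 4, ?_⟩
  rw [hm, hm']
  have : m' = m + (2 + 4 * ((m' - m - 2) / 4)) := by omega
  exact_mod_cast this

end IsPathB

end TypeBPaths

section StrandReflection

variable {n i j r : ℕ} {k base : ℤ} {ε l : ℝ} {b b' : Bool} {x : ℕ → ℝ × ℝ} {p : List (ℝ × ℝ)}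

/-- The positions, along a strand, of the points affected by a move at column `j`. -/
def block (n j : ℕ) : Finset ℕ := if j + 1 = n then {j, n} else {j}

/-- The path obtained from `p` by reflecting the points of the strand `b` with positions in
`block n j` in the horizontal line at height `l`. -/
def reflectStrand (n j : ℕ) (b : Bool) (l : ℝ) (p : List (ℝ × ℝ)) : List (ℝ × ℝ) :=
  reflectAt ((block n j).image (node n b)) l p

theorem mem_block_iff : r ∈ block n j ↔ r = j ∨ (r = n ∧ j + 1 = n) := by
  unfold block
  split_ifs with h <;> simp [h]

theorem isSpinPath_reflect_iff (hx : IsSpinPath n ε base x) (hj : 1 ≤ j) (hjn : j ≤ n)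
    (hne : (x j).2 ≠ l) :
    IsSpinPath n ε base (fun r ↦ if r ∈ block n j then reflectPt l (x r) else x r) ↔
      (x (j - 1)).2 = l ∧ (j + 1 < n → (x (j + 1)).2 = l) := by
  obtain ⟨j, rfl⟩ := Nat.exists_eq_add_of_le' hj
  have hself : j + 1 ∈ block n (j + 1) := mem_block_iff.2 (.inl rfl)
  constructor
  · intro h
    constructor
    · have hstep := (h.step j (by omega)).trans (hx.step j (by omega)).symm
      have hleft : j ∉ block n (j + 1) := mt mem_block_iff.1 (by omega)
      simp only [if_pos hself, if_neg hleft] at hstep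
      exact eq_of_abs_reflect_sub_eq hne hstep
    · intro hjn'
      have hstep := (h.step (j + 1) (by omega)).trans (hx.step (j + 1) (by omega)).symm
      have hright : j + 1 + 1 ∉ block n (j + 1) := mt mem_block_iff.1 (by omega)
      simp only [if_pos hself, if_neg hright] at hstep
      rw [abs_sub_comm, abs_sub_comm (x _).2] at hstep
      exact eq_of_abs_reflect_sub_eq hne hstep
  · rintro ⟨hleft, hright⟩
    refine ⟨fun r hr ↦ ?_, ?_, fun r hr ↦ ?_⟩
    · rw [← hx.fst r hr]
      split_ifs <;> rfl
    · rw [← hx.snd_zero, if_neg (mt mem_block_iff.1 (by omega))]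
    · rw [abs_reflect_sub_reflect, hx.step r hr] <;> simp only [mem_block_iff] <;> intro h h'
      · obtain rfl : r = j + 1 := by omega
        exact hright (by omega)
      · obtain rfl : r = j := by omega
        exact hleft

theorem reflect_lt_iff_abs_lt {u v : ℝ} (h : u < v) : 2 * l - u < v ↔ |u - l| < |v - l| := by
  rw [abs_lt, lt_abs, neg_lt, lt_abs]
  constructor <;> intro <;> grind

theorem lt_reflect_iff_abs_lt {u v : ℝ} (h : v < u) : v < 2 * l - u ↔ |u - l| < |v - l| := by
  rw [abs_lt, lt_abs, neg_lt, lt_abs]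
  constructor <;> intro <;> grind

theorem strand_reflectStrand (hp : IsPathB n ε i k p) (hjn : j ≤ n) (hb' : HasStrand n i b')
    (hr : r ≤ n) : strand n (reflectStrand n j b l p) b' r =
      if b = b' ∧ r ∈ block n j then reflectPt l (strand n p b' r) else strand n p b' r := by
  have hmem : node n b' r ∈ (block n j).image (node n b) ↔ b = b' ∧ r ∈ block n j := by
    rw [Finset.mem_image]
    constructor
    · rintro ⟨s, hs, h⟩
      obtain ⟨hb, rfl⟩ := (node_eq_node_iff (by rw [mem_block_iff] at hs; omega) hr).1 h
      exact ⟨hb, hs⟩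
    · rintro ⟨rfl, h⟩
      exact ⟨r, h, rfl⟩
  rw [strand, reflectStrand, pt_reflectAt _ (hp.node_lt_length hb' hr), if_congr hmem rfl rfl,
    strand]

theorem end_lt_reflectStrand_iff (hp : IsPathB n ε i k p) (hi : i ≠ n) (hjn : j ≤ n) :
    (strand n (reflectStrand n j b l p) false n).2 <
      (strand n (reflectStrand n j b l p) true n).2 ↔
    (n ≤ j + 1 → |(strand n p b n).2 - l| < |(strand n p (!b) n).2 - l|) := by
  have hlt := hp.end_lt hi
  have hblock : n ∈ block n j ↔ n ≤ j + 1 := mem_block_iff.trans (by omega)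
  rw [strand_reflectStrand hp hjn (.inr hi) le_rfl, strand_reflectStrand hp hjn (.inl rfl) le_rfl]
  simp only [hblock]
  by_cases hend : n ≤ j + 1
  · cases b
    · simpa [hend, reflectPt] using reflect_lt_iff_abs_lt hlt
    · simpa [hend, reflectPt] using lt_reflect_iff_abs_lt hlt
  · simpa [hend] using hlt

theorem isPathB_reflectStrand_iff (hp : IsPathB n ε i k p) (hb : HasStrand n i b) (hj : 1 ≤ j)
    (hjn : j ≤ n) (hne : (strand n p b j).2 ≠ l) :
    IsPathB n ε i k (reflectStrand n j b l p) ↔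
      (strand n p b (j - 1)).2 = l ∧ (j + 1 < n → (strand n p b (j + 1)).2 = l) ∧
        (i ≠ n → n ≤ j + 1 → |(strand n p b n).2 - l| < |(strand n p (!b) n).2 - l|) := by
  rw [← and_assoc, ← isSpinPath_reflect_iff (hp.isSpinPath b hb) hj hjn hne]
  constructor
  · rintro ⟨-, hspin, hlt⟩
    refine ⟨(hspin b hb).congr fun r hr ↦ ?_,
      fun hi ↦ (end_lt_reflectStrand_iff hp hi hjn).1 (hlt hi)⟩
    simp only [strand_reflectStrand hp hjn hb hr, true_and]
  · rintro ⟨hspin, hend⟩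
    refine ⟨(length_reflectAt ..).trans hp.length_eq, fun b' hb' ↦ ?_,
      fun hi ↦ (end_lt_reflectStrand_iff hp hi hjn).2 (hend hi)⟩
    by_cases hbb' : b = b'
    · subst hbb'
      exact hspin.congr fun r hr ↦ by simp only [strand_reflectStrand hp hjn hb hr, true_and]
    · exact (hp.isSpinPath b' hb').congr fun r hr ↦ by
        rw [strand_reflectStrand hp hjn hb' hr, if_neg (hbb' ·.1)]

end StrandReflection

section TypeBMoves

variable {n i j t : ℕ} {k l : ℤ} {ε : ℝ} {b b' up : Bool} {p p' : List (ℝ × ℝ)}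

/-- The strand `b` of `p` contains the points which the move at `(j, l)` replaces. -/
def HasBlock (n : ℕ) (ε : ℝ) (up : Bool) (j : ℕ) (l : ℤ) (p : List (ℝ × ℝ)) (b : Bool) : Prop :=
  if j = n then (strand n p b n).2 = l - sgn up * (1 + ε)
  else (strand n p b j).2 = l - sgn up * 2 ∧
    (j + 1 = n → (strand n p b n).2 = l - sgn up * (1 - ε))

theorem HasBlock.snd_ne (h : HasBlock n ε up j l p b) (hε : 0 < ε) : (strand n p b j).2 ≠ l := by
  intro hl
  unfold HasBlock at h
  rcases sgn_real_eq_one_or up with hs | hs <;> rw [hs] at h <;> split_ifs at h with hj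
  · subst hj; linarith
  · linarith [h.1]
  · subst hj; linarith
  · linarith [h.1]

theorem le_abs_of_abs_sub_four_mul {y : ℝ} (c : ℤ) (hε : ε ≤ 1) (h : |y - 4 * c| = 1 + ε) :
    1 + ε ≤ |y| := by
  rcases eq_or_ne c 0 with rfl | hc
  · simpa using h.ge
  · have hc : (1 : ℝ) ≤ |(c : ℝ)| := by exact_mod_cast Int.one_le_abs hc
    have habs := abs_sub_abs_le_abs_sub (4 * (c : ℝ)) y
    rw [abs_sub_comm, h, abs_mul, abs_of_pos (by norm_num : (0 : ℝ) < 4)] at habs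
    linarith

theorem abs_eq_or_lt_abs_of_abs_sub_two_add_four_mul {y : ℝ} (c : ℤ) (hε : 0 < ε) (hε' : ε < 1)
    (h : |y - (2 + 4 * c)| = 1 + ε) : |y| = 1 - ε ∨ 1 + ε < |y| := by
  by_cases hc : c = 0 ∨ c = -1
  · rcases hc with rfl | rfl <;> grind
  · have hc : (6 : ℝ) ≤ |2 + 4 * (c : ℝ)| := by
      have : 6 ≤ |2 + 4 * c| := by grind
      exact_mod_cast this
    have habs := abs_sub_abs_le_abs_sub (2 + 4 * (c : ℝ)) y
    rw [abs_sub_comm, h] at habs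
    right
    linarith

theorem sgn_mul_sub_pos_iff {y z d : ℝ} (hd : 0 < d) (h : |z - y| = d) :
    0 < sgn up * (z - y) ↔ z = y + sgn up * d := by
  rcases (abs_eq hd.le).1 h with h | h <;> rcases sgn_real_eq_one_or up with hs | hs <;>
    rw [hs, h] <;> constructor <;> intro <;> linarith

theorem HasStrand.ne_of_ne (hb : HasStrand n i b) (hb' : HasStrand n i b') (hne : b' ≠ b) :
    i ≠ n := by
  grind [HasStrand]

namespace IsPathB

theorem pt_eq_iotaB_sub_iff (hp : IsPathB n ε i k p) (hjn : j < n) :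
    t < p.length ∧ pt p t = (((iotaB n (j, l - 2)).1 : ℝ), (l : ℝ) - sgn up * 2) ↔
      ∃ b, HasStrand n i b ∧ t = node n b j ∧ (strand n p b j).2 = l - sgn up * 2 := by
  have h := hp.pt_eq_iotaB_iff (t := t) (m := l - 2 * sgn up) hjn
  rw [fst_iotaB_sub_two_mul_sgn] at h
  push_cast at h
  simpa only [mul_comm] using h

theorem le_abs_end_sub (hp : IsPathB n ε i k p) (hn : 1 ≤ n) (hε : ε ≤ 1)
    (hb : HasStrand n i b) (hb' : HasStrand n i b') (hne : b' ≠ b)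
    (h : (strand n p b (n - 1)).2 = l - sgn up * 2) : 1 + ε ≤ |(strand n p b' n).2 - l| := by
  obtain ⟨c, hc⟩ := hp.exists_snd_eq_add hb hb' hne (Nat.sub_one_lt_of_le hn le_rfl)
  have hstep := (hp.isSpinPath b' hb').step (n - 1) (by omega)
  rw [Nat.sub_add_cancel hn, if_pos rfl, hc, h] at hstep
  rcases sgn_real_eq_one_or up with hs | hs
  · refine le_abs_of_abs_sub_four_mul c hε (hstep ▸ congrArg abs ?_)
    rw [hs]; ring
  · refine le_abs_of_abs_sub_four_mul (c + 1) hε (hstep ▸ congrArg abs ?_)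
    rw [hs]; push_cast; ring

theorem abs_end_sub_eq_or_lt (hp : IsPathB n ε i k p) (hn : 1 ≤ n) (hε : 0 < ε) (hε' : ε < 1)
    (hb : HasStrand n i b) (hb' : HasStrand n i b') (hne : b' ≠ b)
    (h : (strand n p b (n - 1)).2 = l) :
    |(strand n p b' n).2 - l| = 1 - ε ∨ 1 + ε < |(strand n p b' n).2 - l| := by
  obtain ⟨c, hc⟩ := hp.exists_snd_eq_add hb hb' hne (Nat.sub_one_lt_of_le hn le_rfl)
  have hstep := (hp.isSpinPath b' hb').step (n - 1) (by omega)
  rw [Nat.sub_add_cancel hn, if_pos rfl, hc, h, ← sub_sub] at hstep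
  exact abs_eq_or_lt_abs_of_abs_sub_two_add_four_mul c hε hε' hstep

theorem replace1_middle_iff (hp : IsPathB n ε i k p) {y a : ℝ} :
    Replace1 p p' (2 * (n : ℝ) - 1, y - a) (2 * (n : ℝ) - 1, y + a) ↔
      ∃ b, HasStrand n i b ∧ (strand n p b n).2 = y - a ∧ p' = reflectAt {node n b n} y p := by
  simp only [replace1_iff_exists_reflectAt, ← and_assoc, hp.pt_eq_middle_iff]
  grind

theorem replace1_iotaB_iff (hp : IsPathB n ε i k p) (hjn : j < n) :
    Replace1 p p' (((iotaB n (j, l - 2)).1 : ℝ), (l : ℝ) - sgn up * 2)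
      (((iotaB n (j, l - 2)).1 : ℝ), (l : ℝ) + sgn up * 2) ↔
      ∃ b, HasStrand n i b ∧ (strand n p b j).2 = l - sgn up * 2 ∧
        p' = reflectAt {node n b j} l p := by
  simp only [replace1_iff_exists_reflectAt, ← and_assoc, hp.pt_eq_iotaB_sub_iff hjn]
  grind

theorem replace2_iff (hp : IsPathB n ε i k p) (hn : 1 ≤ n) (hε : 0 < ε) (hε' : ε < 1) :
    Replace2 p p'
      (((iotaB n (n - 1, l - 2)).1 : ℝ), (l : ℝ) - sgn up * 2)
      (((iotaB n (n - 1, l - 2)).1 : ℝ), (l : ℝ) + sgn up * 2)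
      (2 * (n : ℝ) - 1, (l : ℝ) - sgn up * (1 - ε))
      (2 * (n : ℝ) - 1, (l : ℝ) + sgn up * (1 - ε)) ↔
      ∃ b, HasStrand n i b ∧ (strand n p b (n - 1)).2 = l - sgn up * 2 ∧
        (strand n p b n).2 = l - sgn up * (1 - ε) ∧
        p' = reflectAt {node n b (n - 1), node n b n} l p := by
  have hjn : n - 1 < n := Nat.sub_one_lt_of_le hn le_rfl
  rw [replace2_iff_exists_reflectAt]
  constructor
  · rintro ⟨r, s, hr, hs, -, hpr, hps, rfl⟩
    obtain ⟨b, hb, rfl, hyr⟩ := (hp.pt_eq_iotaB_sub_iff hjn).1 ⟨hr, hpr⟩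
    obtain ⟨b', hb', rfl, hys⟩ := hp.pt_eq_middle_iff.1 ⟨hs, hps⟩
    obtain rfl : b' = b := by
      by_contra hne
      have hle := hp.le_abs_end_sub hn hε'.le hb hb' hne hyr
      rw [hys, sub_sub_cancel_left, abs_neg, abs_sgn_mul, abs_of_pos (by linarith)] at hle
      linarith
    exact ⟨b', hb, hyr, hys, rfl⟩
  · rintro ⟨b, hb, hyr, hys, rfl⟩
    obtain ⟨hr, hpr⟩ := (hp.pt_eq_iotaB_sub_iff hjn).2 ⟨b, hb, rfl, hyr⟩
    obtain ⟨hs, hps⟩ := hp.pt_eq_middle_iff.2 ⟨b, hb, rfl, hys⟩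
    exact ⟨_, _, hr, hs, fun h ↦ hjn.ne ((node_eq_node_iff hjn.le le_rfl).1 h).2, hpr, hps, rfl⟩

theorem moves_iff (hp : IsPathB n ε i k p) (hn : 1 ≤ n) (hε : 0 < ε) (hε' : ε < 1)
    (hjn : j ≤ n) : Moves (.B n ε) up j l p p' ↔
      ∃ b, HasStrand n i b ∧ HasBlock n ε up j l p b ∧ p' = reflectStrand n j b l p := by
  simp only [Moves, HasBlock, reflectStrand, block]
  rcases hjn.eq_or_lt with rfl | hjn
  · simp only [if_true, hp.replace1_middle_iff, Nat.succ_ne_self, if_false, Finset.image_singleton]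
  rw [if_neg hjn.ne]
  rcases (Nat.le_sub_one_of_lt hjn).eq_or_lt with rfl | hjn'
  · simp only [if_true, hp.replace2_iff hn hε hε', hjn.ne, if_false, Nat.sub_add_cancel hn,
      Finset.image_insert, Finset.image_singleton, true_imp_iff, and_assoc]
  · have hj : j + 1 ≠ n := by omega
    simp only [hp.replace1_iotaB_iff hjn, hjn.ne, hjn'.ne, hj, if_false, Finset.image_singleton,
      false_imp_iff, and_true]

end IsPathB

end TypeBMoves

section TypeBCorners

variable {n i j : ℕ} {k l m : ℤ} {ε : ℝ} {b up : Bool} {p : List (ℝ × ℝ)}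

theorem mem_Cp_B_iff_exists_pt (hj : 1 ≤ j) (hjn : j < n) (hm : m % 2 = 0) :
    (j, m) ∈ Cp (.B n ε) p up ↔ ∃ t, 1 ≤ t ∧ t + 1 < p.length ∧
      pt p t = (((iotaB n (j, m)).1 : ℝ), (m : ℝ)) ∧
      0 < sgn up * ((pt p (t - 1)).2 - m) ∧ 0 < sgn up * ((pt p (t + 1)).2 - m) := by
  have hX : (j, m) ∈ XB n := .inr ⟨hj, hjn, hm⟩
  have hsnd : (iotaB n (j, m)).2 = m := by simp only [iotaB]; split_ifs <;> rfl
  have hfst : (iotaB n (j, m)).1 ≠ 0 ∧ (iotaB n (j, m)).1 ≠ 2 * n - 1 ∧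
      (iotaB n (j, m)).1 ≠ 4 * n - 2 := by
    simp only [iotaB]; split_ifs <;> simp only <;> omega
  simp only [Cp, Set.mem_ofPred_eq, hX, hjn.ne, hsnd, hfst, true_and, false_and, or_false, ne_eq,
    not_false_eq_true]
  refine exists_congr fun t ↦ and_congr_right fun _ ↦ and_congr_right fun _ ↦
    and_congr_right fun ht ↦ ?_
  rw [ht]
  cases up <;> simp [sgn]

theorem mem_Cp_B_self_iff (hm : m % 2 = 1) : (n, m) ∈ Cp (.B n ε) p up ↔
    (2 * (n : ℝ) - 1, m - sgn up * ε) ∈ p ∧ (2 * (n : ℝ) - 1, m + sgn up * ε) ∉ p := by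
  have hX : (n, m) ∈ XB n := .inl ⟨rfl, hm⟩
  cases up <;> simp [Cp, hX, iotaB, sgn, ← sub_eq_add_neg]

theorem node_neighbors (hj : 1 ≤ j) (hjn : j < n) :
    node n b j - 1 = node n b (j - 1) ∧ node n b j + 1 = node n b (j + 1) ∨
      node n b j - 1 = node n b (j + 1) ∧ node n b j + 1 = node n b (j - 1) := by
  cases b <;> simp only [node] <;> grind

namespace IsPathB

theorem mem_middle_iff (hp : IsPathB n ε i k p) {y : ℝ} :
    (2 * (n : ℝ) - 1, y) ∈ p ↔ ∃ b, HasStrand n i b ∧ (strand n p b n).2 = y := by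
  rw [mem_iff_exists_pt_eq]
  simp only [hp.pt_eq_middle_iff]
  grind

theorem mem_Cp_iff (hp : IsPathB n ε i k p) (hε : 0 < 1 + ε) (hj : 1 ≤ j) (hjn : j < n)
    (hm : m % 2 = 0) : (j, m) ∈ Cp (.B n ε) p up ↔
      ∃ b, HasStrand n i b ∧ (strand n p b j).2 = m ∧
        (strand n p b (j - 1)).2 = m + sgn up * 2 ∧
        (strand n p b (j + 1)).2 = m + sgn up * if j + 1 = n then 1 + ε else 2 := by
  have hcorner {b : Bool} (hb : HasStrand n i b) (hbm : (strand n p b j).2 = m) :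
      0 < sgn up * ((pt p (node n b j - 1)).2 - m) ∧ 0 < sgn up * ((pt p (node n b j + 1)).2 - m) ↔
        (strand n p b (j - 1)).2 = m + sgn up * 2 ∧
        (strand n p b (j + 1)).2 = m + sgn up * if j + 1 = n then 1 + ε else 2 := by
    have hprev := (hp.isSpinPath b hb).step (j - 1) (by omega)
    have hnext := (hp.isSpinPath b hb).step j hjn
    rw [Nat.sub_add_cancel hj, if_neg hjn.ne, hbm, abs_sub_comm] at hprev
    rw [hbm] at hnext
    rw [← sgn_mul_sub_pos_iff two_pos hprev,
      ← sgn_mul_sub_pos_iff (by split_ifs <;> linarith) hnext]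
    rcases node_neighbors (b := b) hj hjn with ⟨h, h'⟩ | ⟨h, h'⟩
    · rw [h, h', strand, strand]
    · rw [h, h', strand, strand, and_comm]
  rw [mem_Cp_B_iff_exists_pt hj hjn hm]
  constructor
  · rintro ⟨t, -, ht, hpt, hnbr⟩
    obtain ⟨b, hb, rfl, hbm⟩ := (hp.pt_eq_iotaB_iff hjn).1 ⟨by omega, hpt⟩
    exact ⟨b, hb, hbm, (hcorner hb hbm).1 hnbr⟩
  · rintro ⟨b, hb, hbm, hnbr⟩
    have hlt := hp.node_lt_length hb (show j - 1 ≤ n by omega)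
    have hlt' := hp.node_lt_length hb (show j + 1 ≤ n by omega)
    have hpos : 1 ≤ node n b j := by cases b <;> simp only [node] <;> grind
    refine ⟨node n b j, hpos, ?_, ((hp.pt_eq_iotaB_iff hjn).2 ⟨b, hb, rfl, hbm⟩).2,
      (hcorner hb hbm).2 hnbr⟩
    rcases node_neighbors (b := b) hj hjn with ⟨-, h⟩ | ⟨-, h⟩
    · rwa [h]
    · rwa [h]

theorem notMem_Cp_of_snd_eq (hp : IsPathB n ε i k p) (hε : 0 < 1 + ε) (hj : 1 ≤ j) (hjn : j < n)
    (hl : l % 2 = 0) (hb : HasStrand n i b) (h : (strand n p b j).2 = l - sgn up * 2) :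
    (j, l + sgn up * 2) ∉ Cp (.B n ε) p up := by
  rw [hp.mem_Cp_iff hε hj hjn (by omega)]
  rintro ⟨b', hb', h', -⟩
  push_cast at h'
  by_cases hne : b' = b
  · subst hne
    rcases sgn_real_eq_one_or up with hs | hs <;> rw [hs] at h h' <;> linarith
  · obtain ⟨c, hc⟩ := hp.exists_snd_eq_add hb hb' hne hjn
    have hint : l + sgn up * 2 = l - sgn up * 2 + (2 + 4 * c) := by
      rw [h, h'] at hc
      rify
      exact hc
    omega

theorem canMove_iff_of_lt (hp : IsPathB n ε i k p) (hε : 0 < ε) (hε' : ε < 1) (hj : 1 ≤ j)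
    (hjn : j < n) (hl : l % 2 = 0) : CanMove (.B n ε) up p j l ↔
      ∃ b, HasStrand n i b ∧ HasBlock n ε up j l p b ∧
        IsPathB n ε i k (reflectStrand n j b l p) := by
  have hrr : (rr (.B n ε) j : ℤ) = 2 := by simp [rr, hjn.ne]
  rw [CanMove, hrr, hp.mem_Cp_iff (by linarith) hj hjn (by omega)]
  push_cast
  constructor
  · rintro ⟨⟨b, hb, hbj, hprev, hnext⟩, -⟩
    have hblock : HasBlock n ε up j l p b := by
      rw [HasBlock, if_neg hjn.ne]
      refine ⟨hbj, ?_⟩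
      rintro rfl
      rw [hnext, if_pos rfl]
      ring
    refine ⟨b, hb, hblock, (isPathB_reflectStrand_iff hp hb hj hjn.le (hblock.snd_ne hε)).2
      ⟨by rw [hprev]; ring, fun hlt ↦ by rw [hnext, if_neg hlt.ne]; ring, fun hi hle ↦ ?_⟩⟩
    obtain rfl : n = j + 1 := by omega
    calc |(strand (j + 1) p b (j + 1)).2 - l|
        = 1 - ε := by
          rw [hnext, if_pos rfl, show (l : ℝ) - sgn up * 2 + sgn up * (1 + ε) - l =
            sgn up * -(1 - ε) by ring, abs_sgn_mul, abs_neg, abs_of_pos (by linarith)]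
      _ < 1 + ε := by linarith
      _ ≤ |(strand (j + 1) p (!b) (j + 1)).2 - l| :=
          hp.le_abs_end_sub (by omega) hε'.le hb (.inr hi) (Bool.not_ne_self b) hbj
  · rintro ⟨b, hb, hblock, hrefl⟩
    obtain ⟨hprev, hnext, -⟩ :=
      (isPathB_reflectStrand_iff hp hb hj hjn.le (hblock.snd_ne hε)).1 hrefl
    rw [HasBlock, if_neg hjn.ne] at hblock
    refine ⟨⟨b, hb, hblock.1, by rw [hprev]; ring, ?_⟩,
      hp.notMem_Cp_of_snd_eq (by linarith) hj hjn hl hb hblock.1⟩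
    split_ifs with hend
    · rw [hend, hblock.2 hend]; ring
    · rw [hnext (by omega)]; ring

theorem canMove_self_iff_abs_end_ne (hp : IsPathB n ε i k p) (hε : 0 < ε) (hε' : ε < 1)
    (hl : l % 2 = 0) : CanMove (.B n ε) up p n l ↔
      (∃ b, HasStrand n i b ∧ (strand n p b n).2 = l - sgn up * (1 + ε)) ∧
        ∀ b, HasStrand n i b → |(strand n p b n).2 - l| ≠ 1 - ε := by
  have hrr : (rr (.B n ε) n : ℤ) = 1 := by simp [rr]
  have hsgn := sgn_eq_one_or up
  have hsgn' := sgn_real_eq_one_or up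
  have habs (y : ℝ) : |y - l| = 1 - ε ↔ y = l - sgn up * (1 - ε) ∨ y = l + sgn up * (1 - ε) := by
    rw [abs_eq (by linarith)]
    grind
  rw [CanMove, hrr, mem_Cp_B_self_iff (by omega), mem_Cp_B_self_iff (by omega)]
  simp only [hp.mem_middle_iff, ne_eq, habs, mul_one, Int.cast_sub, Int.cast_add]
  rw [and_assoc, show (l : ℝ) - sgn up - sgn up * ε = l - sgn up * (1 + ε) by ring,
    show (l : ℝ) - sgn up + sgn up * ε = l - sgn up * (1 - ε) by ring,
    show (l : ℝ) + sgn up - sgn up * ε = l + sgn up * (1 - ε) by ring,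
    show (l : ℝ) + sgn up + sgn up * ε = l + sgn up * (1 + ε) by ring]
  refine and_congr_right fun ⟨b, hb, hbl⟩ ↦ ⟨fun ⟨hnot, himp⟩ b' hb' h ↦ ?_, fun h ↦ ⟨?_, ?_⟩⟩
  · rcases h with h | h
    · exact hnot ⟨b', hb', h⟩
    · refine himp ⟨⟨b', hb', h⟩, fun ⟨b'', _, h''⟩ ↦ ?_⟩
      have hne : b ≠ b' := by rintro rfl; grind
      have hne' : b ≠ b'' := by rintro rfl; grind
      have hne'' : b' ≠ b'' := by rintro rfl; grind
      cases b <;> cases b' <;> cases b'' <;> simp_all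
  · exact fun ⟨b', hb', h'⟩ ↦ h b' hb' (.inl h')
  · exact fun ⟨⟨b', hb', h'⟩, _⟩ ↦ h b' hb' (.inr h')

theorem snd_pred_eq (hp : IsPathB n ε i k p) (hn : 1 ≤ n) (hε : 0 < ε) (hε' : ε < 1 / 2)
    (hb : HasStrand n i b) (h : (strand n p b n).2 = l - sgn up * (1 + ε)) :
    (strand n p b (n - 1)).2 = l := by
  obtain ⟨m, hm, -⟩ := (hp.isSpinPath b hb).exists_snd_eq_intCast (Nat.sub_one_lt_of_le hn le_rfl)
  have hstep := (hp.isSpinPath b hb).step (n - 1) (by omega)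
  rw [Nat.sub_add_cancel hn, if_pos rfl, hm, h, abs_eq (by linarith)] at hstep
  have hlm : (l : ℝ) = m ∨ (l : ℝ) = m + 2 * (1 + ε) ∨ (l : ℝ) = m - 2 * (1 + ε) := by
    rcases sgn_real_eq_one_or up with hs | hs <;> rw [hs] at hstep <;> grind
  rcases hlm with hlm | hlm | hlm
  · rw [hm, hlm]
  · have hlo : m + 2 < l := by rify; linarith
    have hhi : l < m + 3 := by rify; linarith
    omega
  · have hlo : m - 3 < l := by rify; linarith
    have hhi : l < m - 2 := by rify; linarith
    omega

theorem canMove_self_iff (hp : IsPathB n ε i k p) (hn : 1 ≤ n) (hε : 0 < ε) (hε' : ε < 1 / 2)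
    (hl : l % 2 = 0) : CanMove (.B n ε) up p n l ↔
      ∃ b, HasStrand n i b ∧ HasBlock n ε up n l p b ∧
        IsPathB n ε i k (reflectStrand n n b l p) := by
  have habs {y : ℝ} (h : y = l - sgn up * (1 + ε)) : |y - l| = 1 + ε := by
    rw [h, sub_sub_cancel_left, abs_neg, abs_sgn_mul, abs_of_pos (by linarith)]
  rw [hp.canMove_self_iff_abs_end_ne hε (by linarith) hl]
  constructor
  · rintro ⟨⟨b, hb, hbl⟩, hends⟩
    have hblock : HasBlock n ε up n l p b := by rwa [HasBlock, if_pos rfl]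
    have hpred := hp.snd_pred_eq hn hε hε' hb hbl
    refine ⟨b, hb, hblock, (isPathB_reflectStrand_iff hp hb hn le_rfl (hblock.snd_ne hε)).2
      ⟨hpred, fun h ↦ by omega, fun hi _ ↦ ?_⟩⟩
    rw [habs hbl]
    exact (hp.abs_end_sub_eq_or_lt hn hε (by linarith) hb (.inr hi) (Bool.not_ne_self b)
      hpred).resolve_left (hends _ (.inr hi))
  · rintro ⟨b, hb, hblock, hrefl⟩
    obtain ⟨-, -, hlt⟩ := (isPathB_reflectStrand_iff hp hb hn le_rfl (hblock.snd_ne hε)).1 hrefl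
    rw [HasBlock, if_pos rfl] at hblock
    refine ⟨⟨b, hb, hblock⟩, fun b' hb' h ↦ ?_⟩
    by_cases hne : b' = b
    · rw [hne, habs hblock] at h
      linarith
    · have hlt := hlt (hb.ne_of_ne hb' hne) n.le_succ
      rw [habs hblock, ← Bool.eq_not_of_ne hne, h] at hlt
      linarith

theorem canMove_iff_exists_moves (hp : IsPathB n ε i k p) (hε : 0 < ε) (hε' : ε < 1 / 2)
    (hj : 1 ≤ j) (hjn : j ≤ n) (hl : l % 2 = 0) :
    CanMove (.B n ε) up p j l ↔ ∃ p', IsPathB n ε i k p' ∧ Moves (.B n ε) up j l p p' := by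
  have hn : 1 ≤ n := hj.trans hjn
  have hcorner : CanMove (.B n ε) up p j l ↔ ∃ b, HasStrand n i b ∧ HasBlock n ε up j l p b ∧
      IsPathB n ε i k (reflectStrand n j b l p) := by
    rcases hjn.eq_or_lt with rfl | hjn
    · exact hp.canMove_self_iff hn hε hε' hl
    · exact hp.canMove_iff_of_lt hε (by linarith) hj hjn hl
  simp only [hcorner, hp.moves_iff hn hε (by linarith) hjn]
  constructor
  · rintro ⟨b, hb, hblock, hrefl⟩
    exact ⟨_, hrefl, b, hb, hblock, rfl⟩
  · rintro ⟨_, hrefl, b, hb, hblock, rfl⟩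
    exact ⟨b, hb, hblock, hrefl⟩

end IsPathB

end TypeBCorners

section RaisingAndLowering

variable {S : Setting} {i j : ℕ} {k l : ℤ} {up : Bool} {p : List (ℝ × ℝ)}

theorem injOn_pt_of_mem_P (hS : S.valid) (hik : (i, k) ∈ X S) (hp : p ∈ P S i k) :
    Set.InjOn (pt p) (Set.Iio p.length) := by
  cases S with
  | A n => exact pt_injOn_of_mem_pathsA hp
  | B n ε =>
    obtain ⟨hn, hε, -⟩ := hS
    exact ((mem_pathsB_iff (by omega) (by linarith)).1 hp).injOn_pt hik

theorem canMove_iff_exists_moves (hS : S.valid) (hp : p ∈ P S i k) (hjl : (j, l) ∈ W S) :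
    CanMove S up p j l ↔ ∃ p' ∈ P S i k, Moves S up j l p p' := by
  cases S with
  | A n => exact canMove_A_iff_exists_moves hp hjl.1 hjl.2.1
  | B n ε =>
    obtain ⟨hn, hε, hε'⟩ := hS
    have hj : 1 ≤ j ∧ j ≤ n ∧ l % 2 = 0 := by
      simp only [W, X, XB, rr, Set.mem_ofPred_eq] at hjl
      split_ifs at hjl <;> omega
    have hmem (p : List (ℝ × ℝ)) : p ∈ P (.B n ε) i k ↔ IsPathB n ε i k p :=
      mem_pathsB_iff (by omega) (by linarith)
    simp only [hmem] at hp ⊢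
    exact hp.canMove_iff_exists_moves hε hε' hj.1 hj.2.1 hj.2.2

theorem loweredTo_iff_moves_false (hS : S.valid) (hp : p ∈ P S i k) (hjl : (j, l) ∈ W S)
    {p' : List (ℝ × ℝ)} : LoweredTo S i k j l p' p ↔ p' ∈ P S i k ∧ Moves S false j l p p' := by
  rw [loweredTo_iff_moves, ← canMove_true_iff]
  constructor
  · rintro ⟨hp', -, -, h⟩
    exact ⟨hp', h.symm⟩
  · rintro ⟨hp', h⟩
    exact ⟨hp', hp, (canMove_iff_exists_moves hS hp' hjl).2 ⟨p, hp, h.symm⟩, h.symm⟩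

end RaisingAndLowering

/-- a path `p ∈ 𝒫_{i,k}` can be raised at `(j,ℓ) ∈ W`, i.e. `p = p'𝒜_{j,ℓ}⁻¹`
for some `p' ∈ 𝒫_{i,k}`, iff `(j, ℓ+r_j) ∈ C_{p,-}` and `(j, ℓ-r_j) ∉ C_{p,-}`; moreover
such a `p'`, when it exists, is unique. -/
theorem stmt17 (S : Setting) (hS : S.valid) (i : ℕ) (k : ℤ) (hik : (i, k) ∈ X S)
    (p : List (ℝ × ℝ)) (hp : p ∈ P S i k) (j : ℕ) (l : ℤ) (hjl : (j, l) ∈ W S) :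
    ((∃ p', LoweredTo S i k j l p' p) ↔
      ((j, l + (rr S j : ℤ)) ∈ Cp S p false ∧ (j, l - (rr S j : ℤ)) ∉ Cp S p false)) ∧
    (∀ p₁ p₂, LoweredTo S i k j l p₁ p → LoweredTo S i k j l p₂ p → p₁ = p₂) := by
  simp only [loweredTo_iff_moves_false hS hp hjl]
  refine ⟨?_, fun p₁ p₂ h₁ h₂ ↦ h₁.2.right_unique (injOn_pt_of_mem_P hS hik hp) h₂.2⟩
  rw [← canMove_false_iff, canMove_iff_exists_moves hS hp hjl]

end Paper
end
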